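/- arXiv:1410.8632 — 3 statements merged into one kernel-verified Lean document; each statement's English description precedes it below -/
import Mathlib

section
/- Let P = conv(S) ⊆ ℝ^d be the convex hull of a finite set S ⊆ ℚ^d of rational points, and let q be a positive integer such that q·s ∈ ℤ^d for every s ∈ S. Let h : ℝ^d → ℝ be a polynomial function of total degree at most m. Then there exist functions E_0, …, E_{d+m} : ℝ → ℝ such that: (a) each E_r is a finite real linear combination of products of at most d + m − r functions of the form t ↦ {η·t} with η ∈ ℚ (an empty product meaning the constant 1); (b) each E_r is periodic with period q; and (c) for every real t ≥ 0, Σ_{x ∈ ℤ^d ∩ tP} h(x) = Σ_{r=0}^{d+m} E_r(t)·t^r, where tP = {t·p : p ∈ P} and the left-hand sum is finite since tP is compact. -/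
open Pointwise

/-- `f : ℝ → ℝ` is a finite real linear combination of products of at most `k` functions of
the form `t ↦ {η·t}` with `η ∈ ℚ` (an empty product meaning the constant `1`). -/
def IsStepPoly1 (k : ℕ) (f : ℝ → ℝ) : Prop :=
  ∃ (n : ℕ) (coef : Fin n → ℝ) (L : Fin n → List ℚ),
    (∀ i, (L i).length ≤ k) ∧
    ∀ t : ℝ, f t = ∑ i, coef i *
      ((L i).map (fun η => Int.fract ((η : ℝ) * t))).prod

/-- Precomposition with a map, as a homomorphism of algebras of real functions. -/
def precomp {σ τ : Type*} (φ : σ → τ) : (τ → ℝ) →ₐ[ℝ] (σ → ℝ) where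
  toFun f := f ∘ φ
  map_one' := rfl
  map_mul' _ _ := rfl
  map_zero' := rfl
  map_add' _ _ := rfl
  commutes' _ := rfl

/-- If generators of `V` agree along `φ` with elements of `W` along `ψ`, then so do elements
of `V ^ k` with elements of `W ^ k`. -/
lemma exists_mem_pow_of_generators {σ τ υ : Type*} (φ : σ → τ) (ψ : σ → υ)
    {G : Set (τ → ℝ)} {W : Submodule ℝ (υ → ℝ)}
    (hG : ∀ g ∈ G, ∃ w ∈ W, ∀ a, g (φ a) = w (ψ a)) {k : ℕ} {f : τ → ℝ}
    (hf : f ∈ Submodule.span ℝ G ^ k) : ∃ w ∈ W ^ k, ∀ a, f (φ a) = w (ψ a) := by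
  have hle : (Submodule.span ℝ G).map (precomp φ).toLinearMap ≤
      W.map (precomp ψ).toLinearMap := by
    rw [Submodule.map_span, Submodule.span_le]
    rintro _ ⟨g, hg, rfl⟩
    obtain ⟨w, hw, h⟩ := hG g hg
    exact ⟨w, hw, funext fun a => (h a).symm⟩
  have hpow := pow_le_pow_left' hle k
  rw [← Submodule.map_pow, ← Submodule.map_pow] at hpow
  obtain ⟨w, hw, h⟩ := hpow ⟨f, hf, rfl⟩
  exact ⟨w, hw, fun a => (congrFun h a).symm⟩

/-- The functions `1`, `t` and `{c t}` with `c` an integer. -/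
def stepGen : Set (ℝ → ℝ) :=
  insert 1 (insert id (Set.range fun c : ℤ => fun t : ℝ => Int.fract ((c : ℝ) * t)))

/-- The span of the functions `t ^ r * {c₁ t} ⋯ {cₗ t}` with `r + l ≤ k`. -/
noncomputable def stepPow (k : ℕ) : Submodule ℝ (ℝ → ℝ) := Submodule.span ℝ stepGen ^ k

lemma one_le_span_of_one_mem {σ : Type*} {G : Set (σ → ℝ)} (h : (1 : σ → ℝ) ∈ G) :
    (1 : Submodule ℝ (σ → ℝ)) ≤ Submodule.span ℝ G := by
  rw [Submodule.one_le]
  exact Submodule.subset_span h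

lemma stepPow_mono {k l : ℕ} (h : k ≤ l) : stepPow k ≤ stepPow l :=
  pow_le_pow_right' (one_le_span_of_one_mem (Set.mem_insert _ _)) h

lemma mul_mem_stepPow {k l : ℕ} {f g : ℝ → ℝ} (hf : f ∈ stepPow k) (hg : g ∈ stepPow l) :
    f * g ∈ stepPow (k + l) := by
  rw [stepPow, pow_add]
  exact Submodule.mul_mem_mul hf hg

lemma const_mem_stepPow (k : ℕ) (c : ℝ) : (fun _ => c) ∈ stepPow k := by
  refine stepPow_mono (Nat.zero_le k) ?_
  rw [stepPow, pow_zero]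
  exact Submodule.mem_one.2 ⟨c, rfl⟩

lemma mem_stepPow_one_of_mem {f : ℝ → ℝ} (hf : f ∈ stepGen) : f ∈ stepPow 1 := by
  rw [stepPow, pow_one]
  exact Submodule.subset_span hf

lemma id_mem_stepPow : (fun t => t) ∈ stepPow 1 :=
  mem_stepPow_one_of_mem (.inr (.inl rfl))

lemma fract_mem_stepPow (c : ℤ) : (fun t => Int.fract ((c : ℝ) * t)) ∈ stepPow 1 :=
  mem_stepPow_one_of_mem (.inr (.inr ⟨c, rfl⟩))

lemma linear_mem_stepPow (c : ℝ) : (fun t => c * t) ∈ stepPow 1 :=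
  Submodule.smul_mem _ c id_mem_stepPow

lemma floor_mem_stepPow (c : ℤ) : (fun t => (⌊(c : ℝ) * t⌋ : ℝ)) ∈ stepPow 1 := by
  have h := Submodule.sub_mem _ (linear_mem_stepPow c) (fract_mem_stepPow c)
  convert h using 1
  funext t
  simp

lemma pow_mem_stepPow {k : ℕ} {f : ℝ → ℝ} (hf : f ∈ stepPow k) (r : ℕ) :
    f ^ r ∈ stepPow (k * r) := by
  rw [stepPow, pow_mul]
  exact Submodule.pow_mem_pow _ hf r

lemma monomial_mem_stepPow (r : ℕ) : (fun t => t ^ r) ∈ stepPow r := by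
  have h := pow_mem_stepPow id_mem_stepPow r
  rwa [one_mul] at h

/-- The product of the functions `⌊c t⌋` with `c` in a list. -/
noncomputable def floorProd (L : List ℕ) (t : ℝ) : ℝ := (L.map fun c => (⌊(c : ℝ) * t⌋ : ℝ)).prod

lemma floorProd_nil : floorProd [] = 1 := rfl

lemma floorProd_cons (c : ℕ) (L : List ℕ) (t : ℝ) :
    floorProd (c :: L) t = ⌊(c : ℝ) * t⌋ * floorProd L t := by
  simp [floorProd]

lemma floorProd_mem_stepPow (L : List ℕ) : floorProd L ∈ stepPow L.length := by
  induction L with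
  | nil => exact const_mem_stepPow 0 1
  | cons c L ih =>
    have h := mul_mem_stepPow (floor_mem_stepPow c) ih
    rw [add_comm] at h
    have he : floorProd (c :: L) = (fun t => (⌊((c : ℤ) : ℝ) * t⌋ : ℝ)) * floorProd L :=
      funext fun t => by simp [floorProd_cons]
    rwa [he, List.length_cons]

/-- The sum of the values of `f` at the multiples of `1 / g` in `(0, t]`. -/
noncomputable def gridSum (g : ℕ) (f : ℝ → ℝ) (t : ℝ) : ℝ :=
  ∑ n ∈ Finset.Icc 1 ⌊(g : ℝ) * t⌋₊, f (n / g)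

/-- The sum of the values of `f` at the multiples of `1 / g` in `(0, t)`. -/
noncomputable def gridSumLT (g : ℕ) (f : ℝ → ℝ) (t : ℝ) : ℝ :=
  ∑ n ∈ Finset.Ico 1 ⌈(g : ℝ) * t⌉₊, f (n / g)

lemma gridSum_add (g : ℕ) (f₁ f₂ : ℝ → ℝ) :
    gridSum g (f₁ + f₂) = gridSum g f₁ + gridSum g f₂ :=
  funext fun _ => Finset.sum_add_distrib

lemma gridSum_smul (g : ℕ) (c : ℝ) (f : ℝ → ℝ) : gridSum g (c • f) = c • gridSum g f :=
  funext fun _ => (Finset.mul_sum _ _ _).symm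

lemma gridSum_zero (g : ℕ) : gridSum g 0 = 0 := by
  funext t
  simp [gridSum]

lemma gridSum_congr {g : ℕ} {f₁ f₂ : ℝ → ℝ} (h : ∀ n : ℕ, f₁ (n / g) = f₂ (n / g)) :
    gridSum g f₁ = gridSum g f₂ :=
  funext fun _ => Finset.sum_congr rfl fun n _ => h n

lemma gridSum_mul_gridSum {a b : ℕ} (ha : 0 < a) (hb : 0 < b) (u v : ℝ → ℝ) {t : ℝ}
    (ht : 0 ≤ t) :
    gridSum a u t * gridSum b v t =
      gridSum a (u * gridSum b v) t + gridSum b (gridSumLT a u * v) t := by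
  have ha' : (0 : ℝ) < a := by exact_mod_cast ha
  have hb' : (0 : ℝ) < b := by exact_mod_cast hb
  have hpair : gridSum a u t * gridSum b v t =
      ∑ m ∈ Finset.Icc 1 ⌊(a : ℝ) * t⌋₊, ∑ n ∈ Finset.Icc 1 ⌊(b : ℝ) * t⌋₊,
        ((if (n : ℝ) / b ≤ m / a then u (m / a) * v (n / b) else 0) +
          (if (m : ℝ) / a < n / b then u (m / a) * v (n / b) else 0)) := by
    rw [gridSum, gridSum, Finset.sum_mul_sum]
    refine Finset.sum_congr rfl fun m _ => Finset.sum_congr rfl fun n _ => ?_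
    by_cases h : (n : ℝ) / b ≤ m / a
    · simp [h, not_lt.2 h]
    · simp [h, not_le.1 h]
  rw [hpair]
  simp only [Finset.sum_add_distrib]
  congr 1
  · refine Finset.sum_congr rfl fun m hm => ?_
    rw [Finset.mem_Icc, Nat.le_floor_iff (by positivity)] at hm
    rw [← Finset.sum_filter, Pi.mul_apply, gridSum, Finset.mul_sum]
    refine Finset.sum_congr ?_ fun _ _ => rfl
    ext n
    simp only [Finset.mem_filter, Finset.mem_Icc]
    rw [Nat.le_floor_iff (by positivity), Nat.le_floor_iff (by positivity), div_le_iff₀' hb']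
    have hle : (m : ℝ) / a ≤ t := by rw [div_le_iff₀' ha']; exact hm.2
    have := mul_le_mul_of_nonneg_left hle hb'.le
    constructor
    · rintro ⟨⟨h1, _⟩, h3⟩
      exact ⟨h1, h3⟩
    · rintro ⟨h1, h3⟩
      exact ⟨⟨h1, h3.trans this⟩, h3⟩
  · rw [Finset.sum_comm]
    refine Finset.sum_congr rfl fun n hn => ?_
    rw [Finset.mem_Icc, Nat.le_floor_iff (by positivity)] at hn
    rw [← Finset.sum_filter, Pi.mul_apply, gridSumLT, Finset.sum_mul]
    refine Finset.sum_congr ?_ fun _ _ => rfl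
    ext m
    simp only [Finset.mem_filter, Finset.mem_Icc, Finset.mem_Ico]
    rw [Nat.le_floor_iff (by positivity), Nat.lt_ceil, div_lt_iff₀' ha']
    have hle : (n : ℝ) / b ≤ t := by rw [div_le_iff₀' hb']; exact hn.2
    have := mul_le_mul_of_nonneg_left hle ha'.le
    constructor
    · rintro ⟨⟨h1, _⟩, h3⟩
      exact ⟨h1, h3⟩
    · rintro ⟨h1, h3⟩
      exact ⟨⟨h1, h3.le.trans this⟩, h3⟩

/-- Functions agreeing on `[0, ∞)` with an element of `stepPow k`. -/
def stepPowOn (k : ℕ) : Submodule ℝ (ℝ → ℝ) where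
  carrier := {u | ∃ f ∈ stepPow k, ∀ t, 0 ≤ t → u t = f t}
  add_mem' := by
    rintro u v ⟨f, hf, h⟩ ⟨g, hg, h'⟩
    exact ⟨f + g, add_mem hf hg, fun t ht => by simp [h t ht, h' t ht]⟩
  zero_mem' := ⟨0, zero_mem _, fun _ _ => rfl⟩
  smul_mem' := by
    rintro c u ⟨f, hf, h⟩
    exact ⟨c • f, Submodule.smul_mem _ c hf, fun t ht => by simp [h t ht]⟩

lemma stepPowOn_mono {k l : ℕ} (h : k ≤ l) : stepPowOn k ≤ stepPowOn l :=
  fun _ ⟨f, hf, hu⟩ => ⟨f, stepPow_mono h hf, hu⟩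

/-- The span of grid sums, of spacing more than `1 / g`, of functions in `stepPow k`. -/
noncomputable def coarseSums (g k : ℕ) : Submodule ℝ (ℝ → ℝ) :=
  Submodule.span ℝ {u | ∃ c f, 0 < c ∧ c < g ∧ f ∈ stepPow k ∧ u = gridSum c f}

lemma gridSum_mul_coarse {a g k p : ℕ} (ha : 0 < a) {h H : ℝ → ℝ} (hH : H ∈ stepPow p)
    (hlt : ∀ z, 0 < z → gridSumLT a h z = H z) {j : ℝ → ℝ} (hj : j ∈ coarseSums g k) :
    ∃ ρ ∈ coarseSums g (p + k), ∀ t, 0 ≤ t →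
      gridSum a h t * j t = gridSum a (h * j) t + ρ t := by
  induction hj using Submodule.span_induction with
  | mem j hj =>
    obtain ⟨c, f, hc, hcg, hf, rfl⟩ := hj
    refine ⟨gridSum c (H * f), Submodule.subset_span
      ⟨c, _, hc, hcg, mul_mem_stepPow hH hf, rfl⟩, fun t ht => ?_⟩
    rw [gridSum_mul_gridSum ha hc _ _ ht]
    congr 1
    refine Finset.sum_congr rfl fun n hn => ?_
    have hn1 : (0 : ℝ) < n := by exact_mod_cast (Finset.mem_Icc.1 hn).1
    have hc' : (0 : ℝ) < c := by exact_mod_cast hc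
    simp [hlt _ (div_pos hn1 hc')]
  | zero => exact ⟨0, zero_mem _, fun t _ => by simp [gridSum_zero]⟩
  | add j₁ j₂ _ _ h₁ h₂ =>
    obtain ⟨ρ₁, h₁, e₁⟩ := h₁
    obtain ⟨ρ₂, h₂, e₂⟩ := h₂
    refine ⟨ρ₁ + ρ₂, add_mem h₁ h₂, fun t ht => ?_⟩
    rw [mul_add, gridSum_add, Pi.add_apply, Pi.add_apply, Pi.add_apply, mul_add, e₁ t ht, e₂ t ht]
    ring
  | smul c j _ h₁ =>
    obtain ⟨ρ₁, h₁, e₁⟩ := h₁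
    refine ⟨c • ρ₁, Submodule.smul_mem _ c h₁, fun t ht => ?_⟩
    rw [mul_smul_comm, gridSum_smul]
    simp only [Pi.smul_apply, smul_eq_mul]
    linear_combination c * e₁ t ht

lemma gridSum_powDiff (g r : ℕ) (hg : 0 < g) {t : ℝ} (ht : 0 ≤ t) :
    gridSum g (fun z => (g * z) ^ (r + 1) - (g * z - 1) ^ (r + 1)) t =
      (⌊(g : ℝ) * t⌋ : ℝ) ^ (r + 1) := by
  have hg' : (g : ℝ) ≠ 0 := by exact_mod_cast hg.ne'
  have key : ∀ N : ℕ, ∑ n ∈ Finset.Icc 1 N,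
      (((g : ℝ) * (n / g)) ^ (r + 1) - (g * (n / g) - 1) ^ (r + 1)) = (N : ℝ) ^ (r + 1) := by
    intro N
    induction N with
    | zero => simp
    | succ N ih =>
      rw [Finset.sum_Icc_succ_top (by omega), ih, mul_div_cancel₀ _ hg']
      push_cast
      ring
  rw [gridSum, key, ← natCast_floor_eq_intCast_floor (by positivity)]

lemma gridSumLT_powDiff (g r : ℕ) (hg : 0 < g) {t : ℝ} (ht : 0 < t) :
    gridSumLT g (fun z => (g * z) ^ (r + 1) - (g * z - 1) ^ (r + 1)) t =
      (-(⌊((-g : ℤ) : ℝ) * t⌋ : ℝ) - 1) ^ (r + 1) := by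
  have hg' : (g : ℝ) ≠ 0 := by exact_mod_cast hg.ne'
  have hgt : (0 : ℝ) < g * t := by positivity
  have key : ∀ N : ℕ, ∑ n ∈ Finset.Ico 1 (N + 1),
      (((g : ℝ) * (n / g)) ^ (r + 1) - (g * (n / g) - 1) ^ (r + 1)) = (N : ℝ) ^ (r + 1) := by
    intro N
    induction N with
    | zero => simp
    | succ N ih =>
      rw [Finset.sum_Ico_succ_top (by omega), ih, mul_div_cancel₀ _ hg']
      push_cast
      ring
  obtain ⟨N, hN⟩ := Nat.exists_eq_succ_of_ne_zero (Nat.ceil_pos.2 hgt).ne'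
  have hc : (⌈(g : ℝ) * t⌉ : ℝ) = N + 1 := by
    rw [← natCast_ceil_eq_intCast_ceil hgt.le, hN]
    push_cast
    ring
  rw [gridSumLT, hN, key]
  have : ((-g : ℤ) : ℝ) * t = -((g : ℝ) * t) := by push_cast; ring
  rw [this, Int.floor_neg]
  push_cast
  rw [hc]
  ring

lemma ceilPow_mem_stepPow (g r : ℕ) :
    (fun t : ℝ => (-(⌊((-g : ℤ) : ℝ) * t⌋ : ℝ) - 1) ^ r) ∈ stepPow r := by
  have h : (fun t : ℝ => -(⌊((-g : ℤ) : ℝ) * t⌋ : ℝ) - 1) ∈ stepPow 1 :=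
    sub_mem (neg_mem (floor_mem_stepPow (-g))) (const_mem_stepPow 1 1)
  have h' := pow_mem_stepPow h r
  rwa [one_mul] at h'

lemma floorProd_mem_coarseSums {g : ℕ} (c : ℕ) (L : List ℕ)
    (hL : ∀ a ∈ c :: L, 0 < a ∧ a < g) :
    ∃ j ∈ coarseSums g L.length, ∀ t, 0 ≤ t → floorProd (c :: L) t = j t := by
  have hfloor : ∀ c : ℕ, 0 < c → ∀ t : ℝ, 0 ≤ t → gridSum c 1 t = ⌊(c : ℝ) * t⌋ := by
    intro c hc t ht
    have := gridSum_powDiff c 0 hc ht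
    simpa [Pi.one_def] using this
  induction L generalizing c with
  | nil =>
    have hc := hL c (by simp)
    refine ⟨gridSum c 1, Submodule.subset_span ⟨c, 1, hc.1, hc.2, const_mem_stepPow 0 1, rfl⟩,
      fun t ht => ?_⟩
    rw [hfloor c hc.1 t ht, floorProd_cons, floorProd_nil]
    simp
  | cons a L ih =>
    have hc := hL c (by simp)
    obtain ⟨j, hj, hjt⟩ := ih a fun b hb => hL b (by simp [List.mem_cons.1 hb])
    obtain ⟨ρ, hρ, hρt⟩ := gridSum_mul_coarse (h := 1) hc.1 (ceilPow_mem_stepPow c 1)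
      (fun z hz => by simpa [Pi.one_def] using gridSumLT_powDiff c 0 hc.1 hz) hj
    refine ⟨gridSum c (floorProd (a :: L)) + ρ, add_mem (Submodule.subset_span
      ⟨c, _, hc.1, hc.2, floorProd_mem_stepPow _, rfl⟩) ?_, fun t ht => ?_⟩
    · simpa [add_comm] using hρ
    · rw [floorProd_cons, hjt t ht, ← hfloor c hc.1 t ht, hρt t ht, Pi.add_apply, one_mul,
        gridSum_congr fun n => hjt _ (by positivity)]

/-- The span of the functions `t ^ r * ⌊c₁ t⌋ ⋯ ⌊cₗ t⌋` with `r + l ≤ k` and `0 < cᵢ < g`. -/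
noncomputable def reducedSpan (g k : ℕ) : Submodule ℝ (ℝ → ℝ) :=
  Submodule.span ℝ {u | ∃ (r : ℕ) (L : List ℕ), (∀ a ∈ L, 0 < a ∧ a < g) ∧ r + L.length ≤ k ∧
    u = fun t => t ^ r * floorProd L t}

lemma reducedSpan_mono (g : ℕ) {k l : ℕ} (h : k ≤ l) : reducedSpan g k ≤ reducedSpan g l :=
  Submodule.span_mono fun _ ⟨r, L, hL, hr, hu⟩ => ⟨r, L, hL, hr.trans h, hu⟩

lemma id_mul_mem_reducedSpan {g k : ℕ} {f : ℝ → ℝ} (hf : f ∈ reducedSpan g k) :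
    (fun t => t * f t) ∈ reducedSpan g (k + 1) := by
  have hle : reducedSpan g k ≤
      (reducedSpan g (k + 1)).comap (LinearMap.mulLeft ℝ (fun t : ℝ => t)) := by
    refine Submodule.span_le.2 ?_
    rintro _ ⟨r, L, hL, hr, rfl⟩
    refine Submodule.subset_span ⟨r + 1, L, hL, by omega, funext fun t => ?_⟩
    simp [pow_succ]
    ring
  exact hle hf

lemma floor_mul_mem_reducedSpan {g k c : ℕ} (hc : 0 < c) (hcg : c < g) {f : ℝ → ℝ}
    (hf : f ∈ reducedSpan g k) :
    (fun t => (⌊(c : ℝ) * t⌋ : ℝ) * f t) ∈ reducedSpan g (k + 1) := by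
  have hle : reducedSpan g k ≤
      (reducedSpan g (k + 1)).comap (LinearMap.mulLeft ℝ fun t : ℝ => (⌊(c : ℝ) * t⌋ : ℝ)) := by
    refine Submodule.span_le.2 ?_
    rintro _ ⟨r, L, hL, hr, rfl⟩
    refine Submodule.subset_span ⟨r, c :: L, ?_, by simp; omega, funext fun t => ?_⟩
    · intro a ha
      rcases List.mem_cons.1 ha with rfl | ha
      exacts [⟨hc, hcg⟩, hL a ha]
    · simp [floorProd_cons]
      ring
  exact hle hf

lemma exists_reducedSpan_eq_on_grid {g k : ℕ} (hg : 0 < g) {f : ℝ → ℝ} (hf : f ∈ stepPow k) :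
    ∃ u ∈ reducedSpan g k, ∀ n : ℕ, f (n / g) = u (n / g) := by
  have hg' : (g : ℝ) ≠ 0 := by exact_mod_cast hg.ne'
  refine Submodule.pow_induction_on_left' (Submodule.span ℝ stepGen)
    (C := fun k f _ => ∃ u ∈ reducedSpan g k, ∀ n : ℕ, f (n / g) = u (n / g)) ?_ ?_ ?_ hf
  · intro c
    have h1 : (1 : ℝ → ℝ) ∈ reducedSpan g 0 :=
      Submodule.subset_span ⟨0, [], by simp, by simp, funext fun t => by simp [floorProd]⟩
    refine ⟨c • 1, Submodule.smul_mem _ c h1, fun n => by simp⟩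
  · rintro x y i _ _ ⟨u, hu, h⟩ ⟨u', hu', h'⟩
    exact ⟨u + u', add_mem hu hu', fun n => by simp [h, h']⟩
  · rintro m hm i x _ ⟨u, hu, h⟩
    induction hm using Submodule.span_induction with
    | mem m hm =>
      rcases hm with rfl | rfl | ⟨c, rfl⟩
      · exact ⟨u, reducedSpan_mono g (Nat.le_succ i) hu, fun n => by simp [h]⟩
      · exact ⟨_, id_mul_mem_reducedSpan hu, fun n => by simp [h]⟩
      · obtain ⟨e, he⟩ : ∃ e : ℕ, (e : ℤ) = c % g :=
          ⟨(c % g).toNat, Int.toNat_of_nonneg (Int.emod_nonneg _ (by omega))⟩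
        have heg : e < g := by
          have := Int.emod_lt_of_pos c (b := g) (by omega)
          omega
        have hfr : ∀ n : ℕ, Int.fract ((c : ℝ) * (n / g)) =
            e * ((n : ℝ) / g) - ⌊(e : ℝ) * (n / g)⌋ := by
          intro n
          have hcd : c = e + g * (c / g) := by rw [he]; exact (Int.emod_add_mul_ediv c g).symm
          have : (c : ℝ) * (n / g) = e * (n / g) + ((c / g * n : ℤ) : ℝ) := by
            conv_lhs => rw [hcd]
            push_cast
            field_simp
          rw [this, Int.fract_add_intCast, Int.fract]
        rcases Nat.eq_zero_or_pos e with h0 | h0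
        · refine ⟨0, zero_mem _, fun n => ?_⟩
          have := hfr n
          simp [h0] at this
          simp [this]
        · refine ⟨_, sub_mem (Submodule.smul_mem _ (e : ℝ) (id_mul_mem_reducedSpan hu))
            (floor_mul_mem_reducedSpan h0 heg hu), fun n => ?_⟩
          simp only [Pi.mul_apply, hfr, h, Pi.sub_apply, Pi.smul_apply, smul_eq_mul]
          ring
    | zero => exact ⟨0, zero_mem _, fun n => by simp⟩
    | add a b _ _ ha hb =>
      obtain ⟨u₁, hu₁, h₁⟩ := ha
      obtain ⟨u₂, hu₂, h₂⟩ := hb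
      exact ⟨u₁ + u₂, add_mem hu₁ hu₂, fun n => by rw [add_mul, Pi.add_apply, h₁, h₂]; rfl⟩
    | smul c a _ ha =>
      obtain ⟨u₁, hu₁, h₁⟩ := ha
      exact ⟨c • u₁, Submodule.smul_mem _ c hu₁,
        fun n => by rw [smul_mul_assoc, Pi.smul_apply, h₁]; rfl⟩

/-- The difference between `x ^ (r + 1) - (x - 1) ^ (r + 1)` and its leading term, at `x = g z`. -/
noncomputable def powDiffTail (g r : ℕ) (z : ℝ) : ℝ :=
  (g * z) ^ (r + 1) - (g * z - 1) ^ (r + 1) - (r + 1) * (g * z) ^ r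

lemma powDiffTail_zero (g : ℕ) : powDiffTail g 0 = 0 := by
  funext z
  simp [powDiffTail]

lemma powDiffTail_succ (g r : ℕ) :
    powDiffTail g (r + 1) = (fun z : ℝ => (g : ℝ) * z - 1) * powDiffTail g r -
      ((r + 1) * (g : ℝ) ^ r) • fun z : ℝ => z ^ r := by
  funext z
  simp only [powDiffTail, Pi.sub_apply, Pi.mul_apply, Pi.smul_apply, smul_eq_mul]
  push_cast
  ring

lemma powDiffTail_succ_mem (g r : ℕ) : powDiffTail g (r + 1) ∈ stepPow r := by
  induction r with
  | zero =>
    rw [powDiffTail_succ, powDiffTail_zero, mul_zero, zero_sub]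
    exact neg_mem (Submodule.smul_mem _ _ (monomial_mem_stepPow 0))
  | succ r ih =>
    rw [powDiffTail_succ]
    refine sub_mem ?_ (Submodule.smul_mem _ _ (monomial_mem_stepPow _))
    have h := mul_mem_stepPow (sub_mem (linear_mem_stepPow g) (const_mem_stepPow 1 1)) ih
    rwa [add_comm 1 r] at h

/-- Summation along a grid raises the degree by one. -/
theorem gridSum_mem_stepPowOn (k g : ℕ) (hg : 0 < g) {f : ℝ → ℝ} (hf : f ∈ stepPow k) :
    gridSum g f ∈ stepPowOn (k + 1) := by
  induction k using Nat.strong_induction_on generalizing g f with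
  | _ k ihk =>
  induction g using Nat.strong_induction_on generalizing f with
  | _ g ihg =>
  obtain ⟨u, hu, hfu⟩ := exists_reducedSpan_eq_on_grid hg hf
  rw [gridSum_congr hfu]
  clear hf hfu f
  have hcoarse : coarseSums g k ≤ stepPowOn (k + 1) := by
    refine Submodule.span_le.2 ?_
    rintro _ ⟨c, f, hc, hcg, hf, rfl⟩
    exact ihg c hcg hc hf
  induction hu using Submodule.span_induction with
  | zero => rw [gridSum_zero]; exact zero_mem _
  | add a b _ _ ha hb => rw [gridSum_add]; exact add_mem ha hb
  | smul c a _ ha => rw [gridSum_smul]; exact Submodule.smul_mem _ c ha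
  | mem u hu =>
  obtain ⟨r, L, hL, hr, rfl⟩ := hu
  rcases hr.lt_or_eq with hr | hr
  · exact stepPowOn_mono (by omega) (ihk _ hr g hg
      (mul_mem_stepPow (monomial_mem_stepPow r) (floorProd_mem_stepPow L)))
  have htail : gridSum g (powDiffTail g r * floorProd L) ∈ stepPowOn (k + 1) := by
    cases r with
    | zero => rw [powDiffTail_zero, zero_mul, gridSum_zero]; exact zero_mem _
    | succ r =>
      exact stepPowOn_mono (by omega) (ihk (r + L.length) (by omega) g hg
        (mul_mem_stepPow (powDiffTail_succ_mem g r) (floorProd_mem_stepPow L)))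
  set h : ℝ → ℝ := fun z => (g * z) ^ (r + 1) - (g * z - 1) ^ (r + 1) with hh
  have hfloorPow : (fun t : ℝ => (⌊(g : ℝ) * t⌋ : ℝ) ^ (r + 1)) ∈ stepPow (r + 1) := by
    have := pow_mem_stepPow (floor_mem_stepPow g) (r + 1)
    rwa [one_mul] at this
  have hfull : gridSum g (h * floorProd L) ∈ stepPowOn (k + 1) := by
    cases L with
    | nil =>
      rw [floorProd_nil, mul_one]
      exact stepPowOn_mono (by simp at hr; omega)
        ⟨_, hfloorPow, fun t ht => gridSum_powDiff g r hg ht⟩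
    | cons c L =>
      obtain ⟨j, hj, hjt⟩ := floorProd_mem_coarseSums c L hL
      obtain ⟨ρ, hρ, hρt⟩ := gridSum_mul_coarse (h := h) hg (ceilPow_mem_stepPow g (r + 1))
        (fun z hz => gridSumLT_powDiff g r hg hz) hj
      rw [List.length_cons] at hr
      rw [show r + 1 + L.length = k by omega] at hρ
      obtain ⟨ρ', hρ', hρ't⟩ := hcoarse hρ
      refine ⟨_, sub_mem (stepPow_mono (by rw [List.length_cons]; omega)
        (mul_mem_stepPow hfloorPow (floorProd_mem_stepPow (c :: L)))) hρ', fun t ht => ?_⟩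
      rw [Pi.sub_apply, Pi.mul_apply, ← gridSum_powDiff g r hg ht, hjt t ht, ← hρ't t ht]
      rw [hρt t ht, gridSum_congr (f₂ := h * j) fun n => by
        rw [Pi.mul_apply, Pi.mul_apply, hjt _ (by positivity)]]
      ring
  have hc : ((r + 1) * (g : ℝ) ^ r) ≠ 0 := by positivity
  have hsplit : (fun t => t ^ r * floorProd L t) = ((r + 1) * (g : ℝ) ^ r)⁻¹ •
      (h * floorProd L + (-1 : ℝ) • (powDiffTail g r * floorProd L)) := by
    funext t
    simp only [Pi.smul_apply, Pi.add_apply, Pi.mul_apply, smul_eq_mul, hh, powDiffTail]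
    rw [eq_inv_mul_iff_mul_eq₀ hc]
    ring
  rw [hsplit, gridSum_smul, gridSum_add, gridSum_smul]
  exact Submodule.smul_mem _ _ (add_mem hfull (Submodule.smul_mem _ _ htail))

/-- The real value of an integer linear form. -/
def formEval {κ : Type*} [Fintype κ] (a : κ → ℤ) (x : κ → ℝ) : ℝ := ∑ j, (a j : ℝ) * x j

lemma formEval_sub_smul {κ : Type*} [Fintype κ] (a : κ → ℤ) (x u : κ → ℝ) (c : ℝ) :
    formEval a (x - c • u) = formEval a x - c * formEval a u := by
  simp only [formEval, Pi.sub_apply, Pi.smul_apply, smul_eq_mul, Finset.mul_sum,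
    ← Finset.sum_sub_distrib]
  exact Finset.sum_congr rfl fun j _ => by ring

lemma formEval_smul_sub_smul {κ : Type*} [Fintype κ] (p n : κ → ℤ) (b c : ℤ) (x : κ → ℝ) :
    formEval (b • n - c • p) x = b * formEval n x - c * formEval p x := by
  simp only [formEval, Pi.sub_apply, Pi.smul_apply, smul_eq_mul, Finset.mul_sum,
    ← Finset.sum_sub_distrib]
  exact Finset.sum_congr rfl fun j _ => by push_cast; ring

lemma formEval_intCast {κ : Type*} [Fintype κ] (a x : κ → ℤ) :
    formEval a (fun j => (x j : ℝ)) = (a ⬝ᵥ x : ℤ) := by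
  simp [formEval, dotProduct]

lemma exists_nonneg_forall_le_mul_iff {α : Type*} (A : Finset α) (f g : α → ℝ) :
    (∃ c : ℝ, 0 ≤ c ∧ ∀ a ∈ A, f a ≤ c * g a) ↔
      (∀ a ∈ A, g a ≤ 0 → f a ≤ 0) ∧
      ∀ p ∈ A, ∀ n ∈ A, 0 < g p → g n < 0 → g p * f n - g n * f p ≤ 0 := by
  classical
  constructor
  · rintro ⟨c, hc, h⟩
    refine ⟨fun a ha hg => (h a ha).trans (mul_nonpos_of_nonneg_of_nonpos hc hg),
      fun p hp n hn hgp hgn => ?_⟩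
    nlinarith [h p hp, h n hn]
  · rintro ⟨h₁, h₂⟩
    set L : Finset ℝ := insert 0 ((A.filter fun a => 0 < g a).image fun a => f a / g a)
    have hL : L.Nonempty := Finset.insert_nonempty _ _
    refine ⟨L.max' hL, L.le_max' 0 (Finset.mem_insert_self _ _), fun a ha => ?_⟩
    rcases lt_trichotomy (g a) 0 with hg | hg | hg
    · rcases Finset.mem_insert.1 (L.max'_mem hL) with h | h
      · rw [h, zero_mul]
        exact h₁ a ha hg.le
      · obtain ⟨p, hp, hpe⟩ := Finset.mem_image.1 h
        rw [Finset.mem_filter] at hp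
        rw [← hpe, div_mul_eq_mul_div, le_div_iff₀ hp.2]
        linarith [h₂ p hp.1 a ha hp.2 hg]
    · rw [hg, mul_zero]
      exact h₁ a ha hg.le
    · rw [← div_le_iff₀ hg]
      exact L.le_max' _ (Finset.mem_insert_of_mem (Finset.mem_image_of_mem _
        (Finset.mem_filter.2 ⟨ha, hg⟩)))

/-- A finitely generated rational cone is cut out by finitely many integer linear inequalities. -/
lemma exists_forms_forall_mem_cone_iff {ι κ : Type*} [Fintype κ] (T : Finset ι)
    (u : ι → κ → ℤ) : ∃ A : Finset (κ → ℤ), ∀ x : κ → ℝ,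
      (∃ w : ι → ℝ, (∀ i ∈ T, 0 ≤ w i) ∧ ∀ j, ∑ i ∈ T, w i * (u i j : ℝ) = x j) ↔
        ∀ a ∈ A, formEval a x ≤ 0 := by
  classical
  induction T using Finset.induction_on with
  | empty =>
    refine ⟨Finset.univ.image (fun j => Pi.single j 1) ∪
      Finset.univ.image (fun j => Pi.single j (-1)), fun x => ?_⟩
    have hs : ∀ (j : κ) (c : ℤ), formEval (Pi.single j c) x = c * x j := by
      intro j c
      rw [formEval, Finset.sum_eq_single j]
      · simp
      · intro b _ hb
        simp [hb]
      · simp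
    constructor
    · rintro ⟨w, -, hw⟩ a ha
      have hx : x = 0 := funext fun j => by simpa using (hw j).symm
      simp [hx, formEval]
    · intro h
      refine ⟨0, by simp, fun j => ?_⟩
      have h₁ := h (Pi.single j 1) (by simp)
      have h₂ := h (Pi.single j (-1)) (by simp)
      rw [hs] at h₁ h₂
      push_cast at h₁ h₂
      rw [Finset.sum_empty]
      linarith
  | insert i T hi ih =>
    obtain ⟨A, hA⟩ := ih
    refine ⟨A.filter (fun a => a ⬝ᵥ u i ≤ 0) ∪
      ((A ×ˢ A).filter fun z => 0 < z.1 ⬝ᵥ u i ∧ z.2 ⬝ᵥ u i < 0).image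
        (fun z => (z.1 ⬝ᵥ u i) • z.2 - (z.2 ⬝ᵥ u i) • z.1), fun x => ?_⟩
    have hstep : (∃ w : ι → ℝ, (∀ k ∈ insert i T, 0 ≤ w k) ∧
        ∀ j, ∑ k ∈ insert i T, w k * (u k j : ℝ) = x j) ↔
        ∃ c : ℝ, 0 ≤ c ∧ ∀ a ∈ A, formEval a x ≤ c * (a ⬝ᵥ u i : ℤ) := by
      have haux : ∀ c : ℝ, (∀ a ∈ A, formEval a x ≤ c * (a ⬝ᵥ u i : ℤ)) ↔
          ∃ w : ι → ℝ, (∀ i ∈ T, 0 ≤ w i) ∧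
            ∀ j, ∑ k ∈ T, w k * (u k j : ℝ) = (x - c • fun j => (u i j : ℝ)) j := by
        intro c
        rw [hA]
        simp only [formEval_sub_smul, formEval_intCast, sub_nonpos]
      simp only [haux]
      constructor
      · rintro ⟨w, hw, he⟩
        refine ⟨w i, hw i (Finset.mem_insert_self _ _), w,
          fun k hk => hw k (Finset.mem_insert_of_mem hk), fun j => ?_⟩
        have := he j
        rw [Finset.sum_insert hi] at this
        simp only [Pi.sub_apply, Pi.smul_apply, smul_eq_mul]
        linarith
      · rintro ⟨c, hc, w, hw, he⟩
        have hne : ∀ k ∈ T, k ≠ i := fun k hk h => hi (h ▸ hk)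
        refine ⟨Function.update w i c, fun k hk => ?_, fun j => ?_⟩
        · rcases Finset.mem_insert.1 hk with rfl | hk
          · simpa using hc
          · rw [Function.update_of_ne (hne k hk)]
            exact hw k hk
        · rw [Finset.sum_insert hi, Function.update_self, Finset.sum_congr rfl
            fun k hk => by rw [Function.update_of_ne (hne k hk)], he j]
          simp only [Pi.sub_apply, Pi.smul_apply, smul_eq_mul]
          ring
    rw [hstep, exists_nonneg_forall_le_mul_iff]
    simp only [Finset.mem_union, Finset.mem_filter, Finset.mem_image, Finset.mem_product]
    constructor
    · rintro ⟨h₁, h₂⟩ a (⟨ha, hau⟩ | ⟨⟨p, n⟩, ⟨⟨hp, hn⟩, hpu, hnu⟩, rfl⟩)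
      · exact h₁ a ha (by exact_mod_cast hau)
      · rw [formEval_smul_sub_smul]
        exact h₂ p hp n hn (by exact_mod_cast hpu) (by exact_mod_cast hnu)
    · intro h
      refine ⟨fun a ha hau => h a (.inl ⟨ha, by exact_mod_cast hau⟩), fun p hp n hn hpu hnu => ?_⟩
      have := h _ (.inr ⟨(p, n), ⟨⟨hp, hn⟩, by exact_mod_cast hpu, by exact_mod_cast hnu⟩, rfl⟩)
      rwa [formEval_smul_sub_smul] at this

/-- The lattice point `x` lies in the dilate by `t` of the convex hull of the `v i`, `i ∈ T`. -/
def InDilate {ι : Type*} {d : ℕ} (T : Finset ι) (v : ι → Fin d → ℤ) (t : ℝ) (x : Fin d → ℤ) :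
    Prop :=
  ∃ w : ι → ℝ, (∀ i ∈ T, 0 ≤ w i) ∧ ∑ i ∈ T, w i = t ∧ ∀ j, ∑ i ∈ T, w i * (v i j : ℝ) = x j

section InDilate

variable {ι : Type*} {d : ℕ} {T : Finset ι} {v : ι → Fin d → ℤ}

lemma exists_forms_forall_inDilate_iff (T : Finset ι) (v : ι → Fin d → ℤ) :
    ∃ A : Finset ((Fin d → ℤ) × ℤ), ∀ (t : ℝ) (x : Fin d → ℤ),
      InDilate T v t x ↔ ∀ a ∈ A, ((a.1 ⬝ᵥ x : ℤ) : ℝ) ≤ a.2 * t := by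
  classical
  obtain ⟨A, hA⟩ := exists_forms_forall_mem_cone_iff T
    (fun i (j : Option (Fin d)) => j.elim 1 (v i))
  refine ⟨A.image fun a => (fun j => a (some j), -a none), fun t x => ?_⟩
  have h := hA fun j => j.elim t fun j => (x j : ℝ)
  simp only [Option.forall, Option.elim_none, Option.elim_some] at h
  simp only [Finset.forall_mem_image, InDilate]
  rw [show (∃ w : ι → ℝ, (∀ i ∈ T, 0 ≤ w i) ∧ ∑ i ∈ T, w i = t ∧
    ∀ j, ∑ i ∈ T, w i * (v i j : ℝ) = x j) ↔ _ by simpa using h]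
  refine forall₂_congr fun a _ => ?_
  rw [formEval, Fintype.sum_option]
  simp only [Option.elim_none, Option.elim_some, dotProduct]
  push_cast
  constructor <;> intro h <;> linarith

lemma sum_weights_dotProduct {w : ι → ℝ} {x : Fin d → ℤ}
    (hx : ∀ j, ∑ i ∈ T, w i * (v i j : ℝ) = x j) (α : Fin d → ℤ) :
    ∑ i ∈ T, w i * ((α ⬝ᵥ v i : ℤ) : ℝ) = (α ⬝ᵥ x : ℤ) := by
  simp only [dotProduct]
  push_cast
  simp only [← hx, Finset.mul_sum]
  rw [Finset.sum_comm]
  exact Finset.sum_congr rfl fun j _ => Finset.sum_congr rfl fun i _ => by ring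

lemma InDilate.map {e : ℕ} {t : ℝ} {x : Fin d → ℤ} (h : InDilate T v t x)
    (l : (Fin d → ℤ) →ₗ[ℤ] (Fin e → ℤ)) : InDilate T (fun i => l (v i)) t (l x) := by
  obtain ⟨w, hw, ht, hx⟩ := h
  refine ⟨w, hw, ht, fun k => ?_⟩
  have hl : ∀ y, l y k = (fun j => l (Pi.single j 1) k) ⬝ᵥ y := by
    intro y
    conv_lhs => rw [pi_eq_sum_univ' y]
    rw [map_sum, Finset.sum_apply]
    exact Finset.sum_congr rfl fun j _ => by rw [map_smul, Pi.smul_apply, smul_eq_mul, mul_comm]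
  rw [hl x, ← sum_weights_dotProduct hx]
  exact Finset.sum_congr rfl fun i _ => by rw [← hl (v i)]

/-- The points of a dilate where a valid inequality is tight form the dilate of a face. -/
lemma inDilate_filter_iff {α : Fin d → ℤ} {β : ℤ} (h : ∀ i ∈ T, α ⬝ᵥ v i ≤ β) {t : ℝ}
    {x : Fin d → ℤ} :
    InDilate (T.filter fun i => α ⬝ᵥ v i = β) v t x ↔
      InDilate T v t x ∧ ((α ⬝ᵥ x : ℤ) : ℝ) = β * t := by
  classical
  constructor
  · rintro ⟨w, hw, ht, hx⟩
    refine ⟨⟨fun i => if α ⬝ᵥ v i = β then w i else 0, fun i hi => ?_, ?_, fun j => ?_⟩, ?_⟩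
    · dsimp only
      split_ifs with hα
      · exact hw i (Finset.mem_filter.2 ⟨hi, hα⟩)
      · exact le_rfl
    · rw [← Finset.sum_filter, ht]
    · simp only [ite_mul, zero_mul]
      rw [← Finset.sum_filter, hx]
    · rw [← sum_weights_dotProduct hx, ← ht, Finset.mul_sum]
      refine Finset.sum_congr rfl fun i hi => ?_
      rw [(Finset.mem_filter.1 hi).2]
      ring
  · rintro ⟨⟨w, hw, ht, hx⟩, hα⟩
    have hz : ∑ i ∈ T, w i * ((β : ℝ) - (α ⬝ᵥ v i : ℤ)) = 0 := by
      simp only [mul_sub, Finset.sum_sub_distrib]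
      rw [sum_weights_dotProduct hx, hα, ← Finset.sum_mul, ht]
      ring
    have hnn : ∀ i ∈ T, 0 ≤ w i * ((β : ℝ) - (α ⬝ᵥ v i : ℤ)) := fun i hi =>
      mul_nonneg (hw i hi) (sub_nonneg.2 (by exact_mod_cast h i hi))
    rw [Finset.sum_eq_zero_iff_of_nonneg hnn] at hz
    have hw0 : ∀ i ∈ T, α ⬝ᵥ v i ≠ β → w i = 0 := by
      intro i hi hne
      rcases mul_eq_zero.1 (hz i hi) with h | h
      · exact h
      · exact absurd (by exact_mod_cast (sub_eq_zero.1 h).symm) hne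
    refine ⟨w, fun i hi => hw i (Finset.mem_filter.1 hi).1, ?_, fun j => ?_⟩
    · rw [Finset.sum_filter_of_ne fun i hi hne => ?_, ht]
      by_contra hα
      exact hne (hw0 i hi hα)
    · rw [Finset.sum_filter_of_ne fun i hi hne => ?_, hx]
      by_contra hα
      exact hne (by rw [hw0 i hi hα, zero_mul])

lemma InDilate.smul {t : ℝ} {x : Fin d → ℤ} (h : InDilate T v t x) {c : ℝ} (hc : 0 ≤ c)
    {y : Fin d → ℤ} (hy : ∀ j, (y j : ℝ) = c * x j) : InDilate T v (c * t) y := by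
  obtain ⟨w, hw, ht, hx⟩ := h
  refine ⟨fun i => c * w i, fun i hi => mul_nonneg hc (hw i hi), ?_, fun j => ?_⟩
  · rw [← Finset.mul_sum, ht]
  · rw [hy, ← hx, Finset.mul_sum]
    exact Finset.sum_congr rfl fun i _ => by ring

lemma inDilate_zero_iff {t : ℝ} (ht : 0 < t) : InDilate T v t 0 ↔ InDilate T v 1 0 := by
  constructor <;> intro h
  · have := h.smul (inv_nonneg.2 ht.le) (y := 0) (by simp)
    rwa [inv_mul_cancel₀ ht.ne'] at this
  · have := h.smul ht.le (y := 0) (by simp)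
    rwa [mul_one] at this

lemma eq_zero_of_inDilate_zero {x : Fin d → ℤ} (h : InDilate T v 0 x) : x = 0 := by
  obtain ⟨w, hw, ht, hx⟩ := h
  rw [Finset.sum_eq_zero_iff_of_nonneg hw] at ht
  funext j
  have := hx j
  rw [Finset.sum_eq_zero fun i hi => by rw [ht i hi, zero_mul]] at this
  exact_mod_cast this.symm

lemma inDilate_zero_zero : InDilate T v 0 0 := ⟨0, by simp, by simp, by simp⟩

lemma InDilate.nonneg {t : ℝ} {x : Fin d → ℤ} (h : InDilate T v t x) : 0 ≤ t := by
  obtain ⟨w, hw, ht, -⟩ := h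
  exact ht ▸ Finset.sum_nonneg hw

lemma not_inDilate_empty {t : ℝ} (ht : 0 < t) {x : Fin d → ℤ} :
    ¬ InDilate (∅ : Finset ι) v t x := by
  rintro ⟨w, -, h, -⟩
  simp at h
  linarith

/-- The dilates by `s ≤ t` contain finitely many lattice points. -/
lemma exists_finset_forall_inDilate_mem (T : Finset ι) (v : ι → Fin d → ℤ) (t : ℝ) :
    ∃ X : Finset (Fin d → ℤ), ∀ s ≤ t, ∀ x, InDilate T v s x → x ∈ X := by
  classical
  set C : ℤ := ⌈t * ∑ i ∈ T, ∑ j, |(v i j : ℝ)|⌉ with hC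
  refine ⟨Finset.Icc (fun _ => -C) (fun _ => C), fun s hs x hx => ?_⟩
  have hs0 := hx.nonneg
  obtain ⟨w, hw, ht, hx⟩ := hx
  have hbound : ∀ j, |(x j : ℝ)| ≤ C := by
    intro j
    refine le_trans ?_ (Int.le_ceil _)
    rw [← hx]
    refine (Finset.abs_sum_le_sum_abs _ _).trans ?_
    rw [Finset.mul_sum]
    refine Finset.sum_le_sum fun i hi => ?_
    rw [abs_mul, abs_of_nonneg (hw i hi)]
    refine mul_le_mul ?_ ?_ (abs_nonneg _) (hs0.trans hs)
    · refine le_trans ?_ hs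
      rw [← ht]
      exact Finset.single_le_sum hw hi
    · exact Finset.single_le_sum (f := fun j => |(v i j : ℝ)|) (fun _ _ => abs_nonneg _)
        (Finset.mem_univ j)
  rw [Finset.mem_Icc]
  refine ⟨fun j => ?_, fun j => ?_⟩
  · have := (abs_le.1 (hbound j)).1
    exact_mod_cast this
  · have := (abs_le.1 (hbound j)).2
    exact_mod_cast this

end InDilate

/-- Polynomial weights of degree at most one on the lattice. -/
noncomputable def affineWeights (d : ℕ) : Submodule ℝ ((Fin d → ℤ) → ℝ) :=
  Submodule.span ℝ (insert 1 (Set.range fun j x => (x j : ℝ)))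

/-- Weights of degree at most one in the lattice point and a real parameter. -/
noncomputable def paramWeights (d : ℕ) : Submodule ℝ ((Fin d → ℤ) × ℝ → ℝ) :=
  Submodule.span ℝ (insert 1 (insert Prod.snd (Set.range fun j p => (p.1 j : ℝ))))

lemma coord_mem_affineWeights {d : ℕ} (j : Fin d) :
    (fun x : Fin d → ℤ => (x j : ℝ)) ∈ affineWeights d :=
  Submodule.subset_span (.inr ⟨j, rfl⟩)

lemma one_mem_paramWeights (d : ℕ) : 1 ∈ paramWeights d :=
  Submodule.subset_span (Set.mem_insert _ _)

lemma snd_mem_paramWeights (d : ℕ) : Prod.snd ∈ paramWeights d :=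
  Submodule.subset_span (.inr (.inl rfl))

lemma coord_mem_paramWeights {d : ℕ} (j : Fin d) :
    (fun p : (Fin d → ℤ) × ℝ => (p.1 j : ℝ)) ∈ paramWeights d :=
  Submodule.subset_span (.inr (.inr ⟨j, rfl⟩))

lemma affineWeights_pow_mono (d : ℕ) {k l : ℕ} (h : k ≤ l) :
    affineWeights d ^ k ≤ affineWeights d ^ l :=
  pow_le_pow_right' (one_le_span_of_one_mem (Set.mem_insert _ _)) h

lemma paramWeights_pow_le (d m : ℕ) : paramWeights d ^ m ≤ Submodule.span ℝ
    {W | ∃ j i h, h ∈ affineWeights d ^ i ∧ i + j ≤ m ∧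
      W = fun p : (Fin d → ℤ) × ℝ => p.2 ^ j * h p.1} := by
  induction m with
  | zero =>
    rw [pow_zero, Submodule.one_le]
    exact Submodule.subset_span ⟨0, 0, 1, by simp, by simp, funext fun p => by simp⟩
  | succ m ih =>
    rw [pow_succ]
    refine (mul_le_mul' ih le_rfl).trans ?_
    rw [paramWeights, Submodule.span_mul_span]
    refine Submodule.span_mono ?_
    rintro _ ⟨_, ⟨j, i, h, hh, hij, rfl⟩, g, hg, rfl⟩
    rcases hg with rfl | rfl | ⟨c, rfl⟩
    · exact ⟨j, i, h, hh, by omega, funext fun p => by simp⟩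
    · exact ⟨j + 1, i, h, hh, by omega, funext fun p => by simp; ring⟩
    · refine ⟨j, i + 1, h * fun x => (x c : ℝ), ?_, by omega, funext fun p => by simp; ring⟩
      rw [pow_succ]
      exact Submodule.mul_mem_mul hh (coord_mem_affineWeights c)

lemma eval_mem_affineWeights_pow {d m : ℕ} {h : MvPolynomial (Fin d) ℝ}
    (hh : h.totalDegree ≤ m) :
    (fun x : Fin d → ℤ => MvPolynomial.eval (fun i => (x i : ℝ)) h) ∈ affineWeights d ^ m := by
  have hprod : ∀ (e : Fin d → ℕ) (s : Finset (Fin d)),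
      (fun x : Fin d → ℤ => ∏ i ∈ s, (x i : ℝ) ^ e i) ∈ affineWeights d ^ ∑ i ∈ s, e i := by
    classical
    intro e s
    induction s using Finset.induction_on with
    | empty => simp [Submodule.mem_one]; exact ⟨1, rfl⟩
    | insert i s hi ih =>
      simp only [Finset.prod_insert hi, Finset.sum_insert hi]
      rw [pow_add]
      exact Submodule.mul_mem_mul (Submodule.pow_mem_pow _ (coord_mem_affineWeights i) _) ih
  have he : (fun x : Fin d → ℤ => MvPolynomial.eval (fun i => (x i : ℝ)) h) =
      ∑ e ∈ h.support, MvPolynomial.coeff e h • fun x : Fin d → ℤ => ∏ i, (x i : ℝ) ^ e i := by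
    funext x
    rw [MvPolynomial.eval_eq']
    simp
  rw [he]
  refine Submodule.sum_mem _ fun e hes => Submodule.smul_mem _ _ ?_
  refine affineWeights_pow_mono d ?_ (hprod e Finset.univ)
  refine le_trans (le_of_eq ?_) ((MvPolynomial.le_totalDegree hes).trans hh)
  rw [Finsupp.sum_fintype _ _ fun _ => rfl]

/-- For every lattice polytope in dimension `d`, sums of polynomial weights of degree at most `m`
over the positive dilates are given by a step polynomial. -/
def DilateSums (d : ℕ) : Prop :=
  ∀ (ι : Type) (T : Finset ι) (v : ι → Fin d → ℤ) (m : ℕ), ∀ w ∈ affineWeights d ^ m,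
    ∃ f ∈ stepPow (d + m),
      (∀ t, 0 < t → HasSum ({x | InDilate T v t x}.indicator w) (f t)) ∧
      (InDilate T v 1 0 → f 0 = w 0)

lemma DilateSums.param {d : ℕ} (hd : DilateSums d) {ι : Type} (T : Finset ι) (v : ι → Fin d → ℤ)
    {m : ℕ} {W : (Fin d → ℤ) × ℝ → ℝ} (hW : W ∈ paramWeights d ^ m) :
    ∃ f ∈ stepPow (d + m),
      (∀ t, 0 < t → HasSum ({x | InDilate T v t x}.indicator fun x => W (x, t)) (f t)) ∧
      (InDilate T v 1 0 → f 0 = W (0, 0)) := by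
  have hW' := paramWeights_pow_le d m hW
  clear hW
  induction hW' using Submodule.span_induction with
  | mem W hW =>
    obtain ⟨j, i, h, hh, hij, rfl⟩ := hW
    obtain ⟨f, hf, hsum, h0⟩ := hd ι T v i h hh
    refine ⟨(fun t => t ^ j) * f, stepPow_mono (by omega)
      (mul_mem_stepPow (monomial_mem_stepPow j) hf), fun t ht => ?_, fun h1 => ?_⟩
    · have key : ({x | InDilate T v t x}.indicator fun x => t ^ j * h x) =
          fun x => t ^ j * {x | InDilate T v t x}.indicator h x :=
        funext fun x => Set.indicator_const_mul _ _ _ _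
      rw [key]
      exact (hsum t ht).mul_left (t ^ j)
    · simp [h0 h1]
  | zero => exact ⟨0, zero_mem _, fun t _ => by simp, fun _ => rfl⟩
  | add W₁ W₂ _ _ h₁ h₂ =>
    obtain ⟨f₁, hf₁, hs₁, h0₁⟩ := h₁
    obtain ⟨f₂, hf₂, hs₂, h0₂⟩ := h₂
    refine ⟨f₁ + f₂, add_mem hf₁ hf₂, fun t ht => ?_, fun h => by simp [h0₁ h, h0₂ h]⟩
    have h := (hs₁ t ht).add (hs₂ t ht)
    rwa [← Set.indicator_add] at h
  | smul c W _ h₁ =>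
    obtain ⟨f₁, hf₁, hs₁, h0₁⟩ := h₁
    refine ⟨c • f₁, Submodule.smul_mem _ c hf₁, fun t ht => ?_, fun h => by simp [h0₁ h]⟩
    have key : ({x | InDilate T v t x}.indicator fun x => (c • W) (x, t)) =
        fun x => c * {x | InDilate T v t x}.indicator (fun x => W (x, t)) x :=
      funext fun x => Set.indicator_const_mul _ _ _ _
    rw [key]
    exact (hs₁ t ht).mul_left c

/-- The indicator function of `b * t` being an integer, as a step polynomial. -/
noncomputable def intIndicator (b : ℕ) (t : ℝ) : ℝ :=
  1 - Int.fract ((b : ℤ) * t) - Int.fract (((-b : ℤ) : ℝ) * t)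

lemma intIndicator_mem_stepPow (b : ℕ) : intIndicator b ∈ stepPow 1 :=
  sub_mem (sub_mem (const_mem_stepPow 1 1) (fract_mem_stepPow b)) (fract_mem_stepPow (-b))

lemma intIndicator_of_eq {b : ℕ} {t : ℝ} {n : ℤ} (h : b * t = n) : intIndicator b t = 1 := by
  have h' : ((-b : ℤ) : ℝ) * t = ((-n : ℤ) : ℝ) := by push_cast; linarith
  rw [intIndicator, h', Int.cast_natCast, h]
  simp

lemma intIndicator_of_ne {b : ℕ} {t : ℝ} (h : ∀ n : ℤ, (b : ℝ) * t ≠ n) :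
    intIndicator b t = 0 := by
  have h' : ((-b : ℤ) : ℝ) * t = -(b * t) := by push_cast; ring
  rw [intIndicator, h', Int.cast_natCast, Int.fract_neg]
  · ring
  · intro h0
    exact h ⌊(b : ℝ) * t⌋ (by rw [Int.fract] at h0; linarith)

lemma inDilate_cons_iff {ι : Type*} {d : ℕ} {T : Finset ι} {v : ι → Fin (d + 1) → ℤ} {b : ℕ}
    (hv : ∀ i ∈ T, v i 0 = b) {t : ℝ} {n : ℤ} {y : Fin d → ℤ} :
    InDilate T v t (Fin.cons n y) ↔
      (b : ℝ) * t = n ∧ InDilate T (fun i j => v i j.succ) t y := by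
  have h0 : ∀ w : ι → ℝ, ∑ i ∈ T, w i = t → ∑ i ∈ T, w i * (v i 0 : ℝ) = b * t := by
    intro w hw
    rw [← hw, Finset.mul_sum]
    exact Finset.sum_congr rfl fun i hi => by rw [hv i hi]; push_cast; ring
  simp only [InDilate, Fin.forall_fin_succ, Fin.cons_zero, Fin.cons_succ]
  constructor
  · rintro ⟨w, hw, ht, hn, hy⟩
    exact ⟨by rw [← h0 w ht, hn], w, hw, ht, hy⟩
  · rintro ⟨hn, w, hw, ht, hy⟩
    exact ⟨w, hw, ht, by rw [h0 w ht, hn], hy⟩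

/-- Sums over the dilates of a lattice polytope contained in a hyperplane not through the
origin. -/
lemma DilateSums.of_linear {d : ℕ} (hd : DilateSums d) {ι : Type} (T : Finset ι)
    (v : ι → Fin (d + 1) → ℤ) (φ : (Fin (d + 1) → ℤ) ≃ₗ[ℤ] (Fin (d + 1) → ℤ)) {b : ℕ}
    (hb : 0 < b) (hv : ∀ i ∈ T, φ (v i) 0 = b) {m : ℕ} {w : (Fin (d + 1) → ℤ) → ℝ}
    (hw : w ∈ affineWeights (d + 1) ^ m) :
    ∃ f ∈ stepPow (d + m), ∀ t, 0 < t →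
      HasSum ({x | InDilate T v t x}.indicator w) (intIndicator b t * f t) := by
  have hb' : (b : ℝ) ≠ 0 := by exact_mod_cast hb.ne'
  obtain ⟨W, hW, hWw⟩ := exists_mem_pow_of_generators
    (fun p : (Fin d → ℤ) × ℤ => φ.symm (Fin.cons p.2 p.1))
    (fun p : (Fin d → ℤ) × ℤ => (p.1, (p.2 : ℝ) / b)) (W := paramWeights d) (by
      rintro _ (rfl | ⟨k, rfl⟩)
      · exact ⟨1, one_mem_paramWeights d, fun _ => rfl⟩
      · refine ⟨(φ.symm (Pi.single 0 1) k * b : ℝ) • Prod.snd +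
          ∑ j : Fin d, (φ.symm (Pi.single j.succ 1) k : ℝ) • fun p => (p.1 j : ℝ),
          add_mem (Submodule.smul_mem _ _ (snd_mem_paramWeights d)) (Submodule.sum_mem _ fun j _ =>
            Submodule.smul_mem _ _ (coord_mem_paramWeights j)), fun p => ?_⟩
        have : φ.symm (Fin.cons p.2 p.1) k = ∑ j, (Fin.cons p.2 p.1 : Fin (d + 1) → ℤ) j *
            φ.symm (Pi.single j 1) k := by
          conv_lhs => rw [pi_eq_sum_univ' (Fin.cons p.2 p.1 : Fin (d + 1) → ℤ)]
          rw [map_sum, Finset.sum_apply]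
          exact Finset.sum_congr rfl fun j _ => by rw [map_smul, Pi.smul_apply, smul_eq_mul]
        simp only [this, Fin.sum_univ_succ, Fin.cons_zero, Fin.cons_succ]
        simp only [Pi.add_apply, Pi.smul_apply, Finset.sum_apply, smul_eq_mul]
        push_cast
        congr 1
        · field_simp
        · exact Finset.sum_congr rfl fun j _ => mul_comm _ _) hw
  obtain ⟨f, hf, hsum, -⟩ := hd.param T (fun i j => φ (v i) j.succ) hW
  refine ⟨f, hf, fun t ht => ?_⟩
  have hmem : ∀ n y, InDilate T v t (φ.symm (Fin.cons n y)) ↔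
      (b : ℝ) * t = n ∧ InDilate T (fun i j => φ (v i) j.succ) t y := by
    intro n y
    rw [← inDilate_cons_iff hv]
    constructor <;> intro h
    · simpa using h.map φ.toLinearMap
    · simpa using h.map φ.symm.toLinearMap
  have hsurj : ∀ x, ∃ n y, x = φ.symm (Fin.cons n y) := fun x =>
    ⟨φ x 0, fun j => φ x j.succ, by
      rw [LinearEquiv.eq_symm_apply]; exact (Fin.cons_self_tail (φ x)).symm⟩
  by_cases hn : ∃ n : ℤ, (b : ℝ) * t = n
  · obtain ⟨n, hn⟩ := hn
    have hinj : Function.Injective fun y : Fin d → ℤ => φ.symm (Fin.cons n y) :=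
      φ.symm.injective.comp (Fin.cons_right_injective (α := fun _ => ℤ) n)
    rw [intIndicator_of_eq hn, one_mul, ← hinj.hasSum_iff]
    · convert hsum t ht using 1
      funext y
      have hnt : (n : ℝ) / b = t := by rw [← hn]; field_simp
      have hwy := hWw (y, n)
      simp only [hnt] at hwy
      have hm : InDilate T v t (φ.symm (Fin.cons n y)) ↔ _ :=
        (hmem n y).trans (and_iff_right hn)
      by_cases hy : InDilate T (fun i j => φ (v i) j.succ) t y
      · have := hm.2 hy
        simp [hy, this, hwy]
      · have := mt hm.1 hy
        simp [hy, this]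
    · intro x hx
      refine Set.indicator_of_notMem (fun hxt => hx ?_) _
      obtain ⟨n', y, rfl⟩ := hsurj x
      have := ((hmem n' y).1 hxt).1
      rw [hn] at this
      exact ⟨y, by rw [show n = n' by exact_mod_cast this]⟩
  · have hz : {x | InDilate T v t x}.indicator w = 0 := by
      funext x
      refine Set.indicator_of_notMem (fun hxt => hn ?_) _
      obtain ⟨n', y, rfl⟩ := hsurj x
      exact ⟨n', ((hmem n' y).1 hxt).1⟩
    rw [intIndicator_of_ne (by push Not at hn; exact hn), zero_mul, hz]
    exact hasSum_zero

/-- A primitive integer linear form is a coordinate in a suitable basis of the lattice. -/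
lemma exists_linearEquiv_apply_zero {d : ℕ} {α c : Fin (d + 1) → ℤ} (hc : α ⬝ᵥ c = 1) :
    ∃ φ : (Fin (d + 1) → ℤ) ≃ₗ[ℤ] (Fin (d + 1) → ℤ), ∀ x, φ x 0 = α ⬝ᵥ x := by
  set l : (Fin (d + 1) → ℤ) →ₗ[ℤ] ℤ :=
    { toFun := fun x => α ⬝ᵥ x
      map_add' := dotProduct_add α
      map_smul' := fun r x => dotProduct_smul r α x } with hl
  have hsurj : Function.Surjective l := fun n =>
    ⟨n • c, by rw [map_smul]; change n • (α ⬝ᵥ c) = n; rw [hc]; simp⟩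
  have hrank : Module.finrank ℤ (LinearMap.ker l) = d := by
    have := Submodule.finrank_quotient_add_finrank (LinearMap.ker l)
    rw [(l.quotKerEquivOfSurjective hsurj).finrank_eq] at this
    simp at this
    omega
  set b := Module.finBasisOfFinrankEq ℤ (LinearMap.ker l) hrank
  have hlc : l c = 1 := hc
  set B := Module.Basis.mkFinCons c b
    (fun r x hx h => by
      have := congrArg l h
      rw [map_add, map_smul, hlc, LinearMap.mem_ker.1 hx] at this
      simpa using this)
    (fun z => ⟨-l z, by rw [LinearMap.mem_ker, map_add, map_smul, hlc]; simp⟩)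
  refine ⟨B.equivFun, fun x => ?_⟩
  have hx := congrArg l (B.sum_equivFun x)
  rw [map_sum, Fin.sum_univ_succ] at hx
  simp only [map_smul] at hx
  rw [Finset.sum_eq_zero] at hx
  · rw [show l (B 0) = 1 by rw [Module.Basis.coe_mkFinCons]; exact hlc] at hx
    rw [smul_eq_mul, mul_one, add_zero] at hx
    exact hx
  · intro j _
    rw [Module.Basis.coe_mkFinCons, Fin.cons_succ]
    simp

lemma exists_primitive {d : ℕ} {α y : Fin d → ℤ} {β : ℤ} (hβ : β ≠ 0) (h : α ⬝ᵥ y = β) :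
    ∃ (e : ℤ) (α' : Fin d → ℤ) (b : ℕ) (c : Fin d → ℤ),
      0 < b ∧ e ≠ 0 ∧ α = e • α' ∧ β = e * b ∧ α' ⬝ᵥ c = 1 := by
  obtain ⟨j, hj⟩ : ∃ j, α j ≠ 0 := by
    by_contra! h0
    exact hβ (by rw [← h, show α = 0 from funext h0, zero_dotProduct])
  obtain ⟨α', hα', hgcd⟩ := Finset.extract_gcd α (s := Finset.univ) ⟨j, Finset.mem_univ j⟩
  obtain ⟨c, hc⟩ := Finset.gcd_eq_sum_mul Finset.univ α'
  rw [hgcd] at hc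
  set g := Finset.univ.gcd α
  have hαg : α = g • α' := funext fun j => hα' j (Finset.mem_univ j)
  have hβg : β = g * (α' ⬝ᵥ y) := by rw [← h, hαg, smul_dotProduct, smul_eq_mul]
  have hg : g ≠ 0 := by
    intro h0
    rw [h0, zero_mul] at hβg
    exact hβ hβg
  rcases lt_trichotomy (α' ⬝ᵥ y) 0 with hy | hy | hy
  · refine ⟨-g, -α', (-(α' ⬝ᵥ y)).toNat, -c, by omega, neg_ne_zero.2 hg, ?_, ?_, ?_⟩
    · rw [neg_smul_neg, hαg]
    · rw [Int.toNat_of_nonneg (by omega), neg_mul_neg, hβg]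
    · rw [neg_dotProduct_neg]
      exact hc.symm
  · rw [hy, mul_zero] at hβg
    exact absurd hβg hβ
  · refine ⟨g, α', (α' ⬝ᵥ y).toNat, c, by omega, hg, hαg, ?_, hc.symm⟩
    rw [Int.toNat_of_nonneg hy.le, hβg]

/-- Sums over the dilates of a lattice polytope on which an integer linear form has a constant
nonzero value `β`. -/
lemma DilateSums.face {d : ℕ} (hd : DilateSums d) {ι : Type} (T : Finset ι)
    (v : ι → Fin (d + 1) → ℤ) {α : Fin (d + 1) → ℤ} {β : ℤ} (hβ : β ≠ 0)
    (hv : ∀ i ∈ T, α ⬝ᵥ v i = β) {m : ℕ} {w : (Fin (d + 1) → ℤ) → ℝ}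
    (hw : w ∈ affineWeights (d + 1) ^ m) :
    ∃ b : ℕ, 0 < b ∧ (b : ℤ) ∣ β ∧ ∃ f ∈ stepPow (d + m), ∀ t, 0 < t →
      HasSum ({x | InDilate T v t x}.indicator w) (intIndicator b t * f t) := by
  rcases T.eq_empty_or_nonempty with rfl | ⟨i, hi⟩
  · refine ⟨1, one_pos, by simp, 0, zero_mem _, fun t ht => ?_⟩
    simp [not_inDilate_empty ht]
  · obtain ⟨e, α', b, c, hb, he, hα, hβ', hc⟩ := exists_primitive hβ (hv i hi)
    obtain ⟨φ, hφ⟩ := exists_linearEquiv_apply_zero hc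
    refine ⟨b, hb, ⟨e, by rw [hβ', mul_comm]⟩, hd.of_linear T v φ hb (fun k hk => ?_) hw⟩
    have := hv k hk
    rw [hα, hβ', smul_dotProduct, smul_eq_mul] at this
    rw [hφ, mul_left_cancel₀ he this]

/-- The span of the step polynomials of degree at most `k` restricted to the multiples of `1 / b`
for some divisor `b` of `B`. -/
noncomputable def gridSpan (B k : ℕ) : Submodule ℝ (ℝ → ℝ) :=
  Submodule.span ℝ {u | ∃ b f, 0 < b ∧ b ∣ B ∧ f ∈ stepPow k ∧ u = intIndicator b * f}

lemma gridSpan_le_stepPow (B k : ℕ) : gridSpan B k ≤ stepPow (k + 1) := by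
  refine Submodule.span_le.2 ?_
  rintro _ ⟨b, f, -, -, hf, rfl⟩
  rw [add_comm]
  exact mul_mem_stepPow (intIndicator_mem_stepPow b) hf

lemma gridSum_intIndicator_mul {b c : ℕ} (hb : 0 < b) (hc : 0 < c) (f : ℝ → ℝ) {t : ℝ}
    (ht : 0 ≤ t) : gridSum (b * c) (intIndicator b * f) t = gridSum b f t := by
  classical
  have hb' : (0 : ℝ) < b := by exact_mod_cast hb
  have hc' : (0 : ℝ) < c := by exact_mod_cast hc
  symm
  calc gridSum b f t = ∑ n ∈ (Finset.Icc 1 ⌊(b : ℝ) * t⌋₊).image (c * ·),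
        (intIndicator b * f) (n / (b * c : ℕ)) := by
        rw [Finset.sum_image fun x _ y _ h => Nat.eq_of_mul_eq_mul_left hc h]
        refine Finset.sum_congr rfl fun n _ => ?_
        have hn : ((c * n : ℕ) : ℝ) / (b * c : ℕ) = n / b := by
          push_cast
          field_simp
        rw [hn, Pi.mul_apply, intIndicator_of_eq (n := n) (by push_cast; field_simp), one_mul]
    _ = _ := by
      refine Finset.sum_subset ?_ fun n hn hnot => ?_
      · intro n hn
        obtain ⟨k, hk, rfl⟩ := Finset.mem_image.1 hn
        rw [Finset.mem_Icc, Nat.le_floor_iff (by positivity)] at hk ⊢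
        refine ⟨Nat.mul_pos hc hk.1, ?_⟩
        push_cast
        nlinarith [hk.2]
      · rw [Pi.mul_apply, intIndicator_of_ne, zero_mul]
        intro z hz
        have hz' : (n : ℝ) = c * z := by
          rw [← hz]
          push_cast
          field_simp
        rw [Finset.mem_Icc, Nat.le_floor_iff (by positivity)] at hn
        have hz'' : (n : ℤ) = c * z := by exact_mod_cast hz'
        have hzpos : 0 < z := by
          by_contra! h
          have : (c : ℤ) * z ≤ 0 := mul_nonpos_of_nonneg_of_nonpos (by positivity) h
          omega
        lift z to ℕ using hzpos.le
        refine hnot (Finset.mem_image.2 ⟨z, ?_, by exact_mod_cast hz''.symm⟩)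
        rw [Finset.mem_Icc, Nat.le_floor_iff (by positivity)]
        refine ⟨by exact_mod_cast hzpos, ?_⟩
        have h2 := hn.2
        rw [hz'] at h2
        push_cast at h2
        refine le_of_mul_le_mul_left ?_ hc'
        linarith

lemma gridSum_mem_of_mem_gridSpan {B k : ℕ} (hB : 0 < B) {u : ℝ → ℝ} (hu : u ∈ gridSpan B k) :
    gridSum B u ∈ stepPowOn (k + 1) := by
  induction hu using Submodule.span_induction with
  | mem u hu =>
    obtain ⟨b, f, hb, ⟨c, rfl⟩, hf, rfl⟩ := hu
    obtain ⟨F, hF, hFt⟩ := gridSum_mem_stepPowOn k b hb hf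
    exact ⟨F, hF, fun t ht => by
      rw [gridSum_intIndicator_mul hb (Nat.pos_of_mul_pos_left hB) f ht, hFt t ht]⟩
  | zero => rw [gridSum_zero]; exact zero_mem _
  | add a b _ _ ha hb => rw [gridSum_add]; exact add_mem ha hb
  | smul c a _ ha => rw [gridSum_smul]; exact Submodule.smul_mem _ c ha

/-- The points of the dilate by `t` at which one of the inequalities in `A` is tight. -/
def tightSet {ι : Type*} {d : ℕ} (T : Finset ι) (v : ι → Fin d → ℤ)
    (A : Finset ((Fin d → ℤ) × ℤ)) (t : ℝ) : Set (Fin d → ℤ) :=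
  {x | InDilate T v t x ∧ ∃ a ∈ A, ((a.1 ⬝ᵥ x : ℤ) : ℝ) = a.2 * t}

/-- Sums over the part of the boundary of the dilates where one of several inequalities is
tight. -/
lemma DilateSums.tight {d : ℕ} (hd : DilateSums d) {ι : Type} (T : Finset ι)
    (v : ι → Fin (d + 1) → ℤ) {B : ℕ} (A : Finset ((Fin (d + 1) → ℤ) × ℤ))
    (hA : ∀ a ∈ A, a.2 ≠ 0 ∧ a.2 ∣ B) (hv : ∀ a ∈ A, ∀ i ∈ T, a.1 ⬝ᵥ v i ≤ a.2)
    {m : ℕ} {w : (Fin (d + 1) → ℤ) → ℝ} (hw : w ∈ affineWeights (d + 1) ^ m) :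
    ∃ u ∈ gridSpan B (d + m), ∀ t, 0 < t → HasSum ((tightSet T v A t).indicator w) (u t) := by
  classical
  induction A using Finset.induction_on generalizing T with
  | empty =>
    exact ⟨0, zero_mem _, fun t _ => by simp [tightSet]⟩
  | insert a A ha ih =>
    have hA' : ∀ a ∈ A, a.2 ≠ 0 ∧ a.2 ∣ B := fun a ha => hA a (Finset.mem_insert_of_mem ha)
    have hv' : ∀ a ∈ A, ∀ i ∈ T, a.1 ⬝ᵥ v i ≤ a.2 := fun a ha =>
      hv a (Finset.mem_insert_of_mem ha)
    have hva := hv a (Finset.mem_insert_self _ _)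
    obtain ⟨hβ, hβB⟩ := hA a (Finset.mem_insert_self _ _)
    obtain ⟨u₁, hu₁, h₁⟩ := ih T hA' hv'
    obtain ⟨u₂, hu₂, h₂⟩ := ih (T.filter fun i => a.1 ⬝ᵥ v i = a.2) hA'
      fun a ha i hi => hv' a ha i (Finset.mem_filter.1 hi).1
    obtain ⟨b, hb, hbβ, f, hf, h₃⟩ := hd.face (T.filter fun i => a.1 ⬝ᵥ v i = a.2) v hβ
      (fun i hi => (Finset.mem_filter.1 hi).2) hw
    refine ⟨intIndicator b * f + u₁ - u₂, sub_mem (add_mem (Submodule.subset_span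
      ⟨b, f, hb, by exact_mod_cast hbβ.trans hβB, hf, rfl⟩) hu₁) hu₂, fun t ht => ?_⟩
    have h := ((h₃ t ht).add (h₁ t ht)).sub (h₂ t ht)
    have hind : (tightSet T v (insert a A) t).indicator w = fun x =>
        {x | InDilate (T.filter fun i => a.1 ⬝ᵥ v i = a.2) v t x}.indicator w x +
        (tightSet T v A t).indicator w x -
        (tightSet (T.filter fun i => a.1 ⬝ᵥ v i = a.2) v A t).indicator w x := by
      funext x
      simp only [Set.indicator_apply, tightSet, Set.mem_ofPred_eq, inDilate_filter_iff hva,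
        Finset.exists_mem_insert]
      by_cases hx : InDilate T v t x <;> by_cases hax : ((a.1 ⬝ᵥ x : ℤ) : ℝ) = a.2 * t <;>
        simp [hx, hax]
    rw [hind]
    exact h

lemma inDilate_vertex {ι : Type*} {d : ℕ} {T : Finset ι} (v : ι → Fin d → ℤ) {i : ι}
    (hi : i ∈ T) : InDilate T v 1 (v i) := by
  classical
  refine ⟨Pi.single i 1, fun k _ => ?_, ?_, fun j => ?_⟩
  · by_cases h : k = i
    · subst h; simp
    · simp [h]
  · simp [Pi.single_apply, hi]
  · simp [Pi.single_apply, hi]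

section Ray

variable {γ : Type*} {A : Finset γ} {p β : γ → ℝ}

lemma exists_tight_of_pos {t : ℝ} (ht : 0 ≤ t) (h : ∀ a ∈ A, p a ≤ β a * t)
    (h0 : ¬ ∀ a ∈ A, p a ≤ β a * 0) :
    ∃ s, 0 < s ∧ s ≤ t ∧ (∀ a ∈ A, p a ≤ β a * s) ∧ ∃ a ∈ A, 0 < β a ∧ p a = β a * s := by
  classical
  set L : Finset ℝ := insert 0 ((A.filter fun a => 0 < β a).image fun a => p a / β a) with hL
  have hne : L.Nonempty := Finset.insert_nonempty _ _
  have hs0 : 0 ≤ L.max' hne := L.le_max' 0 (Finset.mem_insert_self _ _)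
  have hst : L.max' hne ≤ t := by
    refine Finset.max'_le _ _ _ fun y hy => ?_
    rcases Finset.mem_insert.1 hy with rfl | hy
    · exact ht
    · obtain ⟨a, ha, rfl⟩ := Finset.mem_image.1 hy
      rw [Finset.mem_filter] at ha
      rw [div_le_iff₀' ha.2]
      exact h a ha.1
  have hD : ∀ a ∈ A, p a ≤ β a * L.max' hne := by
    intro a ha
    rcases lt_or_ge 0 (β a) with hβ | hβ
    · rw [← div_le_iff₀' hβ]
      exact L.le_max' _ (Finset.mem_insert_of_mem (Finset.mem_image_of_mem _
        (Finset.mem_filter.2 ⟨ha, hβ⟩)))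
    · nlinarith [h a ha]
  have hs : L.max' hne ≠ 0 := fun hs => h0 (hs ▸ hD)
  refine ⟨_, lt_of_le_of_ne hs0 hs.symm, hst, hD, ?_⟩
  rcases Finset.mem_insert.1 (L.max'_mem hne) with hm | hm
  · exact absurd hm hs
  · obtain ⟨a, ha, hae⟩ := Finset.mem_image.1 hm
    rw [Finset.mem_filter] at ha
    exact ⟨a, ha.1, ha.2, by rw [← hae, mul_div_cancel₀ _ ha.2.ne']⟩

lemma exists_tight_of_neg {s t : ℝ} (hst : s ≤ t) (h : ∀ a ∈ A, p a ≤ β a * s)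
    (ht : ¬ ∀ a ∈ A, p a ≤ β a * t) :
    ∃ r, s ≤ r ∧ r ≤ t ∧ (∀ a ∈ A, p a ≤ β a * r) ∧ ∃ a ∈ A, β a < 0 ∧ p a = β a * r := by
  classical
  set L : Finset ℝ := insert t ((A.filter fun a => β a < 0).image fun a => p a / β a) with hL
  have hne : L.Nonempty := Finset.insert_nonempty _ _
  have hrt : L.min' hne ≤ t := L.min'_le t (Finset.mem_insert_self _ _)
  have hsr : s ≤ L.min' hne := by
    refine Finset.le_min' _ _ _ fun y hy => ?_
    rcases Finset.mem_insert.1 hy with rfl | hy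
    · exact hst
    · obtain ⟨a, ha, rfl⟩ := Finset.mem_image.1 hy
      rw [Finset.mem_filter] at ha
      rw [le_div_iff_of_neg' ha.2]
      exact h a ha.1
  have hD : ∀ a ∈ A, p a ≤ β a * L.min' hne := by
    intro a ha
    rcases lt_or_ge (β a) 0 with hβ | hβ
    · rw [← le_div_iff_of_neg' hβ]
      exact L.min'_le _ (Finset.mem_insert_of_mem (Finset.mem_image_of_mem _
        (Finset.mem_filter.2 ⟨ha, hβ⟩)))
    · nlinarith [h a ha]
  refine ⟨_, hsr, hrt, hD, ?_⟩
  rcases Finset.mem_insert.1 (L.min'_mem hne) with hm | hm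
  · exact absurd (hm ▸ hD) ht
  · obtain ⟨a, ha, hae⟩ := Finset.mem_image.1 hm
    rw [Finset.mem_filter] at ha
    exact ⟨a, ha.1, ha.2, by rw [← hae, mul_div_cancel₀ _ ha.2.ne]⟩

end Ray

open Classical in
lemma gridSum_ite {B : ℕ} (hB : 0 < B) {P : ℝ → Prop}
    (huniq : ∀ s s', P s → P s' → s = s') (hgrid : ∀ s, 0 < s → P s → ∃ n : ℕ, s = n / B)
    (c : ℝ) {t : ℝ} (ht : 0 ≤ t) :
    gridSum B (fun s => if P s then c else 0) t =
      if ∃ s, 0 < s ∧ s ≤ t ∧ P s then c else 0 := by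
  have hB' : (0 : ℝ) < B := by exact_mod_cast hB
  have hmem : ∀ n : ℕ, n ∈ Finset.Icc 1 ⌊(B : ℝ) * t⌋₊ ↔ 0 < (n : ℝ) / B ∧ (n : ℝ) / B ≤ t := by
    intro n
    rw [Finset.mem_Icc, Nat.le_floor_iff (by positivity), div_le_iff₀' hB', div_pos_iff_of_pos_right hB',
      Nat.cast_pos]
    rfl
  rw [gridSum]
  split_ifs with h
  · obtain ⟨s, hs0, hst, hs⟩ := h
    obtain ⟨n, rfl⟩ := hgrid s hs0 hs
    rw [Finset.sum_eq_single n, if_pos hs]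
    · intro k _ hk
      rw [if_neg]
      intro hPk
      have := huniq _ _ hPk hs
      rw [div_left_inj' hB'.ne'] at this
      exact hk (by exact_mod_cast this)
    · intro hn
      exact absurd ((hmem n).2 ⟨hs0, hst⟩) hn
  · refine Finset.sum_eq_zero fun n hn => if_neg fun hPn => h ?_
    rw [hmem] at hn
    exact ⟨_, hn.1, hn.2, hPn⟩

/-- For `t > 0`, a lattice point `x` lies in the dilate by `t` exactly when the ray of dilates has
entered `x` at a time `s ≤ t` and has not left it before time `t`. -/
lemma indicator_inDilate_eq {ι : Type*} {d : ℕ} {T : Finset ι} {v : ι → Fin d → ℤ}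
    {A : Finset ((Fin d → ℤ) × ℤ)} {B : ℕ} (hB : 0 < B)
    (hA : ∀ (t : ℝ) (x : Fin d → ℤ), InDilate T v t x ↔
      ∀ a ∈ A, ((a.1 ⬝ᵥ x : ℤ) : ℝ) ≤ a.2 * t)
    (hAB : ∀ a ∈ A, a.2 ≠ 0 → a.2 ∣ B) (w : (Fin d → ℤ) → ℝ) {t : ℝ} (ht : 0 < t)
    (x : Fin d → ℤ) :
    {x | InDilate T v t x}.indicator w x =
      {x | x = 0 ∧ InDilate T v 1 0}.indicator w x +
      gridSum B (fun s => (tightSet T v (A.filter fun a => 0 < a.2) s).indicator w x) t -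
      gridSum B (fun s => (tightSet T v (A.filter fun a => a.2 < 0) s).indicator w x) t +
      (tightSet T v (A.filter fun a => a.2 < 0) t).indicator w x := by
  classical
  have hfar : ∀ s s', x ∈ tightSet T v (A.filter fun a => 0 < a.2) s → InDilate T v s' x →
      s ≤ s' := by
    rintro s s' ⟨-, a, ha, hax⟩ h
    rw [Finset.mem_filter] at ha
    have h' := (hA s' x).1 h a ha.1
    rw [hax] at h'
    exact le_of_mul_le_mul_left h' (by exact_mod_cast ha.2)
  have hnear : ∀ s s', x ∈ tightSet T v (A.filter fun a => a.2 < 0) s → InDilate T v s' x →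
      s' ≤ s := by
    rintro s s' ⟨-, a, ha, hax⟩ h
    rw [Finset.mem_filter] at ha
    have h' := (hA s' x).1 h a ha.1
    rw [hax] at h'
    have hneg : (a.2 : ℝ) < 0 := by exact_mod_cast ha.2
    nlinarith
  have hgrid : ∀ s, 0 < s → ∀ a ∈ A, a.2 ≠ 0 → ((a.1 ⬝ᵥ x : ℤ) : ℝ) = a.2 * s →
      ∃ n : ℕ, s = n / B := by
    intro s hs a ha ha0 hax
    obtain ⟨c, hc⟩ := hAB a ha ha0
    have hc' : (B : ℝ) = a.2 * c := by exact_mod_cast hc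
    have hB' : (0 : ℝ) < B := by exact_mod_cast hB
    have hsB : s * B = ((a.1 ⬝ᵥ x * c : ℤ) : ℝ) := by
      rw [hc']
      push_cast
      rw [hax]
      ring
    have hpos : 0 ≤ a.1 ⬝ᵥ x * c := by
      have : (0 : ℝ) ≤ ((a.1 ⬝ᵥ x * c : ℤ) : ℝ) := hsB ▸ (by positivity)
      exact_mod_cast this
    refine ⟨(a.1 ⬝ᵥ x * c).toNat, ?_⟩
    rw [eq_div_iff hB'.ne', hsB]
    have := Int.toNat_of_nonneg hpos
    exact_mod_cast this.symm
  simp only [Set.indicator_apply]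
  rw [gridSum_ite hB (P := fun s => x ∈ tightSet T v (A.filter fun a => 0 < a.2) s)
      (fun s s' h h' => le_antisymm (hfar s s' h h'.1) (hfar s' s h' h.1))
      (fun s hs ⟨_, a, ha, hax⟩ => by
        rw [Finset.mem_filter] at ha
        exact hgrid s hs a ha.1 ha.2.ne' hax) (w x) ht.le,
    gridSum_ite hB (P := fun s => x ∈ tightSet T v (A.filter fun a => a.2 < 0) s)
      (fun s s' h h' => le_antisymm (hnear s' s h' h.1) (hnear s s' h h'.1))
      (fun s hs ⟨_, a, ha, hax⟩ => by
        rw [Finset.mem_filter] at ha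
        exact hgrid s hs a ha.1 ha.2.ne hax) (w x) ht.le]
  simp only [Set.mem_ofPred_eq]
  by_cases hx : x = 0
  · subst hx
    have hno : ∀ s : ℝ, 0 < s → ∀ A' : Finset ((Fin d → ℤ) × ℤ), (∀ a ∈ A', a.2 ≠ 0) →
        (0 : Fin d → ℤ) ∉ tightSet T v A' s := by
      rintro s hs A' hA' ⟨-, a, ha, hax⟩
      rw [dotProduct_zero, Int.cast_zero, eq_comm, mul_eq_zero] at hax
      rcases hax with h | h
      · exact hA' a ha (by exact_mod_cast h)
      · exact hs.ne' h
    have h₁ := fun s hs => hno s hs (A.filter fun a => 0 < a.2)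
      fun a ha => (Finset.mem_filter.1 ha).2.ne'
    have h₂ := fun s hs => hno s hs (A.filter fun a => a.2 < 0)
      fun a ha => (Finset.mem_filter.1 ha).2.ne
    have h₁' : ¬ ∃ s, 0 < s ∧ s ≤ t ∧ 0 ∈ tightSet T v (A.filter fun a => 0 < a.2) s :=
      fun ⟨s, hs, _, h⟩ => h₁ s hs h
    have h₂' : ¬ ∃ s, 0 < s ∧ s ≤ t ∧ 0 ∈ tightSet T v (A.filter fun a => a.2 < 0) s :=
      fun ⟨s, hs, _, h⟩ => h₂ s hs h
    rw [if_neg h₁', if_neg h₂', if_neg (h₂ t ht)]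
    simp [inDilate_zero_iff ht]
  · rw [if_neg (fun h : x = 0 ∧ InDilate T v 1 0 => hx h.1)]
    have henter : ∀ s, 0 ≤ s → InDilate T v s x →
        ∃ r, 0 < r ∧ r ≤ s ∧ x ∈ tightSet T v (A.filter fun a => 0 < a.2) r := by
      intro s hs h
      obtain ⟨r, hr, hrs, hD, a, ha, hβ, hax⟩ := exists_tight_of_pos hs ((hA s x).1 h)
        (fun h0 => hx (eq_zero_of_inDilate_zero ((hA 0 x).2 h0)))
      exact ⟨r, hr, hrs, (hA r x).2 hD, a, Finset.mem_filter.2 ⟨ha, by exact_mod_cast hβ⟩, hax⟩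
    by_cases hxt : InDilate T v t x
    · rw [if_pos hxt, if_pos (henter t ht.le hxt)]
      have hiff : (∃ s, 0 < s ∧ s ≤ t ∧ x ∈ tightSet T v (A.filter fun a => a.2 < 0) s) ↔
          x ∈ tightSet T v (A.filter fun a => a.2 < 0) t := by
        constructor
        · rintro ⟨s, -, hst, hs⟩
          rwa [le_antisymm (hnear s t hs hxt) hst]
        · exact fun h => ⟨t, ht, le_rfl, h⟩
      simp only [hiff]
      ring
    · have hiff : (∃ s, 0 < s ∧ s ≤ t ∧ x ∈ tightSet T v (A.filter fun a => a.2 < 0) s) ↔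
          ∃ s, 0 < s ∧ s ≤ t ∧ x ∈ tightSet T v (A.filter fun a => 0 < a.2) s := by
        constructor
        · rintro ⟨s, hs, hst, h⟩
          obtain ⟨r, hr, hrs, hxr⟩ := henter s hs.le h.1
          exact ⟨r, hr, hrs.trans hst, hxr⟩
        · rintro ⟨s, hs, hst, h⟩
          obtain ⟨r, hsr, hrt, hD, a, ha, hβ, hax⟩ := exists_tight_of_neg hst ((hA s x).1 h.1)
            (fun h => hxt ((hA t x).2 h))
          exact ⟨r, hs.trans_le hsr, hrt, (hA r x).2 hD, a,
            Finset.mem_filter.2 ⟨ha, by exact_mod_cast hβ⟩, hax⟩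
      rw [if_neg hxt, if_neg (fun h : x ∈ tightSet T v _ t => hxt h.1)]
      simp only [hiff]
      ring

lemma dilateSums_zero : DilateSums 0 := by
  classical
  intro ι T v m w _
  refine ⟨fun _ => if InDilate T v 1 0 then w 0 else 0, const_mem_stepPow _ _, fun t ht => ?_,
    fun h => if_pos h⟩
  have h := hasSum_single (f := {x | InDilate T v t x}.indicator w) 0
    fun x hx => absurd (Subsingleton.elim x 0) hx
  convert h using 1
  rw [Set.indicator_apply]
  exact if_congr (inDilate_zero_iff ht).symm rfl rfl

lemma DilateSums.succ {d : ℕ} (hd : DilateSums d) : DilateSums (d + 1) := by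
  classical
  intro ι T v m w hw
  obtain ⟨A, hA⟩ := exists_forms_forall_inDilate_iff T v
  set B : ℕ := ∏ a ∈ A.filter (fun a => a.2 ≠ 0), a.2.natAbs with hBdef
  have hB : 0 < B := Finset.prod_pos fun a ha => Int.natAbs_pos.2 (Finset.mem_filter.1 ha).2
  have hAB : ∀ a ∈ A, a.2 ≠ 0 → a.2 ∣ B := fun a ha ha0 => Int.natAbs_dvd.1
    (Int.natCast_dvd_natCast.2 (Finset.dvd_prod_of_mem _ (Finset.mem_filter.2 ⟨ha, ha0⟩)))
  have hv : ∀ a ∈ A, ∀ i ∈ T, a.1 ⬝ᵥ v i ≤ a.2 := fun a ha i hi => by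
    have := (hA 1 (v i)).1 (inDilate_vertex v hi) a ha
    rw [mul_one] at this
    exact_mod_cast this
  obtain ⟨uf, huf, hfar⟩ := hd.tight T v (B := B) (A.filter fun a => 0 < a.2)
    (fun a ha => by
      rw [Finset.mem_filter] at ha
      exact ⟨ha.2.ne', hAB a ha.1 ha.2.ne'⟩)
    (fun a ha => hv a (Finset.mem_filter.1 ha).1) hw
  obtain ⟨un, hun, hnear, hun0⟩ : ∃ u ∈ gridSpan B (d + m), (∀ t, 0 < t →
      HasSum ((tightSet T v (A.filter fun a => a.2 < 0) t).indicator w) (u t)) ∧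
      (InDilate T v 1 0 → u 0 = 0) := by
    by_cases h0 : InDilate T v 1 0
    · refine ⟨0, zero_mem _, fun t _ => ?_, fun _ => rfl⟩
      have : A.filter (fun a => a.2 < 0) = ∅ := by
        refine Finset.filter_eq_empty_iff.2 fun a ha => ?_
        have := (hA 1 0).1 h0 a ha
        rw [dotProduct_zero, mul_one] at this
        exact not_lt.2 (by exact_mod_cast this)
      simp [this, tightSet]
    · obtain ⟨u, hu, hs⟩ := hd.tight T v (B := B) (A.filter fun a => a.2 < 0)
        (fun a ha => by
          rw [Finset.mem_filter] at ha
          exact ⟨ha.2.ne, hAB a ha.1 ha.2.ne⟩)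
        (fun a ha => hv a (Finset.mem_filter.1 ha).1) hw
      exact ⟨u, hu, hs, fun h => absurd h h0⟩
  obtain ⟨F, hF, hFt⟩ := gridSum_mem_of_mem_gridSpan hB huf
  obtain ⟨N, hN, hNt⟩ := gridSum_mem_of_mem_gridSpan hB hun
  set c : ℝ := if InDilate T v 1 0 then w 0 else 0 with hc
  have hgrid : ∀ {u : ℝ → ℝ} {D : ℝ → Set (Fin (d + 1) → ℤ)},
      (∀ t, 0 < t → HasSum ((D t).indicator w) (u t)) → ∀ t,
      HasSum (fun x => gridSum B (fun s => (D s).indicator w x) t) (gridSum B u t) := by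
    intro u D h t
    refine hasSum_sum fun n hn => h _ ?_
    have h1 : (0 : ℝ) < n := by exact_mod_cast (Finset.mem_Icc.1 hn).1
    have h2 : (0 : ℝ) < B := by exact_mod_cast hB
    positivity
  refine ⟨(fun _ => c) + F - N + un, ?_, fun t ht => ?_, fun h0 => ?_⟩
  · rw [add_right_comm]
    exact add_mem (sub_mem (add_mem (const_mem_stepPow _ c) hF) hN) (gridSpan_le_stepPow B _ hun)
  · have hzero : HasSum ({x | x = 0 ∧ InDilate T v 1 0}.indicator w) c := by
      have h := hasSum_single (f := {x | x = 0 ∧ InDilate T v 1 0}.indicator w) 0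
        fun x hx => Set.indicator_of_notMem (fun h => hx h.1) _
      convert h using 1
      simp [hc, Set.indicator_apply]
    have h := ((hzero.add (hgrid hfar t)).sub (hgrid hnear t)).add (hnear t ht)
    rw [funext (indicator_inDilate_eq hB hA hAB w ht)]
    simp only [Pi.add_apply, Pi.sub_apply]
    rw [← hFt t ht.le, ← hNt t ht.le]
    exact h
  · have hg0 : ∀ u, gridSum B u 0 = 0 := fun u => by simp [gridSum]
    simp only [Pi.add_apply, Pi.sub_apply]
    rw [← hFt 0 le_rfl, ← hNt 0 le_rfl, hg0, hg0, hun0 h0, hc, if_pos h0]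
    ring

lemma dilateSums (d : ℕ) : DilateSums d := by
  induction d with
  | zero => exact dilateSums_zero
  | succ d ih => exact ih.succ

/-- On the natural numbers, step polynomials are polynomials. -/
lemma exists_polynomial_of_mem_stepPow {k : ℕ} {f : ℝ → ℝ} (hf : f ∈ stepPow k) :
    ∃ p : Polynomial ℝ, ∀ n : ℕ, f n = p.eval (n : ℝ) := by
  obtain ⟨u, hu, h⟩ := exists_reducedSpan_eq_on_grid one_pos hf
  simp only [Nat.cast_one, div_one] at h
  simp only [h]
  clear h hf f
  induction hu using Submodule.span_induction with
  | mem u hu =>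
    obtain ⟨r, L, hL, -, rfl⟩ := hu
    have hL0 : L = [] := List.eq_nil_iff_forall_not_mem.2 fun a ha => by
      have := hL a ha
      omega
    exact ⟨Polynomial.X ^ r, fun n => by simp [hL0, floorProd]⟩
  | zero => exact ⟨0, fun n => by simp⟩
  | add a b _ _ ha hb =>
    obtain ⟨p, hp⟩ := ha
    obtain ⟨p', hp'⟩ := hb
    exact ⟨p + p', fun n => by simp [hp, hp']⟩
  | smul c a _ ha =>
    obtain ⟨p, hp⟩ := ha
    exact ⟨c • p, fun n => by simp [hp]⟩

lemma eq_at_zero_of_mem_stepPow {k : ℕ} {f g : ℝ → ℝ} (hf : f ∈ stepPow k) (hg : g ∈ stepPow k)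
    (h : ∀ n : ℕ, 0 < n → f n = g n) : f 0 = g 0 := by
  obtain ⟨p, hp⟩ := exists_polynomial_of_mem_stepPow hf
  obtain ⟨p', hp'⟩ := exists_polynomial_of_mem_stepPow hg
  have : p = p' := by
    refine Polynomial.eq_of_infinite_eval_eq p p' (Set.Infinite.mono ?_
      (Set.infinite_range_of_injective (f := fun n : ℕ => ((n + 1 : ℕ) : ℝ))
        fun a b hab => by simpa using hab))
    rintro _ ⟨n, rfl⟩
    have := h (n + 1) n.succ_pos
    rw [hp, hp'] at this
    exact this
  have h0 := hp 0
  rw [this, ← hp' 0] at h0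
  simpa using h0

lemma inDilate_add_iff {ι : Type*} {d : ℕ} {T : Finset ι} {v : ι → Fin d → ℤ} (u : Fin d → ℤ)
    {n : ℕ} {y : Fin d → ℤ} :
    InDilate T v n (y + n • u) ↔ InDilate T (fun i => v i - u) n y := by
  refine exists_congr fun w => and_congr_right fun _ => and_congr_right fun hn =>
    forall_congr' fun j => ?_
  have : ∑ i ∈ T, w i * ((v i - u) j : ℝ) = ∑ i ∈ T, w i * (v i j : ℝ) - n * u j := by
    rw [← hn, Finset.sum_mul, ← Finset.sum_sub_distrib]
    exact Finset.sum_congr rfl fun i _ => by push_cast [Pi.sub_apply]; ring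
  rw [this, sub_eq_iff_eq_add]
  simp

/-- Sums of polynomial weights over the dilates of a nonempty lattice polytope, including the
dilate by zero. -/
theorem exists_stepPow_hasSum_of_nonempty {ι : Type} {d : ℕ} {T : Finset ι} (hT : T.Nonempty)
    (v : ι → Fin d → ℤ) {m : ℕ} {w : (Fin d → ℤ) → ℝ} (hw : w ∈ affineWeights d ^ m) :
    ∃ f ∈ stepPow (d + m),
      ∀ t, 0 ≤ t → HasSum ({x | InDilate T v t x}.indicator w) (f t) := by
  obtain ⟨i₀, hi₀⟩ := hT
  obtain ⟨f, hf, hsum, -⟩ := dilateSums d ι T v m w hw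
  obtain ⟨W, hW, hWw⟩ := exists_mem_pow_of_generators
    (fun p : (Fin d → ℤ) × ℕ => p.1 + p.2 • v i₀)
    (fun p : (Fin d → ℤ) × ℕ => (p.1, (p.2 : ℝ))) (W := paramWeights d) (by
      rintro _ (rfl | ⟨k, rfl⟩)
      · exact ⟨1, one_mem_paramWeights d, fun _ => rfl⟩
      · exact ⟨(fun p => (p.1 k : ℝ)) + (v i₀ k : ℝ) • Prod.snd,
          add_mem (coord_mem_paramWeights k) (Submodule.smul_mem _ _ (snd_mem_paramWeights d)),
          fun p => by simp [mul_comm]⟩) hw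
  obtain ⟨g, hg, hgsum, hg0⟩ := (dilateSums d).param T (fun i => v i - v i₀) hW
  have hfg : f 0 = w 0 := by
    have hWzero := hWw (0, 0)
    simp only [zero_smul, add_zero, Nat.cast_zero] at hWzero
    rw [hWzero, ← hg0 (by simpa using inDilate_vertex (fun i => v i - v i₀) hi₀)]
    refine eq_at_zero_of_mem_stepPow hf hg fun n hn => ?_
    have hn' : (0 : ℝ) < n := by exact_mod_cast hn
    refine (hsum n hn').unique ?_
    rw [← (Equiv.addRight (n • v i₀)).hasSum_iff]
    have hind : {x | InDilate T v n x}.indicator w ∘ Equiv.addRight (n • v i₀) =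
        {x | InDilate T (fun i => v i - v i₀) n x}.indicator fun x => W (x, n) := by
      classical
      funext y
      rw [Function.comp_apply, Set.indicator_apply, Set.indicator_apply]
      exact if_congr (inDilate_add_iff (v i₀)) (hWw (y, n)) rfl
    rw [hind]
    exact hgsum n hn'
  refine ⟨f, hf, fun t ht => ?_⟩
  rcases ht.eq_or_lt with rfl | ht
  · have h := hasSum_single (f := {x | InDilate T v 0 x}.indicator w) 0
      fun x hx => Set.indicator_of_notMem
        (show x ∉ {x | InDilate T v 0 x} from fun h => hx (eq_zero_of_inDilate_zero h)) _
    rwa [Set.indicator_of_mem (show (0 : Fin d → ℤ) ∈ {x | InDilate T v 0 x} from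
      inDilate_zero_zero), ← hfg] at h
  · exact hsum t ht

lemma IsStepPoly1.mono {k l : ℕ} (h : k ≤ l) {f : ℝ → ℝ} (hf : IsStepPoly1 k f) :
    IsStepPoly1 l f := by
  obtain ⟨n, coef, L, hL, hfL⟩ := hf
  exact ⟨n, coef, L, fun i => (hL i).trans h, hfL⟩

lemma IsStepPoly1.add {k : ℕ} {f g : ℝ → ℝ} (hf : IsStepPoly1 k f) (hg : IsStepPoly1 k g) :
    IsStepPoly1 k (f + g) := by
  obtain ⟨n, coef, L, hL, hfL⟩ := hf
  obtain ⟨n', coef', L', hL', hgL⟩ := hg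
  refine ⟨n + n', Fin.append coef coef', Fin.append L L', fun i => ?_, fun t => ?_⟩
  · refine Fin.addCases (fun i => ?_) (fun i => ?_) i
    · rw [Fin.append_left]
      exact hL i
    · rw [Fin.append_right]
      exact hL' i
  · simp only [Pi.add_apply, hfL, hgL, Fin.sum_univ_add, Fin.append_left, Fin.append_right]

/-- The step-polynomials of degree at most `k` that are periodic with period `q`. -/
def periodicStep (q k : ℕ) : Submodule ℝ (ℝ → ℝ) where
  carrier := {f | IsStepPoly1 k f ∧ ∀ t, f (t + q) = f t}
  zero_mem' := ⟨⟨0, ![], ![], fun i => i.elim0, fun t => by simp⟩, fun _ => rfl⟩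
  add_mem' hf hg := ⟨hf.1.add hg.1, fun t => by simp [hf.2, hg.2]⟩
  smul_mem' := by
    rintro c f ⟨⟨n, coef, L, hL, hfL⟩, hper⟩
    refine ⟨⟨n, fun i => c * coef i, L, hL, fun t => ?_⟩, fun t => by simp [hper]⟩
    simp only [Pi.smul_apply, smul_eq_mul, hfL, Finset.mul_sum, mul_assoc]

lemma periodicStep_mono (q : ℕ) {k l : ℕ} (h : k ≤ l) : periodicStep q k ≤ periodicStep q l :=
  fun _ hf => ⟨hf.1.mono h, hf.2⟩

lemma one_mem_periodicStep (q k : ℕ) : (1 : ℝ → ℝ) ∈ periodicStep q k :=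
  ⟨⟨1, fun _ => 1, fun _ => [], fun _ => by simp, fun t => by simp⟩, fun _ => rfl⟩

lemma fract_mul_mem_periodicStep {q k : ℕ} (hq : 0 < q) (c : ℤ) {f : ℝ → ℝ}
    (hf : f ∈ periodicStep q k) :
    (fun t => Int.fract ((c : ℝ) * (t / q)) * f t) ∈ periodicStep q (k + 1) := by
  have hq' : (q : ℝ) ≠ 0 := by exact_mod_cast hq.ne'
  obtain ⟨⟨n, coef, L, hL, hfL⟩, hper⟩ := hf
  refine ⟨⟨n, coef, fun i => ((c : ℚ) / q) :: L i, fun i => by simpa using hL i, fun t => ?_⟩,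
    fun t => ?_⟩
  · dsimp only
    rw [hfL, Finset.mul_sum]
    refine Finset.sum_congr rfl fun i _ => ?_
    simp only [List.bind_eq_flatMap, List.flatMap_cons, List.pure_def, List.cons_append,
      List.nil_append, List.map_cons, List.prod_cons]
    push_cast
    rw [show (c : ℝ) * (t / q) = c / q * t by ring]
    ring
  · dsimp only
    rw [hper, show (c : ℝ) * ((t + q) / q) = c * (t / q) + c by field_simp,
      Int.fract_add_intCast]

lemma exists_periodicStep_of_mem_stepPow {q k : ℕ} (hq : 0 < q) {f : ℝ → ℝ}
    (hf : f ∈ stepPow k) :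
    ∃ E : ℕ → ℝ → ℝ, (∀ r ≤ k, E r ∈ periodicStep q (k - r)) ∧
      ∀ t, f (t / q) = ∑ r ∈ Finset.range (k + 1), E r t * t ^ r := by
  refine Submodule.pow_induction_on_left' (Submodule.span ℝ stepGen)
    (C := fun k f _ => ∃ E : ℕ → ℝ → ℝ, (∀ r ≤ k, E r ∈ periodicStep q (k - r)) ∧
      ∀ t, f (t / q) = ∑ r ∈ Finset.range (k + 1), E r t * t ^ r) ?_ ?_ ?_ hf
  · intro c
    exact ⟨fun _ => c • 1, fun r _ => Submodule.smul_mem _ c (one_mem_periodicStep q _),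
      fun t => by simp⟩
  · rintro x y i _ _ ⟨E, hE, h⟩ ⟨E', hE', h'⟩
    refine ⟨E + E', fun r hr => add_mem (hE r hr) (hE' r hr), fun t => ?_⟩
    simp only [Pi.add_apply, h, h', add_mul, Finset.sum_add_distrib]
  · rintro m hm i x _ ⟨E, hE, h⟩
    induction hm using Submodule.span_induction with
    | mem m hm =>
      rcases hm with rfl | rfl | ⟨c, rfl⟩
      · refine ⟨fun r => if r ≤ i then E r else 0, fun r _ => ?_, fun t => ?_⟩
        · dsimp only
          split_ifs with hr
          · exact periodicStep_mono q (by omega) (hE r hr)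
          · exact zero_mem _
        · dsimp only
          rw [Finset.sum_range_succ, if_neg i.not_succ_le_self, one_mul, h]
          rw [Pi.zero_apply, zero_mul, add_zero]
          exact Finset.sum_congr rfl fun r hr => by
            rw [if_pos (Nat.lt_succ_iff.1 (Finset.mem_range.1 hr))]
      · refine ⟨fun r => r.casesOn 0 fun r => (q : ℝ)⁻¹ • E r, fun r hr => ?_, fun t => ?_⟩
        · cases r with
          | zero => exact zero_mem _
          | succ r =>
            rw [Nat.succ_sub_succ]
            exact Submodule.smul_mem _ _ (hE r (by omega))
        · rw [Finset.sum_range_succ', Pi.mul_apply, h, Finset.mul_sum]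
          change _ = ∑ r ∈ Finset.range (i + 1), ((q : ℝ)⁻¹ * E r t) * t ^ (r + 1) + 0 * t ^ 0
          rw [zero_mul, add_zero]
          exact Finset.sum_congr rfl fun r _ => by rw [id_eq, pow_succ]; ring
      · refine ⟨fun r => if r ≤ i then fun t => Int.fract ((c : ℝ) * (t / q)) * E r t else 0,
          fun r _ => ?_, fun t => ?_⟩
        · dsimp only
          split_ifs with hr
          · rw [Nat.succ_sub hr]
            exact fract_mul_mem_periodicStep hq c (hE r hr)
          · exact zero_mem _
        · dsimp only
          rw [Finset.sum_range_succ, if_neg i.not_succ_le_self, Pi.mul_apply, h, Finset.mul_sum]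
          rw [Pi.zero_apply, zero_mul, add_zero]
          exact Finset.sum_congr rfl fun r hr => by
            rw [if_pos (Nat.lt_succ_iff.1 (Finset.mem_range.1 hr)), mul_assoc]
    | zero => exact ⟨0, fun r _ => zero_mem _, fun t => by simp⟩
    | add a b _ _ ha hb =>
      obtain ⟨E₁, hE₁, h₁⟩ := ha
      obtain ⟨E₂, hE₂, h₂⟩ := hb
      refine ⟨E₁ + E₂, fun r hr => add_mem (hE₁ r hr) (hE₂ r hr), fun t => ?_⟩
      rw [add_mul, Pi.add_apply, h₁, h₂]
      simp only [Pi.add_apply, add_mul, Finset.sum_add_distrib]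
    | smul c a _ ha =>
      obtain ⟨E₁, hE₁, h₁⟩ := ha
      refine ⟨c • E₁, fun r hr => Submodule.smul_mem _ c (hE₁ r hr), fun t => ?_⟩
      rw [smul_mul_assoc, Pi.smul_apply, h₁]
      simp only [Pi.smul_apply, smul_eq_mul, Finset.mul_sum, mul_assoc]

/-- Membership in the dilate of a rational polytope, in terms of an integral multiple of it. -/
lemma mem_smul_convexHull_iff_inDilate {d q : ℕ} (hq : 0 < q) {S : Finset (Fin d → ℚ)}
    (hS : S.Nonempty) {v : (Fin d → ℚ) → Fin d → ℤ}
    (hv : ∀ s ∈ S, ∀ i, (q : ℚ) * s i = v s i) {t : ℝ} (ht : 0 ≤ t) (x : Fin d → ℤ) :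
    (fun i => (x i : ℝ)) ∈ t • convexHull ℝ ((fun (s : Fin d → ℚ) => fun i => (s i : ℝ)) '' ↑S) ↔
      InDilate S v (t / q) x := by
  classical
  have hq' : (0 : ℝ) < q := by exact_mod_cast hq
  have hv' : ∀ s ∈ S, ∀ i, (v s i : ℝ) = q * (s i : ℝ) := fun s hs i => by
    exact_mod_cast (hv s hs i).symm
  constructor
  · rintro ⟨p, hp, hpx⟩
    obtain ⟨w, hw, hw1, hwp⟩ : ∃ w : (Fin d → ℚ) → ℝ, (∀ s ∈ S, 0 ≤ w s) ∧ ∑ s ∈ S, w s = 1 ∧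
        ∑ s ∈ S, w s • (fun i => (s i : ℝ)) = p := by
      rw [← Finset.coe_image, Finset.mem_convexHull'] at hp
      obtain ⟨w, hw, hw1, hwp⟩ := hp
      have hinj : Function.Injective fun (s : Fin d → ℚ) (i : Fin d) => (s i : ℝ) :=
        fun s s' h => funext fun i => Rat.cast_injective (congrFun h i)
      rw [Finset.sum_image fun _ _ _ _ h => hinj h] at hw1 hwp
      exact ⟨fun s => w fun i => (s i : ℝ),
        fun s hs => hw _ (Finset.mem_image_of_mem _ hs), hw1, hwp⟩
    refine ⟨fun s => t / q * w s, fun s hs => mul_nonneg (by positivity) (hw s hs), ?_,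
      fun j => ?_⟩
    · rw [← Finset.mul_sum, hw1, mul_one]
    · have hj := congrFun hpx j
      dsimp only at hj
      rw [← hj, ← hwp, Pi.smul_apply, Finset.sum_apply, Finset.smul_sum]
      refine Finset.sum_congr rfl fun s hs => ?_
      rw [hv' s hs, Pi.smul_apply, smul_eq_mul, smul_eq_mul]
      field_simp
  · intro hx
    rcases ht.eq_or_lt with rfl | ht
    · rw [zero_div] at hx
      rw [eq_zero_of_inDilate_zero hx, Set.zero_smul_set (hS.to_set.image _).convexHull]
      simp [Pi.zero_def]
    · obtain ⟨w, hw, hwt, hwx⟩ := hx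
      refine ⟨∑ s ∈ S, (q / t * w s) • (fun i => (s i : ℝ)), ?_, ?_⟩
      · refine (convex_convexHull ℝ _).sum_mem
          (fun s hs => mul_nonneg (by positivity) (hw s hs)) ?_
          fun s hs => subset_convexHull ℝ _ ⟨s, hs, rfl⟩
        rw [← Finset.mul_sum, hwt]
        field_simp
      · funext j
        rw [← hwx]
        dsimp only
        rw [Pi.smul_apply, Finset.sum_apply, Finset.smul_sum]
        refine Finset.sum_congr rfl fun s hs => ?_
        rw [hv' s hs, Pi.smul_apply, smul_eq_mul, smul_eq_mul]
        field_simp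

theorem stmt_1
    (d m : ℕ)
    -- P = conv(S), S a finite set of rational points
    (S : Finset (Fin d → ℚ))
    (P : Set (Fin d → ℝ))
    (hP : P = convexHull ℝ ((fun (s : Fin d → ℚ) => fun i => (s i : ℝ)) '' ↑S))
    -- q a positive integer with q·s integral for all s ∈ S
    (q : ℕ) (hq : 0 < q)
    (hSq : ∀ s ∈ S, ∀ i, ∃ z : ℤ, (q : ℚ) * s i = z)
    -- h a polynomial of total degree at most m
    (h : MvPolynomial (Fin d) ℝ) (hh : h.totalDegree ≤ m) :
    ∃ E : ℕ → ℝ → ℝ,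
      -- (a) each E r is a step-polynomial of step degree at most d + m - r
      (∀ r ≤ d + m, IsStepPoly1 (d + m - r) (E r)) ∧
      -- (b) each E r is periodic with period q
      (∀ r ≤ d + m, ∀ t : ℝ, E r (t + q) = E r t) ∧
      -- (c) the weighted Ehrhart quasi-polynomial formula
      (∀ t : ℝ, 0 ≤ t →
        (∑ᶠ x ∈ {x : Fin d → ℤ | (fun i => (x i : ℝ)) ∈ t • P},
          MvPolynomial.eval (fun i => (x i : ℝ)) h) =
        ∑ r ∈ Finset.range (d + m + 1), E r t * t ^ r) := by
  subst hP
  rcases S.eq_empty_or_nonempty with rfl | hS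
  · exact ⟨0, fun r _ => (zero_mem (periodicStep q _)).1, fun r _ t => rfl, fun t _ => by simp⟩
  have hv : ∀ s : Fin d → ℚ, ∃ v : Fin d → ℤ, s ∈ S → ∀ i, (q : ℚ) * s i = v i := fun s => by
    by_cases hs : s ∈ S
    · choose z hz using hSq s hs
      exact ⟨z, fun _ => hz⟩
    · exact ⟨0, fun h => absurd h hs⟩
  choose v hv using hv
  obtain ⟨f, hf, hsum⟩ := exists_stepPow_hasSum_of_nonempty hS v (eval_mem_affineWeights_pow hh)
  obtain ⟨E, hE, hfE⟩ := exists_periodicStep_of_mem_stepPow hq hf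
  refine ⟨E, fun r hr => (hE r hr).1, fun r hr => (hE r hr).2, fun t ht => ?_⟩
  have htq : 0 ≤ t / q := by positivity
  obtain ⟨X, hX⟩ := exists_finset_forall_inDilate_mem S v (t / q)
  simp only [mem_smul_convexHull_iff_inDilate hq hS hv ht]
  rw [← hfE, finsum_mem_def]
  have hsupp : ∀ x ∉ X, {x | InDilate S v (t / q) x}.indicator
      (fun x : Fin d → ℤ => MvPolynomial.eval (fun i => (x i : ℝ)) h) x = 0 := fun x hx =>
    Set.indicator_of_notMem (show x ∉ {x | InDilate S v (t / q) x} from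
      fun hmem => hx (hX _ le_rfl x hmem)) _
  rw [finsum_eq_sum_of_support_subset _ (s := X) fun x hx => by
    by_contra hxX
    exact hx (hsupp x hxX)]
  exact (hasSum_sum_of_ne_finset_zero hsupp).unique (hsum _ htq)
end

section
/- Let P_1, …, P_q ⊆ ℝ^d be polytopes with rational vertices, i.e., P_i = conv(S_i) for finite sets S_i ⊆ ℚ^d. Then there exist a finite set Ψ ⊆ ℚ^q and a function E : ℝ^q → ℝ belonging to the ℝ-algebra of functions on ℝ^q generated by the coordinate functions t ↦ t_i together with the functions t ↦ {⟨η, t⟩} for η ∈ Ψ, such that for all t = (t_1, …, t_q) with t_i ≥ 0 for every i, the number of lattice points in the Minkowski sum satisfies #(ℤ^d ∩ (t_1·P_1 + t_2·P_2 + ⋯ + t_q·P_q)) = E(t), where t_i·P_i = {t_i·p : p ∈ P_i} and + denotes Minkowski sum of sets. -/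
open Pointwise

open Classical in
theorem ite_sub_ite_eq {A B C D : Prop} (hBA : B → A) (hCA : C → A) (hA : A → B ∨ C)
    (hBC : B → C → D) (hD : D → B ∧ C) :
    (if A then (1 : ℝ) else 0) - (if B then 1 else 0) =
      (if C then 1 else 0) - (if D then 1 else 0) := by
  by_cases B <;> by_cases C <;> simp_all

open Classical in
/-- Inclusion-exclusion for the Euler characteristic of a compact convex set covered by finitely
many closed half-spaces. -/
theorem sum_powerset_nonempty_eq_zero_of_cover {V ι : Type*} [AddCommGroup V] [Module ℝ V]
    [TopologicalSpace V] (φ : ι → V →L[ℝ] ℝ) (c : ι → ℝ) (I : Finset ι) (K : Set V)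
    (hK : IsCompact K) (hconv : Convex ℝ K) (hcov : ∀ x ∈ K, ∃ i ∈ I, c i ≤ φ i x) :
    ∑ T ∈ I.powerset, (-1 : ℝ) ^ T.card *
      (if ∃ x ∈ K, ∀ i ∈ T, c i ≤ φ i x then 1 else 0) = 0 := by
  induction I using Finset.induction_on generalizing K with
  | empty =>
    have : ¬ ∃ x, x ∈ K := fun ⟨x, hx⟩ => by simpa using hcov x hx
    simp [this]
  | insert a I ha ih =>
    -- lowering the threshold of the last half-space slightly does not create intersections
    have hpert : ∀ᶠ r in nhdsWithin (c a) (Set.Iio (c a)), ∀ T ∈ I.powerset,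
        (∃ x ∈ K, (∀ i ∈ T, c i ≤ φ i x) ∧ r ≤ φ a x) →
          ∃ x ∈ K, (∀ i ∈ T, c i ≤ φ i x) ∧ c a ≤ φ a x := by
      rw [Filter.eventually_all_finset]
      intro T _
      have hcl : IsClosed {x | ∀ i ∈ T, c i ≤ φ i x} := by
        simp only [Set.ofPred_forall]
        exact isClosed_biInter fun i _ => isClosed_le continuous_const (φ i).continuous
      have hcomp := hK.inter_right hcl
      rcases (K ∩ {x | ∀ i ∈ T, c i ≤ φ i x}).eq_empty_or_nonempty with he | hne
      · refine Filter.Eventually.of_forall fun r => ?_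
        rintro ⟨x, hx, hT, -⟩
        exact absurd (show x ∈ K ∩ {x | ∀ i ∈ T, c i ≤ φ i x} from ⟨hx, hT⟩) (by simp [he])
      · obtain ⟨y, hy, hmax⟩ := hcomp.exists_isMaxOn hne (φ a).continuous.continuousOn
        by_cases h : c a ≤ φ a y
        · exact Filter.Eventually.of_forall fun r _ => ⟨y, hy.1, hy.2, h⟩
        · filter_upwards [Ioo_mem_nhdsLT (not_le.1 h)] with r hr
          rintro ⟨x, hx, hT, hrx⟩
          exact absurd (hrx.trans (hmax (show x ∈ _ from ⟨hx, hT⟩))) (not_le.2 hr.1)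
    obtain ⟨r, hr, hlt⟩ := (hpert.and self_mem_nhdsWithin).exists
    have hlt' : r < c a := hlt
    have hcov' : ∀ x ∈ K, φ a x ≤ r → ∃ i ∈ I, c i ≤ φ i x := by
      intro x hx hxr
      obtain ⟨i, hi, hix⟩ := hcov x hx
      rcases Finset.mem_insert.1 hi with rfl | hi
      · linarith
      · exact ⟨i, hi, hix⟩
    have hlow := ih (K ∩ {x | φ a x ≤ r})
      (hK.inter_right (isClosed_le (φ a).continuous continuous_const))
      (hconv.inter (convex_halfSpace_le (φ a).toLinearMap.isLinear r))
      (fun x hx => hcov' x hx.1 hx.2)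
    have heq := ih (K ∩ {x | φ a x = r})
      (hK.inter_right (isClosed_eq (φ a).continuous continuous_const))
      (hconv.inter (convex_hyperplane (φ a).toLinearMap.isLinear r))
      (fun x hx => hcov' x hx.1 (le_of_eq hx.2))
    refine Eq.trans ?_ ((congrArg₂ (· - ·) hlow heq).trans (sub_zero 0))
    rw [Finset.sum_powerset_insert ha, ← Finset.sum_add_distrib, ← Finset.sum_sub_distrib]
    refine Finset.sum_congr rfl fun T hT => ?_
    have haT : a ∉ T := fun h => ha (Finset.mem_powerset.1 hT h)
    have hins : (∃ x ∈ K, ∀ i ∈ insert a T, c i ≤ φ i x) ↔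
        ∃ x ∈ K, (∀ i ∈ T, c i ≤ φ i x) ∧ r ≤ φ a x := by
      simp only [Finset.forall_mem_insert]
      refine ⟨fun ⟨x, hx, h1, h2⟩ => ⟨x, hx, h2, hlt'.le.trans h1⟩, fun h => ?_⟩
      obtain ⟨x, hx, h1, h2⟩ := hr T hT h
      exact ⟨x, hx, h2, h1⟩
    have hcut : (∃ x ∈ K, (∀ i ∈ T, c i ≤ φ i x) ∧ r ≤ φ a x) →
        (∃ x ∈ K ∩ {x | φ a x ≤ r}, ∀ i ∈ T, c i ≤ φ i x) →
        ∃ x ∈ K ∩ {x | φ a x = r}, ∀ i ∈ T, c i ≤ φ i x := by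
      rintro ⟨x, hx, hxT, hxr⟩ ⟨y, ⟨hy, hyr⟩, hyT⟩
      have hseg : r ∈ (φ a).toLinearMap.toAffineMap '' segment ℝ y x := by
        rw [image_segment]
        exact Icc_subset_segment (𝕜 := ℝ) (show r ∈ Set.Icc (φ a y) (φ a x) from ⟨hyr, hxr⟩)
      obtain ⟨z, hz, hzr⟩ := hseg
      refine ⟨z, ⟨hconv.segment_subset hy hx hz, hzr⟩, fun i hi => ?_⟩
      exact (convex_halfSpace_ge (φ i).toLinearMap.isLinear (c i)).segment_subset
        (hyT i hi) (hxT i hi) hz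
    have hup : (∃ x ∈ K, (∀ i ∈ T, c i ≤ φ i x) ∧ r ≤ φ a x) →
        ∃ x ∈ K, ∀ i ∈ T, c i ≤ φ i x := fun ⟨x, hx, h, _⟩ => ⟨x, hx, h⟩
    have hdown : (∃ x ∈ K ∩ {x | φ a x ≤ r}, ∀ i ∈ T, c i ≤ φ i x) →
        ∃ x ∈ K, ∀ i ∈ T, c i ≤ φ i x := fun ⟨x, hx, h⟩ => ⟨x, hx.1, h⟩
    have hcover : (∃ x ∈ K, ∀ i ∈ T, c i ≤ φ i x) →
        (∃ x ∈ K, (∀ i ∈ T, c i ≤ φ i x) ∧ r ≤ φ a x) ∨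
          ∃ x ∈ K ∩ {x | φ a x ≤ r}, ∀ i ∈ T, c i ≤ φ i x := by
      rintro ⟨x, hx, h⟩
      rcases le_total r (φ a x) with h' | h'
      · exact Or.inl ⟨x, hx, h, h'⟩
      · exact Or.inr ⟨x, ⟨hx, h'⟩, h⟩
    have hmid : (∃ x ∈ K ∩ {x | φ a x = r}, ∀ i ∈ T, c i ≤ φ i x) →
        (∃ x ∈ K, (∀ i ∈ T, c i ≤ φ i x) ∧ r ≤ φ a x) ∧
          ∃ x ∈ K ∩ {x | φ a x ≤ r}, ∀ i ∈ T, c i ≤ φ i x :=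
      fun ⟨x, hx, h⟩ => ⟨⟨x, hx.1, h, hx.2.ge⟩, ⟨x, ⟨hx.1, hx.2.le⟩, h⟩⟩
    rw [Finset.card_insert_of_notMem haT, pow_succ, if_congr hins rfl rfl]
    linear_combination (-1 : ℝ) ^ T.card * ite_sub_ite_eq hup hdown hcover hcut hmid

/-- A finitely generated rational cone is cut out by finitely many rational inequalities. -/
theorem exists_rational_inequalities {ι κ : Type*} [Fintype κ] (g : ι → κ → ℚ) (s : Finset ι) :
    ∃ L : Finset (κ → ℚ), ∀ z : κ → ℝ,
      (∃ l : ι → ℝ, (∀ a ∈ s, 0 ≤ l a) ∧ ∀ c, ∑ a ∈ s, l a * (g a c : ℝ) = z c) ↔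
        ∀ ℓ ∈ L, 0 ≤ ∑ c, (ℓ c : ℝ) * z c := by
  classical
  induction s using Finset.induction_on with
  | empty =>
    refine ⟨Finset.univ.image (fun c => Pi.single c 1) ∪
      Finset.univ.image (fun c => Pi.single c (-1)), fun z => ?_⟩
    simp only [Finset.notMem_empty, false_imp_iff, implies_true, Finset.sum_empty, true_and,
      exists_const, Finset.mem_union, Finset.mem_image, Finset.mem_univ, or_imp, forall_and,
      forall_exists_index, forall_apply_eq_imp_iff]
    have h : ∀ (c : κ) (r : ℚ), ∑ x, ((Pi.single c r : κ → ℚ) x : ℝ) * z x = r * z c := by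
      intro c r
      rw [Finset.sum_eq_single c] <;> simp +contextual
    simp only [h]
    constructor
    · intro hz
      simp [← hz]
    · rintro ⟨h1, h2⟩ c
      have := h1 c
      have := h2 c
      push_cast at *
      linarith
  | insert b s hb ih =>
    obtain ⟨L, hL⟩ := ih
    let ev : (κ → ℚ) → ℚ := fun ℓ => ∑ c, ℓ c * g b c
    let rl : (κ → ℚ) → (κ → ℝ) → ℝ := fun ℓ z => ∑ c, (ℓ c : ℝ) * z c
    have key : ∀ z : κ → ℝ, (∃ l : ι → ℝ, (∀ a ∈ insert b s, 0 ≤ l a) ∧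
        ∀ c, ∑ a ∈ insert b s, l a * (g a c : ℝ) = z c) ↔
        ∃ y : ℝ, 0 ≤ y ∧ ∀ ℓ ∈ L, 0 ≤ rl ℓ z - y * (ev ℓ : ℝ) := by
      intro z
      have hlin : ∀ (y : ℝ) (ℓ : κ → ℚ),
          ∑ c, (ℓ c : ℝ) * (z c - y * g b c) = rl ℓ z - y * (ev ℓ : ℝ) := by
        intro y ℓ
        simp only [rl, ev, Rat.cast_sum, Rat.cast_mul, Finset.mul_sum, ← Finset.sum_sub_distrib]
        exact Finset.sum_congr rfl fun c _ => by ring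
      constructor
      · rintro ⟨l, hl, hz⟩
        refine ⟨l b, hl b (Finset.mem_insert_self _ _), fun ℓ hℓ => ?_⟩
        rw [← hlin]
        refine (hL fun c => z c - l b * g b c).1
          ⟨l, fun a ha => hl a (Finset.mem_insert_of_mem ha), fun c => ?_⟩ ℓ hℓ
        rw [← hz c, Finset.sum_insert hb]
        ring
      · rintro ⟨y, hy, hyL⟩
        obtain ⟨l, hl, hz⟩ := (hL fun c => z c - y * g b c).2
          (fun ℓ hℓ => by rw [hlin]; exact hyL ℓ hℓ)
        have hne : ∀ a ∈ s, a ≠ b := fun a ha h => hb (h ▸ ha)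
        refine ⟨Function.update l b y, fun a ha => ?_, fun c => ?_⟩
        · rcases Finset.mem_insert.1 ha with rfl | ha
          · simpa using hy
          · simpa [hne a ha] using hl a ha
        · rw [Finset.sum_insert hb, Function.update_self,
            Finset.sum_congr rfl (fun a ha => by rw [Function.update_of_ne (hne a ha)]), hz c]
          ring
    refine ⟨L.filter (fun ℓ => 0 ≤ ev ℓ) ∪
      ((L.filter fun ℓ => 0 < ev ℓ) ×ˢ (L.filter fun ℓ => ev ℓ < 0)).image
        (fun p c => ev p.1 * p.2 c - ev p.2 * p.1 c), fun z => ?_⟩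
    have hcomb : ∀ ℓ ℓ' : κ → ℚ,
        ∑ c, ((ev ℓ * ℓ' c - ev ℓ' * ℓ c : ℚ) : ℝ) * z c = ev ℓ * rl ℓ' z - ev ℓ' * rl ℓ z := by
      intro ℓ ℓ'
      simp only [rl, Finset.mul_sum, ← Finset.sum_sub_distrib]
      refine Finset.sum_congr rfl fun c _ => ?_
      push_cast
      ring
    rw [key z]
    constructor
    · rintro ⟨y, hy, hyL⟩ ℓ hℓ
      rcases Finset.mem_union.1 hℓ with hℓ | hℓ
      · obtain ⟨hℓL, hpos⟩ := Finset.mem_filter.1 hℓ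
        have h1 := hyL ℓ hℓL
        have h2 : (0 : ℝ) ≤ ev ℓ := by exact_mod_cast hpos
        have h3 := mul_nonneg hy h2
        change 0 ≤ rl ℓ z
        linarith
      · obtain ⟨⟨p, p'⟩, hp, rfl⟩ := Finset.mem_image.1 hℓ
        simp only [Finset.mem_product, Finset.mem_filter] at hp
        rw [hcomb]
        have h1 : (0 : ℝ) < ev p := by exact_mod_cast hp.1.2
        have h2 : (ev p' : ℝ) < 0 := by exact_mod_cast hp.2.2
        nlinarith [mul_nonneg h1.le (hyL p' hp.2.1), mul_nonneg (neg_nonneg.2 h2.le) (hyL p hp.1.1)]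
    · intro h
      have hpair : ∀ ℓ ∈ L, ∀ ℓ' ∈ L, 0 < ev ℓ → ev ℓ' < 0 →
          0 ≤ (ev ℓ : ℝ) * rl ℓ' z - ev ℓ' * rl ℓ z := by
        intro ℓ hℓ ℓ' hℓ' h1 h2
        rw [← hcomb]
        refine h _ (Finset.mem_union_right _ (Finset.mem_image.2 ⟨(ℓ, ℓ'), ?_, rfl⟩))
        simp [hℓ, hℓ', h1, h2]
      have hnn : ∀ ℓ ∈ L, 0 ≤ ev ℓ → 0 ≤ rl ℓ z := fun ℓ hℓ h1 =>
        h _ (Finset.mem_union_left _ (Finset.mem_filter.2 ⟨hℓ, h1⟩))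
      -- the smallest admissible value of the new coefficient
      let lower : Finset ℝ := insert 0 ((L.filter fun ℓ => ev ℓ < 0).image fun ℓ => rl ℓ z / ev ℓ)
      have hlow : lower.Nonempty := Finset.insert_nonempty _ _
      refine ⟨lower.max' hlow, Finset.le_max' _ _ (Finset.mem_insert_self _ _), fun ℓ hℓ => ?_⟩
      rcases lt_trichotomy (ev ℓ) 0 with hneg | hzero | hpos
      · have h1 : rl ℓ z / ev ℓ ≤ lower.max' hlow := Finset.le_max' lower _
          (Finset.mem_insert_of_mem
            (Finset.mem_image_of_mem _ (Finset.mem_filter.2 ⟨hℓ, hneg⟩)))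
        have h2 : (ev ℓ : ℝ) < 0 := by exact_mod_cast hneg
        rw [div_le_iff_of_neg h2] at h1
        linarith
      · rw [hzero]
        simpa using hnn ℓ hℓ hzero.ge
      · have h2 : (0 : ℝ) < ev ℓ := by exact_mod_cast hpos
        rw [sub_nonneg, ← le_div_iff₀ h2]
        refine Finset.max'_le _ _ _ fun r hr => ?_
        rcases Finset.mem_insert.1 hr with rfl | hr
        · exact div_nonneg (hnn ℓ hℓ hpos.le) h2.le
        · obtain ⟨ℓ', hℓ', rfl⟩ := Finset.mem_image.1 hr
          simp only [Finset.mem_filter] at hℓ'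
          have h3 : (ev ℓ' : ℝ) < 0 := by exact_mod_cast hℓ'.2
          rw [div_le_iff_of_neg h3, div_mul_eq_mul_div, div_le_iff₀ h2]
          linarith [hpair ℓ hℓ ℓ' hℓ'.1 hpos hℓ'.2]

/-- Finitely many rational numbers have a common denominator. -/
theorem exists_common_denominator {α : Type*} (s : Finset α) (f : α → ℚ) :
    ∃ N : ℕ, 0 < N ∧ ∀ a ∈ s, ∃ z : ℤ, (N : ℚ) * f a = z := by
  refine ⟨∏ a ∈ s, (f a).den, Finset.prod_pos fun a _ => (f a).den_pos, fun a ha => ?_⟩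
  obtain ⟨k, hk⟩ := Finset.dvd_prod_of_mem (fun a => (f a).den) ha
  refine ⟨k * (f a).num, ?_⟩
  rw [hk]
  push_cast
  rw [mul_comm ((f a).den : ℚ), mul_assoc, Rat.den_mul_eq_num]

/-- A finitely generated rational cone is cut out by finitely many integral inequalities. -/
theorem exists_integral_inequalities {ι κ : Type*} [Fintype ι] [Fintype κ] (g : ι → κ → ℚ) :
    ∃ L : Finset (κ → ℤ), ∀ z : κ → ℝ,
      (∃ l : ι → ℝ, (∀ a, 0 ≤ l a) ∧ ∀ c, ∑ a, l a * (g a c : ℝ) = z c) ↔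
        ∀ ℓ ∈ L, 0 ≤ ∑ c, (ℓ c : ℝ) * z c := by
  classical
  obtain ⟨L, hL⟩ := exists_rational_inequalities g Finset.univ
  obtain ⟨N, hN, hden⟩ := exists_common_denominator (L ×ˢ (Finset.univ : Finset κ))
    (fun p => p.1 p.2)
  have hscale : ∀ ℓ ∈ L, ∀ c, (((⌊(N : ℚ) * ℓ c⌋ : ℤ) : ℝ)) = N * (ℓ c : ℝ) := by
    intro ℓ hℓ c
    obtain ⟨z, hz⟩ := hden (ℓ, c) (by simp [hℓ])
    rw [hz, Int.floor_intCast]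
    exact_mod_cast hz.symm
  refine ⟨L.image fun ℓ c => ⌊(N : ℚ) * ℓ c⌋, fun z => ?_⟩
  have hL' := hL z
  simp only [Finset.mem_univ, true_imp_iff] at hL'
  rw [hL', Finset.forall_mem_image]
  refine forall₂_congr fun ℓ hℓ => ?_
  have : ∑ c, ((⌊(N : ℚ) * ℓ c⌋ : ℤ) : ℝ) * z c = N * ∑ c, (ℓ c : ℝ) * z c := by
    rw [Finset.mul_sum]
    exact Finset.sum_congr rfl fun c _ => by rw [hscale ℓ hℓ c, mul_assoc]
  rw [this, mul_nonneg_iff_of_pos_left (by exact_mod_cast hN)]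

section WeightedCombinations

variable {ι : Type*} [Fintype ι] {q d : ℕ}

/-- `x` is a nonnegative combination of the points `w a` in which the points of the `i`-th class
(those with `π a = i`) have total weight `t i`. -/
def IsWeightedCombination (π : ι → Fin q) (w : ι → Fin d → ℚ) (t : Fin q → ℝ)
    (x : Fin d → ℝ) : Prop :=
  ∃ l : ι → ℝ, (∀ a, 0 ≤ l a) ∧ (∀ i, ∑ a with π a = i, l a = t i) ∧
    ∀ c, ∑ a, l a * (w a c : ℝ) = x c

/-- The integral points that are weighted combinations with weights `t`. -/
def latticePoints (π : ι → Fin q) (w : ι → Fin d → ℚ) (t : Fin q → ℝ) : Set (Fin d → ℤ) :=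
  {x | IsWeightedCombination π w t fun c => (x c : ℝ)}

theorem sum_class_sum (π : ι → Fin q) (l : ι → ℝ) :
    ∑ i, ∑ a with π a = i, l a = ∑ a, l a :=
  Finset.sum_fiberwise _ _ _

theorem isWeightedCombination_iff_inequalities (π : ι → Fin q) (w : ι → Fin d → ℚ) :
    ∃ L : Finset (Fin q ⊕ Fin d → ℤ), ∀ (t : Fin q → ℝ) (x : Fin d → ℝ),
      IsWeightedCombination π w t x ↔
        ∀ ℓ ∈ L, 0 ≤ ∑ i, (ℓ (Sum.inl i) : ℝ) * t i + ∑ c, (ℓ (Sum.inr c) : ℝ) * x c := by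
  obtain ⟨L, hL⟩ := exists_integral_inequalities
    (fun a : ι => Sum.elim (fun i => if π a = i then (1 : ℚ) else 0) (w a))
  refine ⟨L, fun t x => ?_⟩
  have := hL (Sum.elim t x)
  simp only [Fintype.sum_sum_type, Sum.elim_inl, Sum.elim_inr, Sum.forall] at this
  rw [← this, IsWeightedCombination]
  refine exists_congr fun l => and_congr_right fun _ => and_congr_left fun _ =>
    forall_congr' fun i => ?_
  rw [Finset.sum_filter]
  simp only [apply_ite (Rat.cast : ℚ → ℝ), Rat.cast_one, Rat.cast_zero, mul_ite, mul_one, mul_zero]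

theorem finite_bounded_latticePoints (π : ι → Fin q) (w : ι → Fin d → ℚ) (R : ℝ) :
    {x : Fin d → ℤ | ∃ t : Fin q → ℝ, (∀ i, t i ≤ R) ∧ x ∈ latticePoints π w t}.Finite := by
  have hW : ∃ W : ℝ, ∀ a c, |(w a c : ℝ)| ≤ W := by
    obtain ⟨W, hW⟩ := (Set.finite_range fun p : ι × Fin d => |(w p.1 p.2 : ℝ)|).bddAbove
    exact ⟨W, fun a c => hW ⟨(a, c), rfl⟩⟩
  obtain ⟨W, hW⟩ := hW
  refine (Set.finite_Icc (fun _ : Fin d => -⌈(q * R) * max W 0⌉)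
    (fun _ => ⌈(q * R) * max W 0⌉)).subset ?_
  rintro x ⟨t, ht, l, hl, hlt, hx⟩
  have hmass : ∑ a, l a ≤ q * R := by
    rw [← sum_class_sum π l]
    refine (Finset.sum_le_card_nsmul _ _ R fun i _ => by rw [hlt i]; exact ht i).trans ?_
    simp
  have hbd : ∀ c, |(x c : ℝ)| ≤ (q * R) * max W 0 := by
    intro c
    have hxc : ∑ a, l a * (w a c : ℝ) = x c := hx c
    rw [← hxc]
    calc |∑ a, l a * (w a c : ℝ)| ≤ ∑ a, |l a * (w a c : ℝ)| := Finset.abs_sum_le_sum_abs _ _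
      _ ≤ ∑ a, l a * max W 0 := by
          refine Finset.sum_le_sum fun a _ => ?_
          rw [abs_mul, abs_of_nonneg (hl a)]
          exact mul_le_mul_of_nonneg_left ((hW a c).trans (le_max_left _ _)) (hl a)
      _ ≤ (q * R) * max W 0 := by
          rw [← Finset.sum_mul]
          exact mul_le_mul_of_nonneg_right hmass (le_max_right _ _)
  refine ⟨fun c => ?_, fun c => ?_⟩
  · have h := (neg_le_of_abs_le (hbd c))
    have h2 := Int.le_ceil ((q * R) * max W 0)
    have : ((-⌈(q * R) * max W 0⌉ : ℤ) : ℝ) ≤ x c := by push_cast; linarith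
    exact_mod_cast this
  · have h := le_of_abs_le (hbd c)
    have h2 := Int.le_ceil ((q * R) * max W 0)
    have : (x c : ℝ) ≤ (⌈(q * R) * max W 0⌉ : ℤ) := by linarith
    exact_mod_cast this

theorem finite_latticePoints (π : ι → Fin q) (w : ι → Fin d → ℚ) (t : Fin q → ℝ) :
    (latticePoints π w t).Finite := by
  obtain ⟨R, hR⟩ := (Set.finite_range t).bddAbove
  exact (finite_bounded_latticePoints π w R).subset fun x hx => ⟨t, fun i => hR ⟨i, rfl⟩, hx⟩

open Classical in
theorem sum_mul_ncard_eq_zero {α β : Type*} (s : Finset α) (ε : α → ℝ) (A : α → Set β)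
    (hA : ∀ a, (A a).Finite) (h : ∀ x, ∑ a ∈ s, ε a * (if x ∈ A a then 1 else 0) = 0) :
    ∑ a ∈ s, ε a * ((A a).ncard : ℝ) = 0 := by
  let X : Finset β := s.biUnion fun a => (hA a).toFinset
  have hX : ∀ a ∈ s, ((A a).ncard : ℝ) = ∑ x ∈ X, if x ∈ A a then 1 else 0 := by
    intro a ha
    rw [Finset.sum_boole, Set.ncard_eq_toFinset_card _ (hA a)]
    congr 2
    ext x
    simp only [Set.Finite.mem_toFinset, Finset.mem_filter, X, Finset.mem_biUnion]
    exact ⟨fun hx => ⟨⟨a, ha, hx⟩, hx⟩, fun hx => hx.2⟩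
  calc ∑ a ∈ s, ε a * ((A a).ncard : ℝ)
      = ∑ a ∈ s, ∑ x ∈ X, ε a * (if x ∈ A a then 1 else 0) :=
        Finset.sum_congr rfl fun a ha => by rw [hX a ha, Finset.mul_sum]
    _ = 0 := by
        rw [Finset.sum_comm]
        exact Finset.sum_eq_zero fun x _ => h x

/-- Shifting weight `N` off each generator of a subset `T` of one class translates the point. -/
theorem exists_shifted_weights_iff (π : ι → Fin q) (w : ι → Fin d → ℚ) (t : Fin q → ℝ)
    (j : Fin q) (N : ℝ) (hN : 0 ≤ N) (r : ℝ) (x : Fin d → ℝ) (T : Finset ι)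
    (hT : ∀ a ∈ T, π a = j) :
    (∃ l : ι → ℝ, ((∀ a, 0 ≤ l a) ∧ (∀ i, ∑ a with π a = i, l a = (t + Pi.single j r : Fin q → ℝ) i) ∧
        ∀ c, ∑ a, l a * (w a c : ℝ) = x c) ∧ ∀ a ∈ T, N ≤ l a) ↔
      IsWeightedCombination π w (t + Pi.single j (r - N * T.card))
        (fun c => x c - ∑ a ∈ T, N * (w a c : ℝ)) := by
  classical
  have hclass : ∀ i, ∑ a with π a = i, (if a ∈ T then N else 0) =
      (Pi.single j (N * T.card) : Fin q → ℝ) i := by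
    intro i
    rw [← Finset.sum_filter, Finset.filter_filter]
    by_cases hij : i = j
    · subst hij
      have : (Finset.univ.filter fun a => π a = i ∧ a ∈ T) = T := by
        ext a
        simpa using hT a
      rw [this]
      simp [mul_comm]
    · have : (Finset.univ.filter fun a => π a = i ∧ a ∈ T) = ∅ := by
        ext a
        simp only [Finset.mem_filter, Finset.mem_univ, true_and, Finset.notMem_empty, iff_false]
        rintro ⟨h1, h2⟩
        exact hij (h1 ▸ hT a h2)
      rw [this]
      simp [hij]
  have hpoint : ∀ c, ∑ a, (if a ∈ T then N else 0) * (w a c : ℝ) = ∑ a ∈ T, N * (w a c : ℝ) := by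
    intro c
    simp [ite_mul]
  have hsingle : ∀ i, (t + Pi.single j (r - N * T.card) : Fin q → ℝ) i =
      (t + Pi.single j r : Fin q → ℝ) i - (Pi.single j (N * T.card) : Fin q → ℝ) i := by
    intro i
    rw [Pi.single_sub]
    simp only [Pi.add_apply, Pi.sub_apply]
    ring
  constructor
  · rintro ⟨l, ⟨hl, hlt, hx⟩, hlT⟩
    refine ⟨fun a => l a - if a ∈ T then N else 0, fun a => ?_, fun i => ?_, fun c => ?_⟩
    · by_cases ha : a ∈ T
      · simpa [ha] using hlT a ha
      · simpa [ha] using hl a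
    · rw [Finset.sum_sub_distrib, hlt, hclass, hsingle]
    · simp only [sub_mul, Finset.sum_sub_distrib]
      rw [hx, hpoint]
  · rintro ⟨l, hl, hlt, hx⟩
    refine ⟨fun a => l a + if a ∈ T then N else 0, ⟨fun a => ?_, fun i => ?_, fun c => ?_⟩,
      fun a ha => ?_⟩
    · by_cases ha : a ∈ T
      · simpa [ha] using add_nonneg (hl a) hN
      · simpa [ha] using hl a
    · rw [Finset.sum_add_distrib, hlt, hclass, hsingle]
      ring
    · simp only [add_mul, Finset.sum_add_distrib]
      rw [hx, hpoint]
      ring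
    · simpa [ha] using hl a

/-- The count of integral points satisfies a linear recurrence in each parameter. -/
theorem sum_choose_mul_ncard_latticePoints (π : ι → Fin q) (w : ι → Fin d → ℚ) (N : ℕ)
    (hN : ∀ a c, ∃ z : ℤ, (N : ℚ) * w a c = z) (j : Fin q)
    (hj : ∃ a, π a = j) (t : Fin q → ℝ) (ht : 0 ≤ t j) :
    ∑ k ∈ Finset.range ((Finset.univ.filter fun a => π a = j).card + 1),
      ((Finset.univ.filter fun a => π a = j).card.choose k : ℝ) * ((-1) ^ k *
        ((latticePoints π w (t + Pi.single j
          ((N : ℝ) * (Finset.univ.filter fun a => π a = j).card - N * k))).ncard : ℝ)) = 0 := by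
  classical
  set I : Finset ι := Finset.univ.filter fun a => π a = j with hI
  have hNr : (0 : ℝ) ≤ N := Nat.cast_nonneg N
  choose z hz using hN
  have hz' : ∀ a c, (N : ℝ) * (w a c : ℝ) = z a c := fun a c => by exact_mod_cast hz a c
  -- translate each set of integral points by the vertices that were split off
  let A : Finset ι → Set (Fin d → ℤ) := fun T =>
    (fun x c => x c + ∑ a ∈ T, z a c) ''
      latticePoints π w (t + Pi.single j ((N : ℝ) * I.card - N * T.card))
  have hcard : ∀ T, (A T).ncard =
      (latticePoints π w (t + Pi.single j ((N : ℝ) * I.card - N * T.card))).ncard := by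
    intro T
    refine Set.ncard_image_of_injective _ fun x y hxy => ?_
    funext c
    have := congrFun hxy c
    simpa using this
  have hmem : ∀ T ⊆ I, ∀ x : Fin d → ℤ, x ∈ A T ↔ ∃ l : ι → ℝ, ((∀ a, 0 ≤ l a) ∧
      (∀ i, ∑ a with π a = i, l a = (t + Pi.single j ((N : ℝ) * I.card) : Fin q → ℝ) i) ∧
        ∀ c, ∑ a, l a * (w a c : ℝ) = x c) ∧ ∀ a ∈ T, (N : ℝ) ≤ l a := by
    intro T hT x
    rw [exists_shifted_weights_iff π w t j N hNr _ (fun c => (x c : ℝ)) T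
      (fun a ha => (Finset.mem_filter.1 (hT ha)).2)]
    simp only [hz', A, Set.mem_image]
    constructor
    · rintro ⟨y, hy, rfl⟩
      have : (fun c => ((y c + ∑ a ∈ T, z a c : ℤ) : ℝ) - ∑ a ∈ T, (z a c : ℝ)) =
          fun c => (y c : ℝ) := by
        funext c
        push_cast
        ring
      rw [this]
      exact hy
    · intro hx
      refine ⟨fun c => x c - ∑ a ∈ T, z a c, ?_, by funext c; ring⟩
      have : (fun c => ((x c - ∑ a ∈ T, z a c : ℤ) : ℝ)) =
          fun c => (x c : ℝ) - ∑ a ∈ T, (z a c : ℝ) := by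
        funext c
        push_cast
        ring
      change IsWeightedCombination π w _ (fun c => ((x c - ∑ a ∈ T, z a c : ℤ) : ℝ))
      rw [this]
      exact hx
  have hzero : ∑ T ∈ I.powerset, (-1 : ℝ) ^ T.card * ((A T).ncard : ℝ) = 0 := by
    refine sum_mul_ncard_eq_zero _ _ _ (fun T => (finite_latticePoints π w _).image _) fun x => ?_
    let K : Set (ι → ℝ) := {l | (∀ a, 0 ≤ l a) ∧
      (∀ i, ∑ a with π a = i, l a = (t + Pi.single j ((N : ℝ) * I.card) : Fin q → ℝ) i) ∧
        ∀ c, ∑ a, l a * (w a c : ℝ) = x c}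
    have hclosed : IsClosed K := by
      simp only [K, Set.ofPred_and, Set.ofPred_forall]
      refine (isClosed_iInter fun a => isClosed_le (by fun_prop) (by fun_prop)).inter
        ((isClosed_iInter fun i => isClosed_eq (by fun_prop) (by fun_prop)).inter
          (isClosed_iInter fun c => isClosed_eq (by fun_prop) (by fun_prop)))
    have hcompact : IsCompact K := by
      refine (isCompact_Icc (a := (0 : ι → ℝ))
        (b := fun a => (t + Pi.single j ((N : ℝ) * I.card) : Fin q → ℝ) (π a))).of_isClosed_subset hclosed ?_
      rintro l ⟨hl, hlt, -⟩
      refine ⟨hl, fun a => ?_⟩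
      refine le_of_le_of_eq ?_ (hlt (π a))
      exact Finset.single_le_sum (f := l) (fun b _ => hl b) (by simp)
    have hconvex : Convex ℝ K := by
      rintro l ⟨hl, hlt, hlx⟩ m ⟨hm, hmt, hmx⟩ u v hu hv huv
      refine ⟨fun a => ?_, fun i => ?_, fun c => ?_⟩
      · exact add_nonneg (mul_nonneg hu (hl a)) (mul_nonneg hv (hm a))
      · simp only [Pi.add_apply, Pi.smul_apply, smul_eq_mul, Finset.sum_add_distrib,
          ← Finset.mul_sum] at hlt hmt ⊢
        rw [hlt, hmt, ← add_mul, huv, one_mul]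
      · simp only [Pi.add_apply, Pi.smul_apply, smul_eq_mul, add_mul, mul_assoc,
          Finset.sum_add_distrib, ← Finset.mul_sum]
        rw [hlx, hmx, ← add_mul, huv, one_mul]
    have hcov : ∀ l ∈ K, ∃ a ∈ I, (N : ℝ) ≤ ContinuousLinearMap.proj (R := ℝ) a l := by
      rintro l ⟨hl, hlt, -⟩
      have hne : I.Nonempty := by
        obtain ⟨a, ha⟩ := hj
        exact ⟨a, by simp [hI, ha]⟩
      refine Finset.exists_le_of_sum_le hne (g := l) ?_
      rw [hlt j]
      simp only [Finset.sum_const, nsmul_eq_mul, Pi.add_apply, Pi.single_eq_same]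
      linarith
    have := sum_powerset_nonempty_eq_zero_of_cover
      (fun a : ι => ContinuousLinearMap.proj (R := ℝ) (φ := fun _ : ι => ℝ) a)
      (fun _ => (N : ℝ)) I K hcompact hconvex hcov
    refine Eq.trans (Finset.sum_congr rfl fun T hT => ?_) this
    rw [if_congr (hmem T (Finset.mem_powerset.1 hT) x) rfl rfl]
    rfl
  simp only [hcard] at hzero
  have hcount := Finset.sum_powerset_apply_card (x := I) (fun k => (-1 : ℝ) ^ k *
    ((latticePoints π w (t + Pi.single j ((N : ℝ) * I.card - N * k))).ncard : ℝ))
  rw [hzero] at hcount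
  simpa only [nsmul_eq_mul] using hcount.symm

end WeightedCombinations

/-- A sequence whose `D`-th difference vanishes is given by Newton's interpolation formula. -/
theorem eq_sum_of_fwdDiff_iter_eq_zero (h : ℕ → ℝ) (D : ℕ) (hD : (fwdDiff 1)^[D] h = 0) (n : ℕ) :
    h n = ∑ k ∈ Finset.range D, ∑ i ∈ Finset.range (k + 1),
      ((-1 : ℝ) ^ (k - i) * k.choose i) * ((n.choose k : ℝ) * h i) := by
  have hvan : ∀ k, D ≤ k → (fwdDiff 1)^[k] h = 0 := by
    intro k hk
    obtain ⟨m, rfl⟩ := Nat.exists_eq_add_of_le' hk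
    rw [Function.iterate_add_apply, hD]
    clear hD hk
    induction m with
    | zero => rfl
    | succ m ih =>
      rw [Function.iterate_succ_apply', ih]
      funext y
      simp [fwdDiff]
  have hnewton := shift_eq_sum_fwdDiff_iter (1 : ℕ) h n 0
  simp only [zero_add, smul_eq_mul, mul_one, nsmul_eq_mul] at hnewton
  have hswap : ∑ k ∈ Finset.range (n + 1), (n.choose k : ℝ) * (fwdDiff 1)^[k] h 0 =
      ∑ k ∈ Finset.range D, (n.choose k : ℝ) * (fwdDiff 1)^[k] h 0 := by
    rcases le_total (n + 1) D with hle | hle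
    · refine Finset.sum_subset (Finset.range_subset_range.2 hle) fun k _ hk => ?_
      rw [Nat.choose_eq_zero_of_lt (by simpa using hk)]
      simp
    · refine (Finset.sum_subset (Finset.range_subset_range.2 hle) fun k _ hk => ?_).symm
      rw [hvan k (by simpa using hk)]
      simp
  rw [hnewton, hswap]
  refine Finset.sum_congr rfl fun k _ => ?_
  rw [fwdDiff_iter_eq_sum_shift, Finset.mul_sum]
  refine Finset.sum_congr rfl fun i _ => ?_
  simp only [zero_add, smul_eq_mul, mul_one, zsmul_eq_mul]
  push_cast
  ring

section StepPolynomials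

variable {q : ℕ}

/-- Step polynomials on the nonnegative orthant: the algebra generated by the coordinates and the
fractional parts of all rational linear forms. -/
def orthantStepAlgebra (q : ℕ) : Subalgebra ℝ ({t : Fin q → ℝ // ∀ i, 0 ≤ t i} → ℝ) :=
  Algebra.adjoin ℝ ({f | ∃ i, f = fun t => t.1 i} ∪
    {f | ∃ η : Fin q → ℚ, f = fun t => Int.fract (∑ j, (η j : ℝ) * t.1 j)})

theorem coord_mem_orthantStepAlgebra (i : Fin q) :
    (fun t => t.1 i) ∈ orthantStepAlgebra q :=
  Algebra.subset_adjoin (Or.inl ⟨i, rfl⟩)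

theorem const_mem_orthantStepAlgebra (r : ℝ) : (fun _ => r) ∈ orthantStepAlgebra q :=
  (orthantStepAlgebra q).algebraMap_mem r

theorem floor_linear_mem_orthantStepAlgebra (η : Fin q → ℚ) :
    (fun t => ((⌊∑ j, (η j : ℝ) * t.1 j⌋ : ℤ) : ℝ)) ∈ orthantStepAlgebra q := by
  have hfract : (fun t : {t : Fin q → ℝ // ∀ i, 0 ≤ t i} =>
      Int.fract (∑ j, (η j : ℝ) * t.1 j)) ∈ orthantStepAlgebra q :=
    Algebra.subset_adjoin (Or.inr ⟨η, rfl⟩)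
  have hlin := Subalgebra.sum_mem (orthantStepAlgebra q) (t := Finset.univ)
    (f := fun j => (η j : ℝ) • fun t : {t : Fin q → ℝ // ∀ i, 0 ≤ t i} => t.1 j)
    (fun j _ => Subalgebra.smul_mem _ (coord_mem_orthantStepAlgebra j) _)
  refine (orthantStepAlgebra q).sub_mem hlin hfract |> cast (congrArg (· ∈ _) ?_)
  funext t
  simp [← Int.self_sub_fract]

theorem floor_div_mem_orthantStepAlgebra (N : ℕ) (j : Fin q) :
    (fun t => ((⌊t.1 j / (N : ℝ)⌋ : ℤ) : ℝ)) ∈ orthantStepAlgebra q := by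
  refine floor_linear_mem_orthantStepAlgebra (Pi.single j (N : ℚ)⁻¹) |>
    cast (congrArg (· ∈ _) ?_)
  funext t
  rw [Finset.sum_eq_single j]
  · simp [div_eq_inv_mul]
  · intro i _ hi
    simp [hi]
  · simp

theorem polynomial_eval_mem {X : Type*} (A : Subalgebra ℝ (X → ℝ)) (p : Polynomial ℝ) {u : X → ℝ}
    (hu : u ∈ A) : (fun t => p.eval (u t)) ∈ A := by
  have h : Polynomial.aeval u p ∈ A :=
    Algebra.adjoin_le (Set.singleton_subset_iff.2 hu) (Polynomial.aeval_mem_adjoin_singleton ℝ u)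
  refine h |> cast (congrArg (· ∈ _) ?_)
  funext t
  rw [Polynomial.aeval_fn_apply, Polynomial.coe_aeval_eq_eval]

/-- Any function of a bounded integer-valued element of an algebra of functions is in the
algebra. -/
theorem comp_mem_of_bounded {X : Type*} (A : Subalgebra ℝ (X → ℝ)) (u : X → ℤ)
    (hu : (fun t => (u t : ℝ)) ∈ A) (B : ℤ) (hB : ∀ t, |u t| ≤ B) (φ : ℤ → ℝ) :
    (fun t => φ (u t)) ∈ A := by
  have h := polynomial_eval_mem A
    (Lagrange.interpolate (Finset.Icc (-B) B) (fun z : ℤ => (z : ℝ)) φ) hu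
  refine h |> cast (congrArg (· ∈ _) ?_)
  funext t
  exact Lagrange.eval_interpolate_at_node φ (Int.cast_injective.injOn)
    (Finset.mem_Icc.2 (abs_le.1 (hB t)))

theorem choose_floor_mem_orthantStepAlgebra (N : ℕ) (j : Fin q) (k : ℕ) :
    (fun t => ((⌊t.1 j / (N : ℝ)⌋₊.choose k : ℕ) : ℝ)) ∈ orthantStepAlgebra q := by
  have h := polynomial_eval_mem _ (Polynomial.C ((k.factorial : ℝ)⁻¹) * descPochhammer ℝ k)
    (floor_div_mem_orthantStepAlgebra N j)
  refine h |> cast (congrArg (· ∈ _) ?_)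
  funext t
  rw [Nat.cast_choose_eq_descPochhammer_div, Polynomial.eval_mul, Polynomial.eval_C,
    natCast_floor_eq_intCast_floor (div_nonneg (t.2 j) (Nat.cast_nonneg N)), inv_mul_eq_div]

/-- Reduce the coordinates in `J` modulo `N` and then shift them by multiples of `N`. -/
noncomputable def reduceCoords (N : ℕ) (J : Finset (Fin q)) (κ : Fin q → ℕ) (t : Fin q → ℝ) :
    Fin q → ℝ :=
  fun i => if i ∈ J then N * Int.fract (t i / N) + N * κ i else t i

/-- A function on the orthant satisfying a difference equation in each coordinate is a step
polynomial as soon as its restrictions to residues modulo `N` are. -/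
theorem mem_orthantStepAlgebra_of_recurrence (N : ℕ) (hN : 0 < N) (f : (Fin q → ℝ) → ℝ)
    (D : Fin q → ℕ) (hrec : ∀ (j : Fin q) (t : Fin q → ℝ), 0 ≤ t j →
      ∑ k ∈ Finset.range (D j + 1), ((D j).choose k : ℝ) *
        ((-1) ^ k * f (t + Pi.single j ((N : ℝ) * D j - N * k))) = 0)
    (hres : ∀ κ : Fin q → ℕ, (fun t => f (reduceCoords N Finset.univ κ t.1)) ∈
      orthantStepAlgebra q) :
    (fun t => f t.1) ∈ orthantStepAlgebra q := by
  classical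
  have hN' : (0 : ℝ) < N := by exact_mod_cast hN
  suffices H : ∀ J : Finset (Fin q), ∀ κ : Fin q → ℕ,
      (fun t => f (reduceCoords N Jᶜ κ t.1)) ∈ orthantStepAlgebra q by
    have hid : ∀ t : Fin q → ℝ, reduceCoords N ∅ 0 t = t := fun t => by
      funext i
      simp [reduceCoords]
    simpa [hid] using H Finset.univ 0
  intro J
  induction J using Finset.induction_on with
  | empty => simpa using hres
  | insert j J hj ih =>
    intro κ
    have hexp : (fun t : {t : Fin q → ℝ // ∀ i, 0 ≤ t i} =>
        f (reduceCoords N (insert j J)ᶜ κ t.1)) =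
        ∑ k ∈ Finset.range (D j), ∑ i ∈ Finset.range (k + 1),
          ((-1 : ℝ) ^ (k - i) * k.choose i) •
            ((fun t : {t : Fin q → ℝ // ∀ i, 0 ≤ t i} => ((⌊t.1 j / (N : ℝ)⌋₊.choose k : ℕ) : ℝ)) *
              fun t => f (reduceCoords N Jᶜ (Function.update κ j i) t.1)) := by
      funext ⟨t, ht⟩
      let s : Fin q → ℝ :=
        Function.update (reduceCoords N (insert j J)ᶜ κ t) j (N * Int.fract (t j / N))
      have hsj : s j = N * Int.fract (t j / N) := by simp [s]
      let h : ℕ → ℝ := fun n => f (s + Pi.single j ((N : ℝ) * n))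
      have hh : (fwdDiff 1)^[D j] h = 0 := by
        funext y
        rw [fwdDiff_iter_eq_sum_shift, ← Finset.sum_flip]
        refine Eq.trans (Finset.sum_congr rfl fun k hk => ?_)
          (hrec j (s + Pi.single j ((N : ℝ) * y)) ?_)
        · have hk' : k ≤ D j := Nat.lt_succ_iff.1 (Finset.mem_range.1 hk)
          rw [Nat.sub_sub_self hk', Nat.choose_symm hk', add_assoc s, ← Pi.single_add]
          simp only [h, smul_eq_mul, mul_one, zsmul_eq_mul]
          push_cast [Nat.cast_sub hk']
          rw [show (N : ℝ) * (y + ((D j : ℝ) - k)) = N * y + (N * D j - N * k) by ring]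
          ring
        · simp only [Pi.add_apply, Pi.single_eq_same, hsj]
          have := Int.fract_nonneg (t j / N)
          positivity
      have hstart : reduceCoords N (insert j J)ᶜ κ t = s + Pi.single j ((N : ℝ) * ⌊t j / N⌋₊) := by
        funext i
        by_cases hi : i = j
        · subst hi
          rw [Pi.add_apply, hsj, Pi.single_eq_same,
            natCast_floor_eq_intCast_floor (div_nonneg (ht i) hN'.le), ← mul_add,
            Int.fract_add_floor, mul_div_cancel₀ _ hN'.ne']
          simp [reduceCoords]
        · simp [s, hi]
      have hnode : ∀ n : ℕ, reduceCoords N Jᶜ (Function.update κ j n) t =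
          s + Pi.single j ((N : ℝ) * n) := by
        intro n
        funext i
        by_cases hi : i = j
        · subst hi
          rw [Pi.add_apply, hsj]
          simp [reduceCoords, hj]
        · simp [s, hi, reduceCoords]
      have := eq_sum_of_fwdDiff_iter_eq_zero h (D j) hh ⌊t j / N⌋₊
      simp only [Finset.sum_apply, Pi.smul_apply, Pi.mul_apply, smul_eq_mul]
      rw [hstart]
      simp only [hnode]
      exact this
    rw [hexp]
    exact Subalgebra.sum_mem _ fun k _ => Subalgebra.sum_mem _ fun i _ => Subalgebra.smul_mem _
      (Subalgebra.mul_mem _ (choose_floor_mem_orthantStepAlgebra N j k) (ih _)) _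

/-- The integral points for parameters reduced modulo `N` are counted by a step polynomial. -/
theorem ncard_reduceCoords_mem_orthantStepAlgebra {ι : Type*} [Fintype ι] {d : ℕ} (π : ι → Fin q)
    (w : ι → Fin d → ℚ) (N : ℕ) (hN : 0 < N) (κ : Fin q → ℕ) :
    (fun t => ((latticePoints π w (reduceCoords N Finset.univ κ t.1)).ncard : ℝ)) ∈
      orthantStepAlgebra q := by
  classical
  have hN' : (0 : ℝ) < N := by exact_mod_cast hN
  obtain ⟨L, hL⟩ := isWeightedCombination_iff_inequalities π w
  have hred : ∀ (t : Fin q → ℝ) i, 0 ≤ reduceCoords N Finset.univ κ t i ∧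
      reduceCoords N Finset.univ κ t i ≤ N + N * κ i := by
    intro t i
    have h1 := Int.fract_nonneg (t i / N)
    have h2 := (Int.fract_lt_one (t i / N)).le
    simp only [reduceCoords, Finset.mem_univ, if_true]
    refine ⟨by positivity, ?_⟩
    nlinarith
  -- the floor of an integral linear form at the reduced parameters
  let u : (Fin q → ℤ) → {t : Fin q → ℝ // ∀ i, 0 ≤ t i} → ℤ :=
    fun b t => ⌊∑ i, (b i : ℝ) * reduceCoords N Finset.univ κ t.1 i⌋
  have hu_mem : ∀ b, (fun t => (u b t : ℝ)) ∈ orthantStepAlgebra q := by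
    intro b
    have h1 := floor_linear_mem_orthantStepAlgebra (fun i => (b i : ℚ))
    have h2 := Subalgebra.sum_mem (orthantStepAlgebra q) (t := Finset.univ)
      (f := fun i => ((b i : ℝ) * N) • ((fun t : {t : Fin q → ℝ // ∀ i, 0 ≤ t i} =>
        ((⌊t.1 i / (N : ℝ)⌋ : ℤ) : ℝ)) - fun _ => (κ i : ℝ)))
      (fun i _ => Subalgebra.smul_mem _ (Subalgebra.sub_mem _
        (floor_div_mem_orthantStepAlgebra N i) (const_mem_orthantStepAlgebra _)) _)
    refine Subalgebra.sub_mem _ h1 h2 |> cast (congrArg (· ∈ _) ?_)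
    funext t
    have hsplit : ∑ i, (b i : ℝ) * reduceCoords N Finset.univ κ t.1 i =
        ∑ i, (b i : ℝ) * t.1 i - ((∑ i, b i * N * (⌊t.1 i / (N : ℝ)⌋ - κ i) : ℤ) : ℝ) := by
      push_cast
      rw [← Finset.sum_sub_distrib]
      refine Finset.sum_congr rfl fun i _ => ?_
      simp only [reduceCoords, Finset.mem_univ, if_true, ← Int.self_sub_floor]
      field_simp
      ring
    simp only [u, hsplit, Int.floor_sub_intCast]
    simp
  have hu_bdd : ∀ b : Fin q → ℤ, ∀ t,
      |u b t| ≤ ⌈∑ i, |(b i : ℝ)| * (N + N * κ i)⌉ + 1 := by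
    intro b t
    have h1 : |∑ i, (b i : ℝ) * reduceCoords N Finset.univ κ t.1 i| ≤
        ∑ i, |(b i : ℝ)| * (N + N * κ i) := by
      refine (Finset.abs_sum_le_sum_abs _ _).trans (Finset.sum_le_sum fun i _ => ?_)
      rw [abs_mul, abs_of_nonneg (hred t.1 i).1]
      exact mul_le_mul_of_nonneg_left (hred t.1 i).2 (abs_nonneg _)
    have h2 := abs_le.1 h1
    have h3 := Int.le_ceil (∑ i, |(b i : ℝ)| * (N + N * κ i))
    have h4 := Int.floor_le (∑ i, (b i : ℝ) * reduceCoords N Finset.univ κ t.1 i)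
    have h5 := Int.lt_floor_add_one (∑ i, (b i : ℝ) * reduceCoords N Finset.univ κ t.1 i)
    have h6 : |((u b t : ℤ) : ℝ)| ≤ (⌈∑ i, |(b i : ℝ)| * (N + N * κ i)⌉ : ℤ) + 1 := by
      simp only [u]
      exact abs_le.2 ⟨by linarith, by linarith⟩
    exact_mod_cast h6
  have hfin : {x : Fin d → ℤ | ∃ t : Fin q → ℝ, (∀ i, t i ≤ ∑ i, ((N : ℝ) + N * κ i)) ∧
      x ∈ latticePoints π w t}.Finite := finite_bounded_latticePoints π w _
  have hexp : (fun t : {t : Fin q → ℝ // ∀ i, 0 ≤ t i} =>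
      ((latticePoints π w (reduceCoords N Finset.univ κ t.1)).ncard : ℝ)) =
      ∑ x ∈ hfin.toFinset, ∏ ℓ ∈ L, fun t =>
        if 0 ≤ u (fun i => ℓ (Sum.inl i)) t + ∑ c, ℓ (Sum.inr c) * x c then (1 : ℝ) else 0 := by
    funext t
    have hsub : latticePoints π w (reduceCoords N Finset.univ κ t.1) =
        ↑(hfin.toFinset.filter fun x => ∀ ℓ ∈ L,
          0 ≤ u (fun i => ℓ (Sum.inl i)) t + ∑ c, ℓ (Sum.inr c) * x c) := by
      have hiff : ∀ x : Fin d → ℤ, x ∈ latticePoints π w (reduceCoords N Finset.univ κ t.1) ↔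
          ∀ ℓ ∈ L, 0 ≤ u (fun i => ℓ (Sum.inl i)) t + ∑ c, ℓ (Sum.inr c) * x c := by
        intro x
        refine (hL _ _).trans (forall₂_congr fun ℓ _ => ?_)
        rw [← Int.floor_add_intCast, Int.floor_nonneg]
        push_cast
        rfl
      ext x
      rw [Finset.coe_filter, Set.mem_ofPred_eq, ← hiff, Set.Finite.mem_toFinset]
      refine ⟨fun hx => ⟨⟨_, fun i => (hred t.1 i).2.trans ?_, hx⟩, hx⟩, fun hx => hx.2⟩
      exact Finset.single_le_sum (f := fun i => (N : ℝ) + N * κ i)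
        (fun i _ => by positivity) (Finset.mem_univ i)
    rw [hsub, Set.ncard_coe_finset, Finset.sum_apply, ← Finset.sum_boole]
    refine Finset.sum_congr rfl fun x _ => ?_
    rw [Finset.prod_apply, Finset.prod_ite_zero]
    simp
  rw [hexp]
  exact Subalgebra.sum_mem _ fun x _ => Subalgebra.prod_mem _ fun ℓ _ =>
    comp_mem_of_bounded _ (u fun i => ℓ (Sum.inl i)) (hu_mem _) _ (hu_bdd _)
      (fun z => if 0 ≤ z + ∑ c, ℓ (Sum.inr c) * x c then (1 : ℝ) else 0)

theorem ncard_latticePoints_mem_orthantStepAlgebra {ι : Type*} [Fintype ι] {d : ℕ}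
    (π : ι → Fin q) (hπ : Function.Surjective π) (w : ι → Fin d → ℚ) :
    (fun t => ((latticePoints π w t.1).ncard : ℝ)) ∈ orthantStepAlgebra q := by
  obtain ⟨N, hN, hden⟩ := exists_common_denominator (Finset.univ : Finset (ι × Fin d))
    (fun p => w p.1 p.2)
  exact mem_orthantStepAlgebra_of_recurrence N hN
    (fun t => ((latticePoints π w t).ncard : ℝ))
    (fun j => (Finset.univ.filter fun a => π a = j).card)
    (fun j t ht => sum_choose_mul_ncard_latticePoints π w N
      (fun a c => hden (a, c) (Finset.mem_univ _)) j (hπ j) t ht)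
    (ncard_reduceCoords_mem_orthantStepAlgebra π w N hN)

/-- The algebra of functions on `ℝ^q` generated by the coordinates and the fractional parts of the
rational linear forms in `Ψ`. -/
def stepAlgebra (Ψ : Finset (Fin q → ℚ)) : Subalgebra ℝ ((Fin q → ℝ) → ℝ) :=
  Algebra.adjoin ℝ
    ({f : (Fin q → ℝ) → ℝ | ∃ i : Fin q, f = fun t => t i} ∪
      {f : (Fin q → ℝ) → ℝ | ∃ η ∈ Ψ, f = fun t => Int.fract (∑ j, (η j : ℝ) * t j)})

theorem stepAlgebra_mono {Ψ Ψ' : Finset (Fin q → ℚ)} (h : Ψ ⊆ Ψ') :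
    stepAlgebra Ψ ≤ stepAlgebra Ψ' :=
  Algebra.adjoin_mono (Set.union_subset_union_right _ fun _ ⟨η, hη, hf⟩ => ⟨η, h hη, hf⟩)

/-- A step polynomial on the orthant involves finitely many linear forms and extends to `ℝ^q`. -/
theorem exists_mem_stepAlgebra_of_mem_orthantStepAlgebra
    {g : {t : Fin q → ℝ // ∀ i, 0 ≤ t i} → ℝ} (hg : g ∈ orthantStepAlgebra q) :
    ∃ (Ψ : Finset (Fin q → ℚ)), ∃ E ∈ stepAlgebra Ψ, ∀ t, g t = E t.1 := by
  classical
  induction hg using Algebra.adjoin_induction with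
  | mem f hf =>
    rcases hf with ⟨i, rfl⟩ | ⟨η, rfl⟩
    · exact ⟨∅, fun t => t i, Algebra.subset_adjoin (Or.inl ⟨i, rfl⟩), fun t => rfl⟩
    · exact ⟨{η}, fun t => Int.fract (∑ j, (η j : ℝ) * t j),
        Algebra.subset_adjoin (Or.inr ⟨η, by simp, rfl⟩), fun t => rfl⟩
  | algebraMap r => exact ⟨∅, algebraMap ℝ _ r, Subalgebra.algebraMap_mem _ r, fun t => rfl⟩
  | add f g _ _ hf hg =>
    obtain ⟨Ψ, E, hE, hfE⟩ := hf
    obtain ⟨Ψ', E', hE', hgE⟩ := hg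
    exact ⟨Ψ ∪ Ψ', E + E', Subalgebra.add_mem _ (stepAlgebra_mono Finset.subset_union_left hE)
      (stepAlgebra_mono Finset.subset_union_right hE'), fun t => by simp [hfE, hgE]⟩
  | mul f g _ _ hf hg =>
    obtain ⟨Ψ, E, hE, hfE⟩ := hf
    obtain ⟨Ψ', E', hE', hgE⟩ := hg
    exact ⟨Ψ ∪ Ψ', E * E', Subalgebra.mul_mem _ (stepAlgebra_mono Finset.subset_union_left hE)
      (stepAlgebra_mono Finset.subset_union_right hE'), fun t => by simp [hfE, hgE]⟩

end StepPolynomials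

/-- Membership in a dilate of a polytope, in terms of nonnegative weights of its generators. -/
theorem mem_smul_convexHull_iff {d : ℕ} (S : Finset (Fin d → ℚ)) (hS : S.Nonempty) (r : ℝ)
    (hr : 0 ≤ r) (x : Fin d → ℝ) :
    x ∈ r • convexHull ℝ ((fun (s : Fin d → ℚ) => fun j => (s j : ℝ)) '' (S : Set (Fin d → ℚ))) ↔
      ∃ l : S → ℝ, (∀ s, 0 ≤ l s) ∧ ∑ s, l s = r ∧ ∀ c, ∑ s, l s * (s.1 c : ℝ) = x c := by
  classical
  let v : (Fin d → ℚ) → Fin d → ℝ := fun s j => (s j : ℝ)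
  have hinj : Function.Injective v := fun s s' h => by
    funext j
    have := congrFun h j
    simpa [v] using this
  have hhull : ∀ y : Fin d → ℝ, y ∈ convexHull ℝ (v '' (S : Set (Fin d → ℚ))) ↔
      ∃ l : S → ℝ, (∀ s, 0 ≤ l s) ∧ ∑ s, l s = 1 ∧ ∀ c, ∑ s, l s * (s.1 c : ℝ) = y c := by
    intro y
    constructor
    · intro hy
      rw [← Finset.coe_image, Finset.mem_convexHull'] at hy
      obtain ⟨l, hl, hl1, hly⟩ := hy
      rw [Finset.sum_image hinj.injOn] at hl1 hly
      refine ⟨fun s => l (v s.1), fun s => hl _ (Finset.mem_image_of_mem _ s.2), ?_, fun c => ?_⟩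
      · rw [← hl1, ← Finset.sum_coe_sort S]
      · rw [← hly, ← Finset.sum_coe_sort S, Finset.sum_apply]
        rfl
    · rintro ⟨l, hl, hl1, hly⟩
      have hsum : ∑ s, l s • v s.1 = y := by
        funext c
        rw [← hly c, Finset.sum_apply]
        rfl
      rw [← hsum]
      exact (convex_convexHull ℝ _).sum_mem (fun s _ => hl s) hl1
        fun s _ => subset_convexHull ℝ _ (Set.mem_image_of_mem v s.2)
  constructor
  · rintro ⟨y, hy, rfl⟩
    obtain ⟨l, hl, hl1, hly⟩ := (hhull y).1 hy
    refine ⟨fun s => r * l s, fun s => mul_nonneg hr (hl s), ?_, fun c => ?_⟩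
    · rw [← Finset.mul_sum, hl1, mul_one]
    · simp only [mul_assoc, ← Finset.mul_sum, hly]
      rfl
  · rintro ⟨l, hl, hlr, hlx⟩
    rcases hr.eq_or_lt with rfl | hpos
    · have hl0 : ∀ s, l s = 0 := fun s =>
        (Finset.sum_eq_zero_iff_of_nonneg fun s _ => hl s).1 hlr s (Finset.mem_univ s)
      obtain ⟨s, hs⟩ := hS
      refine ⟨v s, subset_convexHull ℝ _ (Set.mem_image_of_mem v hs), ?_⟩
      funext c
      simp [← hlx c, hl0]
    · refine ⟨r⁻¹ • x, (hhull _).2 ⟨fun s => r⁻¹ * l s,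
        fun s => mul_nonneg (inv_nonneg.2 hr) (hl s), ?_, fun c => ?_⟩, ?_⟩
      · rw [← Finset.mul_sum, hlr, inv_mul_cancel₀ hpos.ne']
      · simp only [mul_assoc, ← Finset.mul_sum, hlx]
        rfl
      · exact smul_inv_smul₀ hpos.ne' x

/-- The Minkowski sum of dilated polytopes consists of the weighted combinations of all their
generators. -/
theorem mem_sum_smul_iff_isWeightedCombination {d q : ℕ} (S : Fin q → Finset (Fin d → ℚ))
    (hS : ∀ i, (S i).Nonempty) (t : Fin q → ℝ) (ht : ∀ i, 0 ≤ t i) (x : Fin d → ℝ) :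
    x ∈ ∑ i, t i • convexHull ℝ
        ((fun (s : Fin d → ℚ) => fun j => (s j : ℝ)) '' (S i : Set (Fin d → ℚ))) ↔
      IsWeightedCombination (Sigma.fst : (Σ i, S i) → Fin q) (fun a => a.2.1) t x := by
  classical
  have hclass : ∀ (l : (Σ i, S i) → ℝ) (i : Fin q),
      ∑ a with a.1 = i, l a = ∑ s : S i, l ⟨i, s⟩ := by
    intro l i
    rw [Finset.sum_filter, Fintype.sum_sigma, Fintype.sum_eq_single i]
    · simp
    · intro k hk
      simp [hk]
  rw [Set.mem_fintype_sum]
  constructor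
  · rintro ⟨g, hg, rfl⟩
    choose l hl hlt hlg using fun i =>
      (mem_smul_convexHull_iff (S i) (hS i) (t i) (ht i) (g i)).1 (hg i)
    refine ⟨fun a => l a.1 a.2, fun a => hl _ _, fun i => ?_, fun c => ?_⟩
    · rw [hclass, hlt]
    · rw [Fintype.sum_sigma, Finset.sum_apply]
      exact Finset.sum_congr rfl fun i _ => hlg i c
  · rintro ⟨l, hl, hlt, hlx⟩
    refine ⟨fun i c => ∑ s : S i, l ⟨i, s⟩ * (s.1 c : ℝ), fun i => ?_, ?_⟩
    · exact (mem_smul_convexHull_iff (S i) (hS i) (t i) (ht i) _).2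
        ⟨fun s => l ⟨i, s⟩, fun s => hl _, by rw [← hclass, hlt], fun c => rfl⟩
    · funext c
      rw [← hlx c, Fintype.sum_sigma, Finset.sum_apply]

theorem stmt_2
    (d q : ℕ)
    -- the polytopes P i = conv(S i) with rational vertices
    (S : Fin q → Finset (Fin d → ℚ))
    (P : Fin q → Set (Fin d → ℝ))
    (hP : ∀ i, P i = convexHull ℝ ((fun (s : Fin d → ℚ) => fun j => (s j : ℝ)) '' ↑(S i))) :
    ∃ (Ψ : Finset (Fin q → ℚ)) (E : (Fin q → ℝ) → ℝ),
      -- E belongs to the ℝ-algebra generated by the coordinate functions and the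
      -- step-linear functions t ↦ {⟨η, t⟩}, η ∈ Ψ
      E ∈ Algebra.adjoin ℝ
        ({f : (Fin q → ℝ) → ℝ | ∃ i : Fin q, f = fun t => t i} ∪
          {f : (Fin q → ℝ) → ℝ | ∃ η ∈ Ψ,
            f = fun t => Int.fract (∑ j, (η j : ℝ) * t j)}) ∧
      -- the lattice-point count of the Minkowski sum is given by E
      ∀ t : Fin q → ℝ, (∀ i, 0 ≤ t i) →
        (({x : Fin d → ℤ | (fun i => (x i : ℝ)) ∈ ∑ i, t i • P i}.ncard : ℝ)) = E t := by
  by_cases hS : ∀ i, (S i).Nonempty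
  · let π : (Σ i, S i) → Fin q := Sigma.fst
    have hπ : Function.Surjective π := fun i => ⟨⟨i, ⟨_, (hS i).choose_spec⟩⟩, rfl⟩
    let w : (Σ i, S i) → Fin d → ℚ := fun a => a.2.1
    obtain ⟨Ψ, E, hE, hcount⟩ := exists_mem_stepAlgebra_of_mem_orthantStepAlgebra
      (ncard_latticePoints_mem_orthantStepAlgebra π hπ w)
    refine ⟨Ψ, E, hE, fun t ht => ?_⟩
    rw [← hcount ⟨t, ht⟩]
    congr 2
    ext x
    simp only [hP]
    exact mem_sum_smul_iff_isWeightedCombination S hS t ht _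
  · push Not at hS
    obtain ⟨i, hi⟩ := hS
    refine ⟨∅, 0, Subalgebra.zero_mem _, fun t _ => ?_⟩
    have hempty : ∀ x : Fin d → ℝ, x ∉ ∑ i, t i • P i := by
      intro x hx
      obtain ⟨g, hg, -⟩ := (Set.mem_fintype_sum _ _).1 hx
      have := hg i
      simp [hP, hi] at this
    simp [hempty]
end

section
/- Assume that μ_1, …, μ_N generate (ℝ^d)* as a cone. Let τ be an admissible μ-chamber and let b be a point of the topological closure of τ. Then the function 𝟙_{P(b)} − Σ_{B ∈ 𝓑_τ} 𝟙_{s_B(b) + c_B} (a finite linear combination of indicator functions from ℝ^d to ℝ) belongs to the ℝ-linear span of the set of indicator functions 𝟙_{s + C}, where s ranges over ℝ^d and C ranges over polyhedral cones in ℝ^d containing a line. -/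
open Module Filter Topology

section FormBasis

variable {ι V : Type*} [AddCommGroup V] [Module ℝ V]

/-- The forms `μ j`, `j ∈ B`, constitute a basis of the dual space: there are `dim V` of them and
their common kernel is trivial. -/
def IsFormBasis (μ : ι → Dual ℝ V) (B : Finset ι) : Prop :=
  B.card = finrank ℝ V ∧ ∀ x, (∀ j ∈ B, μ j x = 0) → x = 0

/-- `s B b` is the point at which the forms of the basis `B` take the values prescribed by `b`. -/
def IsVertexMap (μ : ι → Dual ℝ V) (s : Finset ι → (ι → ℝ) →ₗ[ℝ] V) : Prop :=
  ∀ B, IsFormBasis μ B → ∀ b, ∀ j ∈ B, μ j (s B b) = b j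

lemma span_eq_top_of_forall_apply_eq_zero [FiniteDimensional ℝ V] {κ : Type*} {μ : κ → Dual ℝ V}
    (h : ∀ x, (∀ j, μ j x = 0) → x = 0) : Submodule.span ℝ (Set.range μ) = ⊤ := by
  rw [← Subspace.dualCoannihilator_dualAnnihilator_eq
    (W := Submodule.span ℝ (Set.range μ))]
  have : (Submodule.span ℝ (Set.range μ)).dualCoannihilator = ⊥ := by
    rw [eq_bot_iff]
    intro x hx
    rw [Submodule.mem_dualCoannihilator] at hx
    exact h x fun j => hx _ (Submodule.subset_span ⟨j, rfl⟩)
  rw [this, Submodule.dualAnnihilator_bot]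

lemma eq_zero_of_span_eq_top {κ : Type*} {μ : κ → Dual ℝ V}
    (h : Submodule.span ℝ (Set.range μ) = ⊤) {x : V} (hx : ∀ j, μ j x = 0) : x = 0 := by
  have hall : ∀ φ ∈ Submodule.span ℝ (Set.range μ), φ x = 0 := by
    intro φ hφ
    induction hφ using Submodule.span_induction with
    | mem φ hφ => obtain ⟨j, rfl⟩ := hφ; exact hx j
    | zero => simp
    | add φ ψ _ _ h₁ h₂ => simp [h₁, h₂]
    | smul c φ _ h₁ => simp [h₁]
  exact (forall_dual_apply_eq_zero_iff ℝ x).1 fun φ => hall φ (h ▸ Submodule.mem_top)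

lemma isFormBasis_iff [FiniteDimensional ℝ V] (μ : ι → Dual ℝ V) (B : Finset ι) :
    IsFormBasis μ B ↔ LinearIndependent ℝ (fun j : {j // j ∈ B} => μ j.1) ∧
      Submodule.span ℝ (Set.range (fun j : {j // j ∈ B} => μ j.1)) = ⊤ := by
  constructor
  · rintro ⟨hc, h⟩
    have hs : Submodule.span ℝ (Set.range (fun j : {j // j ∈ B} => μ j.1)) = ⊤ :=
      span_eq_top_of_forall_apply_eq_zero fun x hx => h x fun j hj => hx ⟨j, hj⟩
    refine ⟨linearIndependent_of_top_le_span_of_card_eq_finrank hs.ge ?_, hs⟩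
    rw [Fintype.card_coe, hc, Subspace.dual_finrank_eq]
  · rintro ⟨hl, hs⟩
    refine ⟨?_, fun x hx => eq_zero_of_span_eq_top hs fun j => hx j.1 j.2⟩
    rw [← Subspace.dual_finrank_eq, finrank_eq_card_basis (Basis.mk hl hs.ge), Fintype.card_coe]

lemma IsFormBasis.ext {μ : ι → Dual ℝ V} {B : Finset ι} (hB : IsFormBasis μ B) {x y : V}
    (h : ∀ j ∈ B, μ j x = μ j y) : x = y :=
  sub_eq_zero.1 <| hB.2 _ fun j hj => by simp [h j hj]

variable {μ : ι → Dual ℝ V} {s : Finset ι → (ι → ℝ) →ₗ[ℝ] V}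

lemma IsVertexMap.apply_eq_sum [DecidableEq ι] (hs : IsVertexMap μ s) {B : Finset ι} (hB : IsFormBasis μ B)
    (ξ : Dual ℝ V) (x : V) :
    ξ x = ∑ j ∈ B, μ j x * ξ (s B (Pi.single j 1)) := by
  have : x = ∑ j ∈ B, μ j x • s B (Pi.single j 1) := by
    refine hB.ext fun i hi => ?_
    rw [map_sum, Finset.sum_eq_single i]
    · simp [hs B hB _ i hi]
    · intro j _ hji
      simp [hs B hB _ i hi, hji.symm]
    · exact fun h => absurd hi h
  conv_lhs => rw [this]
  simp

lemma IsVertexMap.single_ne_zero [DecidableEq ι] (hs : IsVertexMap μ s) {B : Finset ι} (hB : IsFormBasis μ B)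
    {j : ι} (hj : j ∈ B) : s B (Pi.single j 1) ≠ 0 := by
  intro h
  have := hs B hB (Pi.single j 1) j hj
  simp [h] at this

/-- Moving from a feasible point in a direction `w ≠ 0`, one reaches a first constraint. -/
lemma exists_blocking_constraint [Fintype ι] (hpos : ∀ w : V, w ≠ 0 → ∃ k, 0 < μ k w) {b : ι → ℝ} {x w : V}
    (hx : ∀ k, μ k x ≤ b k) (hw : w ≠ 0) :
    ∃ k, 0 < μ k w ∧ ∃ t : ℝ, μ k (x + t • w) = b k ∧ 0 ≤ t ∧ ∀ i, μ i (x + t • w) ≤ b i := by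
  classical
  obtain ⟨k₀, hk₀⟩ := hpos w hw
  obtain ⟨k, hk, hmin⟩ := Finset.exists_min_image
    (Finset.univ.filter fun k => 0 < μ k w) (fun k => (b k - μ k x) / μ k w) ⟨k₀, by simpa⟩
  simp only [Finset.mem_filter, Finset.mem_univ, true_and] at hk hmin
  have ht : 0 ≤ (b k - μ k x) / μ k w := div_nonneg (sub_nonneg.2 (hx k)) hk.le
  refine ⟨k, hk, (b k - μ k x) / μ k w, ?_, ht, fun i => ?_⟩
  · simp only [map_add, map_smul, smul_eq_mul]
    field_simp
    ring
  · simp only [map_add, map_smul, smul_eq_mul]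
    rcases le_or_gt (μ i w) 0 with hi | hi
    · nlinarith [hx i, mul_nonneg ht (neg_nonneg.2 hi)]
    · have := (le_div_iff₀ hi).1 (hmin i hi)
      linarith

lemma exists_pivot [Fintype ι] [DecidableEq ι] (hs : IsVertexMap μ s) (hpos : ∀ w : V, w ≠ 0 → ∃ k, 0 < μ k w)
    {b : ι → ℝ} {B : Finset ι} (hB : IsFormBasis μ B) (hb : ∀ k ∉ B, μ k (s B b) < b k)
    {j : ι} (hj : j ∈ B) :
    ∃ (k : ι) (t : ℝ), 0 < t ∧ IsFormBasis μ (insert k (B.erase j)) ∧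
      s (insert k (B.erase j)) b = s B b - t • s B (Pi.single j 1) ∧
      ∀ i, μ i (s (insert k (B.erase j)) b) ≤ b i := by
  have hfeas : ∀ k, μ k (s B b) ≤ b k := fun k => by
    by_cases hk : k ∈ B
    · exact (hs B hB b k hk).le
    · exact (hb k hk).le
  obtain ⟨k, hk, t, htk, ht, hle⟩ := exists_blocking_constraint hpos hfeas
    (neg_ne_zero.2 (hs.single_ne_zero hB hj))
  have hkB : k ∉ B := by
    intro hkB
    rw [map_neg, hs B hB _ k hkB] at hk
    by_cases h : k = j
    · subst h; norm_num at hk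
    · simp [h] at hk
  have ht' : 0 < t := by
    refine ht.lt_of_ne' fun h => ?_
    simp only [h, zero_smul, add_zero] at htk
    exact (hb k hkB).ne htk
  have hB' : IsFormBasis μ (insert k (B.erase j)) := by
    refine ⟨?_, fun x hx => ?_⟩
    · rw [Finset.card_insert_of_notMem (fun h => hkB (Finset.mem_of_mem_erase h)),
        Finset.card_erase_add_one hj, hB.1]
    · have hx' : ∀ i ∈ B, i ≠ j → μ i x = 0 := fun i hi hij =>
        hx i (Finset.mem_insert_of_mem (Finset.mem_erase.2 ⟨hij, hi⟩))
      have hkx := hx k (Finset.mem_insert_self _ _)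
      rw [hs.apply_eq_sum hB, Finset.sum_eq_single j (fun i hi hij => by simp [hx' i hi hij])
        (fun h => absurd hj h)] at hkx
      rw [map_neg] at hk
      have hjx : μ j x = 0 := (mul_eq_zero.1 hkx).resolve_right (by linarith)
      refine hB.2 x fun i hi => ?_
      by_cases hij : i = j
      · rw [hij, hjx]
      · exact hx' i hi hij
  have hpt : s (insert k (B.erase j)) b = s B b + t • -s B (Pi.single j 1) := by
    refine hB'.ext fun i hi => ?_
    rw [hs _ hB' b i hi]
    rcases Finset.mem_insert.1 hi with rfl | hi
    · exact htk.symm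
    · obtain ⟨hij, hiB⟩ := Finset.mem_erase.1 hi
      simp [hs B hB _ i hiB, hij]
  refine ⟨k, t, ht', hB', ?_, fun i => ?_⟩
  · rw [hpt, smul_neg, sub_eq_add_neg]
  · rw [hpt]; exact hle i

/-- Every nonempty polytope `{x | ∀ j, μ j x ≤ b j}` has a vertex. -/
lemma exists_isFormBasis_of_feasible [Fintype ι] [FiniteDimensional ℝ V] (hs : IsVertexMap μ s)
    (hpos : ∀ w : V, w ≠ 0 → ∃ k, 0 < μ k w) {b : ι → ℝ} (hne : ∃ x, ∀ k, μ k x ≤ b k) :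
    ∃ B, IsFormBasis μ B ∧ ∀ k, μ k (s B b) ≤ b k := by
  classical
  let T : V → Finset ι := fun x => Finset.univ.filter fun j => μ j x = b j
  have hfin : {n | ∃ x, (∀ k, μ k x ≤ b k) ∧ (T x).card = n}.Finite :=
    (Set.finite_Iic (Fintype.card ι)).subset (by
      rintro n ⟨x, -, rfl⟩
      exact Finset.card_le_univ _)
  obtain ⟨x₀, hx₀⟩ := hne
  obtain ⟨n, ⟨x, hx, hn⟩, hmax⟩ := Set.exists_max_image _ id hfin ⟨_, x₀, hx₀, rfl⟩
  have hker : ∀ w, (∀ j : {j // j ∈ T x}, μ j.1 w = 0) → w = 0 := by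
    intro w hw
    by_contra hw0
    obtain ⟨k, hk, t, htk, -, hle⟩ := exists_blocking_constraint hpos hx hw0
    have hlt : (T x).card < (T (x + t • w)).card := by
      refine Finset.card_lt_card ((Finset.ssubset_iff_of_subset fun j hj => ?_).2
        ⟨k, by simpa [T] using htk, fun hkT => hk.ne' (hw ⟨k, hkT⟩)⟩)
      have h0 := hw ⟨j, hj⟩
      have h1 : μ j x = b j := by simpa [T] using hj
      simpa [T, h1] using Or.inr h0
    have := hmax _ ⟨x + t • w, hle, rfl⟩
    simp only [id] at this
    omega
  have hspan := span_eq_top_of_forall_apply_eq_zero hker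
  obtain ⟨κ, a, ha, hrange, hli⟩ := exists_linearIndependent' ℝ (fun j : {j // j ∈ T x} => μ j.1)
  rw [hspan] at hrange
  have : Fintype κ := Fintype.ofInjective a ha
  let B : Finset ι := Finset.univ.image fun i => (a i).1
  have hB : IsFormBasis μ B := by
    refine ⟨?_, fun y hy => eq_zero_of_span_eq_top hrange fun i =>
      hy _ (Finset.mem_image_of_mem _ (Finset.mem_univ i))⟩
    rw [show B.card = _ from
        Finset.card_image_of_injective _ (Subtype.val_injective.comp ha), Finset.card_univ,
      ← Subspace.dual_finrank_eq, finrank_eq_card_basis (Basis.mk hli hrange.ge)]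
  have hBx : s B b = x := by
    refine hB.ext fun j hj => ?_
    rw [hs B hB b j hj]
    obtain ⟨i, -, rfl⟩ := Finset.mem_image.1 hj
    exact ((Finset.mem_filter.1 (a i).2).2).symm
  exact ⟨B, hB, fun k => hBx ▸ hx k⟩

/-- The indices `j ∈ B` along whose edge, leaving the vertex `s B b` into the half-space
`μ j ≤ b j`, the form `ξ` decreases. -/
noncomputable def descentSet [DecidableEq ι] (s : Finset ι → (ι → ℝ) →ₗ[ℝ] V) (ξ : Dual ℝ V) (B : Finset ι) :
    Finset ι :=
  B.filter fun j => 0 < ξ (s B (Pi.single j 1))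

/-- `F` is the set of vertices of the polytope `{x | ∀ j, μ j x ≤ b j}`, and this polytope is
simple, with all other constraints strict at each vertex. -/
structure IsSimpleVertexSet (μ : ι → Dual ℝ V) (s : Finset ι → (ι → ℝ) →ₗ[ℝ] V) (b : ι → ℝ)
    (F : Finset (Finset ι)) : Prop where
  mem_iff : ∀ B, B ∈ F ↔ IsFormBasis μ B ∧ ∀ k, μ k (s B b) ≤ b k
  lt : ∀ B ∈ F, ∀ k ∉ B, μ k (s B b) < b k

/-- The form `ξ` is not constant along any edge issued from a vertex in `F`. -/
def IsGenericForm [DecidableEq ι] (s : Finset ι → (ι → ℝ) →ₗ[ℝ] V) (F : Finset (Finset ι))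
    (ξ : Dual ℝ V) : Prop :=
  ∀ B ∈ F, ∀ j ∈ B, ξ (s B (Pi.single j 1)) ≠ 0

/-- On the face cut out by the constraints in `K`, a linear form has a minimizing vertex. -/
lemma IsSimpleVertexSet.exists_descentSet_subset [Fintype ι] [DecidableEq ι]
    (hs : IsVertexMap μ s) (hpos : ∀ w : V, w ≠ 0 → ∃ k, 0 < μ k w) {b : ι → ℝ}
    {F : Finset (Finset ι)} (hF : IsSimpleVertexSet μ s b F) (ξ : Dual ℝ V)
    {K B₀ : Finset ι} (hB₀ : B₀ ∈ F) (hK : K ⊆ B₀) :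
    ∃ B ∈ F, descentSet s ξ B ⊆ K ∧ K ⊆ B := by
  obtain ⟨B, hB, hmin⟩ := Finset.exists_min_image (F.filter (K ⊆ ·)) (fun B => ξ (s B b))
    ⟨B₀, by simp [hB₀, hK]⟩
  obtain ⟨hBF, hKB⟩ := Finset.mem_filter.1 hB
  refine ⟨B, hBF, fun j hj => ?_, hKB⟩
  obtain ⟨hjB, hjpos⟩ := Finset.mem_filter.1 hj
  by_contra hjK
  obtain ⟨k, t, ht, hbasis, hpt, hle⟩ :=
    exists_pivot hs hpos ((hF.mem_iff B).1 hBF).1 (hF.lt B hBF) hjB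
  have := hmin _ (Finset.mem_filter.2 ⟨(hF.mem_iff _).2 ⟨hbasis, hle⟩, fun i hi =>
    Finset.mem_insert_of_mem (Finset.mem_erase.2 ⟨fun h => hjK (h ▸ hi), hKB hi⟩)⟩)
  rw [hpt, map_sub, map_smul, smul_eq_mul] at this
  nlinarith [mul_pos ht hjpos]

lemma IsSimpleVertexSet.eq_of_apply_le [DecidableEq ι] (hs : IsVertexMap μ s) {b : ι → ℝ}
    {F : Finset (Finset ι)} (hF : IsSimpleVertexSet μ s b F) {ξ : Dual ℝ V}
    (hξ : IsGenericForm s F ξ) {K B : Finset ι} (hB : B ∈ F) (hd : descentSet s ξ B ⊆ K)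
    {y : V} (hy : ∀ k, μ k y ≤ b k) (hyK : ∀ k ∈ K, μ k y = b k) (hle : ξ y ≤ ξ (s B b)) :
    y = s B b := by
  have hbasis := ((hF.mem_iff B).1 hB).1
  have hterm : ∀ j ∈ B, 0 ≤ μ j (y - s B b) * ξ (s B (Pi.single j 1)) ∧
      (μ j (y - s B b) * ξ (s B (Pi.single j 1)) = 0 → μ j y = μ j (s B b)) := by
    intro j hj
    refine ⟨?_, fun h => ?_⟩
    · rw [map_sub, hs B hbasis b j hj]
      by_cases hjK : j ∈ K
      · simp [hyK j hjK]
      · exact mul_nonneg_of_nonpos_of_nonpos (sub_nonpos.2 (hy j)) (not_lt.1 fun h =>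
          hjK (hd (Finset.mem_filter.2 ⟨hj, h⟩)))
    · have := (mul_eq_zero.1 h).resolve_right (hξ B hB j hj)
      rwa [map_sub, sub_eq_zero] at this
  have hsum : ∑ j ∈ B, μ j (y - s B b) * ξ (s B (Pi.single j 1)) = 0 := by
    refine le_antisymm ?_ (Finset.sum_nonneg fun j hj => (hterm j hj).1)
    rw [← hs.apply_eq_sum hbasis, map_sub]
    linarith
  rw [Finset.sum_eq_zero_iff_of_nonneg fun j hj => (hterm j hj).1] at hsum
  exact hbasis.ext fun j hj => (hterm j hj).2 (hsum j hj)

lemma IsSimpleVertexSet.subset_of_eq (hs : IsVertexMap μ s) {b : ι → ℝ}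
    {F : Finset (Finset ι)} (hF : IsSimpleVertexSet μ s b F) {B B' : Finset ι}
    (hB : B ∈ F) (hB' : B' ∈ F) (h : s B' b = s B b) : B' ⊆ B := by
  intro k hk
  by_contra hkB
  have := hF.lt B hB k hkB
  rw [← h, hs B' ((hF.mem_iff B').1 hB').1 b k hk] at this
  exact this.false

/-- The minimizing vertex of a generic form on a face is unique. -/
lemma IsSimpleVertexSet.eq_of_descentSet_subset [DecidableEq ι] (hs : IsVertexMap μ s)
    {b : ι → ℝ} {F : Finset (Finset ι)} (hF : IsSimpleVertexSet μ s b F) {ξ : Dual ℝ V}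
    (hξ : IsGenericForm s F ξ) {K B B' : Finset ι} (hB : B ∈ F) (hd : descentSet s ξ B ⊆ K)
    (hK : K ⊆ B) (hB' : B' ∈ F) (hd' : descentSet s ξ B' ⊆ K) (hK' : K ⊆ B') : B = B' := by
  wlog hle : ξ (s B b) ≤ ξ (s B' b) generalizing B B'
  · exact (this hB' hd' hK' hB hd hK (not_le.1 hle).le).symm
  obtain ⟨hbasis, hfeas⟩ := (hF.mem_iff B).1 hB
  have h := hF.eq_of_apply_le hs hξ hB' hd' hfeas (fun k hk => hs B hbasis b k (hK hk)) hle
  exact (hF.subset_of_eq hs hB' hB h).antisymm (hF.subset_of_eq hs hB hB' h.symm)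

/-- A generic form splits the faces into intervals, according to their minimizing vertices. -/
lemma IsSimpleVertexSet.sum_faces [Fintype ι] [DecidableEq ι] (hs : IsVertexMap μ s)
    (hpos : ∀ w : V, w ≠ 0 → ∃ k, 0 < μ k w) {b : ι → ℝ} {F : Finset (Finset ι)}
    (hF : IsSimpleVertexSet μ s b F) {ξ : Dual ℝ V} (hξ : IsGenericForm s F ξ)
    (f : Finset ι → ℝ) :
    ∑ K ∈ F.biUnion Finset.powerset, f K =
      ∑ B ∈ F, ∑ K ∈ Finset.Icc (descentSet s ξ B) B, f K := by
  rw [← Finset.sum_biUnion]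
  · congr 1
    ext K
    simp only [Finset.mem_biUnion, Finset.mem_powerset, Finset.mem_Icc]
    exact ⟨fun ⟨B, hB, hK⟩ => hF.exists_descentSet_subset hs hpos ξ hB hK,
      fun ⟨B, hB, _, hK⟩ => ⟨B, hB, hK⟩⟩
  · intro B hB B' hB' hne
    refine Finset.disjoint_left.2 fun K hK hK' => hne ?_
    rw [Finset.mem_Icc] at hK hK'
    exact hF.eq_of_descentSet_subset hs hξ hB hK.1 hK.2 hB' hK'.1 hK'.2

lemma sum_Icc_neg_one_pow_eq_zero [DecidableEq ι] {R B J : Finset ι} (hRB : R ⊆ B)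
    (hne : R ≠ B ∩ J) (n : ℕ) :
    ∑ K ∈ Finset.Icc R B, (if K ⊆ J then (-1 : ℝ) ^ (n + K.card) else 0) = 0 := by
  by_cases hRJ : R ⊆ J
  · obtain ⟨i, hi, hiR⟩ := Finset.exists_of_ssubset
      ((Finset.subset_inter hRB hRJ).ssubset_of_ne hne)
    obtain ⟨hiB, hiJ⟩ := Finset.mem_inter.1 hi
    refine Finset.sum_involution (fun K _ => if i ∈ K then K.erase i else insert i K)
      ?_ ?_ ?_ ?_
    · intro K _
      by_cases hiK : i ∈ K
      · have hc := Finset.card_erase_add_one hiK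
        have : K.erase i ⊆ J ↔ K ⊆ J := by
          rw [← Finset.subset_insert_iff, Finset.insert_eq_of_mem hiJ]
        simp only [hiK, if_true, this, ← hc]
        split_ifs <;> ring
      · have : insert i K ⊆ J ↔ K ⊆ J := by simp [Finset.insert_subset_iff, hiJ]
        simp only [hiK, if_false, this, Finset.card_insert_of_notMem hiK]
        split_ifs <;> ring
    · intro K _ _ h
      by_cases hiK : i ∈ K
      · rw [if_pos hiK, Finset.erase_eq_self] at h
        exact h hiK
      · rw [if_neg hiK, Finset.insert_eq_self] at h
        exact hiK h
    · intro K hK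
      rw [Finset.mem_Icc] at hK ⊢
      by_cases hiK : i ∈ K
      · rw [if_pos hiK]
        exact ⟨Finset.subset_erase.2 ⟨hK.1, hiR⟩, (Finset.erase_subset _ _).trans hK.2⟩
      · rw [if_neg hiK]
        exact ⟨hK.1.trans (Finset.subset_insert _ _), Finset.insert_subset hiB hK.2⟩
    · intro K _
      by_cases hiK : i ∈ K <;> simp [hiK]
  · refine Finset.sum_eq_zero fun K hK => if_neg fun h => hRJ ?_
    exact (Finset.mem_Icc.1 hK).1.trans h

/-- Arbitrarily small perturbations of a form are generic. -/
lemma exists_isGenericForm [Fintype ι] [DecidableEq ι] [FiniteDimensional ℝ V]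
    (hs : IsVertexMap μ s) {F : Finset (Finset ι)}
    (hF : ∀ B ∈ F, IsFormBasis μ B) (ξ₀ : Dual ℝ V) (v : Finset ι → V) :
    ∃ ξ, IsGenericForm s F ξ ∧ ∀ B ∈ F, ξ₀ (v B) < 0 → ξ (v B) < 0 := by
  obtain ⟨η, hη⟩ := Module.exists_dual_forall_apply_ne_zero (K := ℝ)
    (fun p : {p : Finset ι × ι // p.1 ∈ F ∧ p.2 ∈ p.1} => s p.1.1 (Pi.single p.1.2 1))
    (fun p => hs.single_ne_zero (hF _ p.2.1) p.2.2)
  have htend : ∀ x : V, Tendsto (fun ε : ℝ => (ξ₀ + ε • η) x) (𝓝[>] 0) (𝓝 (ξ₀ x)) := by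
    intro x
    have : Continuous fun ε : ℝ => ξ₀ x + ε * η x := by fun_prop
    simpa using (this.tendsto 0).mono_left nhdsWithin_le_nhds
  have hneg : ∀ᶠ ε : ℝ in 𝓝[>] 0, ∀ B ∈ F,
      ξ₀ (v B) < 0 → (ξ₀ + ε • η) (v B) < 0 := by
    refine (Finset.eventually_all F).2 fun B _ => ?_
    by_cases h : ξ₀ (v B) < 0
    · filter_upwards [(htend (v B)).eventually_lt_const h] with ε hε _ using hε
    · exact Eventually.of_forall fun ε h' => absurd h' h
  have hgen : ∀ᶠ ε : ℝ in 𝓝[>] 0, IsGenericForm s F (ξ₀ + ε • η) := by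
    refine (Finset.eventually_all F).2 fun B hB => (Finset.eventually_all B).2 fun j hj => ?_
    by_cases h : ξ₀ (s B (Pi.single j 1)) = 0
    · filter_upwards [self_mem_nhdsWithin] with ε hε
      simpa [h] using ⟨(Set.mem_Ioi.1 hε).ne', hη ⟨(B, j), hB, hj⟩⟩
    · exact (htend _).eventually_ne h
  obtain ⟨ε, h₁, h₂⟩ := (hgen.and hneg).exists
  exact ⟨_, h₁, h₂⟩

/-- The Brianchon-Gram identity at the origin, for parameters `z` at which all the vertices in
`F` are still feasible. -/
lemma IsSimpleVertexSet.sum_neg_one_pow [Fintype ι] [DecidableEq ι] [FiniteDimensional ℝ V]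
    (hs : IsVertexMap μ s) (hpos : ∀ w : V, w ≠ 0 → ∃ k, 0 < μ k w) {b : ι → ℝ}
    {F : Finset (Finset ι)} (hF : IsSimpleVertexSet μ s b F) (hne : F.Nonempty) {z : ι → ℝ}
    (hz : ∀ B ∈ F, ∀ k, μ k (s B z) ≤ z k) {J : Finset ι} (hJ : ∀ j, j ∈ J ↔ 0 ≤ z j) :
    ∑ K ∈ F.biUnion Finset.powerset,
      (if K ⊆ J then (-1 : ℝ) ^ (finrank ℝ V + K.card) else 0) =
        if ∀ j, 0 ≤ z j then 1 else 0 := by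
  have hbasis : ∀ B ∈ F, IsFormBasis μ B := fun B hB => ((hF.mem_iff B).1 hB).1
  split_ifs with hall
  · have hsubJ : ∀ B, B ⊆ J := fun B j _ => (hJ j).2 (hall j)
    obtain ⟨ξ, hξ, -⟩ := exists_isGenericForm hs hbasis 0 0
    have hξ' : IsGenericForm s F (-ξ) := fun B hB j hj => by simpa using hξ B hB j hj
    have hneg : ∀ B ∈ F, (descentSet s (-ξ) B ⊆ ∅ ↔ descentSet s ξ B = B) := by
      intro B hB
      simp only [descentSet, Finset.subset_empty, Finset.filter_eq_empty_iff,
        Finset.filter_eq_self, LinearMap.neg_apply, Left.neg_pos_iff, not_lt]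
      exact forall₂_congr fun j hj => ⟨fun h => h.lt_of_ne' (hξ B hB j hj), le_of_lt⟩
    obtain ⟨B₀, hB₀⟩ := hne
    obtain ⟨B₁, hB₁, hd₁, h₁⟩ :=
      hF.exists_descentSet_subset hs hpos (-ξ) hB₀ (Finset.empty_subset _)
    rw [hF.sum_faces hs hpos hξ, Finset.sum_eq_single B₁]
    · rw [(hneg B₁ hB₁).1 hd₁, Finset.Icc_self, Finset.sum_singleton,
        if_pos (hsubJ B₁), (hbasis B₁ hB₁).1, ← two_mul]
      simp
    · intro B hB hne
      refine sum_Icc_neg_one_pow_eq_zero (Finset.filter_subset _ _) (fun h => hne ?_) _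
      rw [Finset.inter_eq_left.2 (hsubJ B)] at h
      exact hF.eq_of_descentSet_subset hs hξ' hB ((hneg B hB).2 h) (Finset.empty_subset _)
        hB₁ hd₁ h₁
    · exact fun h => absurd hB₁ h
  · push Not at hall
    obtain ⟨k, hk⟩ := hall
    obtain ⟨ξ, hξ, hneg⟩ := exists_isGenericForm hs hbasis (μ k) (fun B => s B z)
    rw [hF.sum_faces hs hpos hξ]
    refine Finset.sum_eq_zero fun B hB =>
      sum_Icc_neg_one_pow_eq_zero (Finset.filter_subset _ _) (fun h => ?_) _
    refine (hneg B hB ((hz B hB k).trans_lt hk)).not_ge ?_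
    rw [hs.apply_eq_sum (hbasis B hB)]
    refine Finset.sum_nonneg fun j hj => ?_
    rw [hs B (hbasis B hB) z j hj]
    have hiff : 0 < ξ (s B (Pi.single j 1)) ↔ 0 ≤ z j := by
      rw [← hJ]
      simpa [descentSet, hj] using Finset.ext_iff.1 h j
    rcases le_or_gt 0 (z j) with h0 | h0
    · exact mul_nonneg h0 (hiff.2 h0).le
    · exact mul_nonneg_of_nonpos_of_nonpos h0.le (not_lt.1 fun h' => h0.not_ge (hiff.1 h'))

end FormBasis

lemma IsPreconnected.subset_of_disjoint_frontier {α : Type*} [TopologicalSpace α] {s t : Set α}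
    (hs : IsPreconnected s) (ht : IsClosed t) (hst : Disjoint s (frontier t))
    (hne : (s ∩ t).Nonempty) : s ⊆ t := by
  have hsub : ∀ x ∈ s, x ∈ t → x ∈ interior t := fun x hx hxt => by
    by_contra h
    exact Set.disjoint_left.1 hst hx (ht.frontier_eq ▸ ⟨hxt, h⟩)
  obtain ⟨x, hx, hxt⟩ := hne
  refine (hs.subset_left_of_subset_union isOpen_interior ht.isOpen_compl
    (Set.disjoint_left.2 fun y hy hy' => hy' (interior_subset hy)) (fun y hy => ?_)
    ⟨x, hx, hsub x hx hxt⟩).trans interior_subset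
  by_cases hyt : y ∈ t
  · exact Or.inl (hsub y hy hyt)
  · exact Or.inr hyt

theorem stmt_3
    (d N : ℕ) (hd : 1 ≤ d) (hN : 1 ≤ N)
    (μ : Fin N → ((Fin d → ℝ) →ₗ[ℝ] ℝ))
    -- the μ_j generate the dual space as a cone
    (hgen : ∀ ξ : (Fin d → ℝ) →ₗ[ℝ] ℝ,
      ∃ c : Fin N → ℝ, (∀ j, 0 ≤ c j) ∧ ξ = ∑ j, c j • μ j)
    (P : (Fin N → ℝ) → Set (Fin d → ℝ))
    (hP : ∀ b, P b = {x | ∀ j, μ j x ≤ b j})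
    (𝓑 : Set (Finset (Fin N)))
    (h𝓑 : ∀ B : Finset (Fin N), B ∈ 𝓑 ↔
      (LinearIndependent ℝ (fun j : {j // j ∈ B} => μ j.1) ∧
        Submodule.span ℝ (Set.range (fun j : {j // j ∈ B} => μ j.1)) = ⊤))
    (sB : Finset (Fin N) → ((Fin N → ℝ) →ₗ[ℝ] (Fin d → ℝ)))
    (hsB : ∀ B ∈ 𝓑, ∀ b : Fin N → ℝ, ∀ j ∈ B, μ j (sB B b) = b j)
    (cB : Finset (Fin N) → Set (Fin d → ℝ))
    (hcB : ∀ B, cB B = {x | ∀ j ∈ B, μ j x ≤ 0})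
    (dB : Finset (Fin N) → Set (Fin N → ℝ))
    (hdB : ∀ B, dB B = {b | ∀ k ∉ B, μ k (sB B b) ≤ b k})
    -- τ is an admissible μ-chamber
    (τ : Set (Fin N → ℝ))
    (hτ : ∃ b₀ ∈ {b : Fin N → ℝ | ∀ B ∈ 𝓑, b ∉ frontier (dB B)},
      τ = connectedComponentIn {b : Fin N → ℝ | ∀ B ∈ 𝓑, b ∉ frontier (dB B)} b₀)
    (hadm : ∀ b ∈ τ, (P b).Nonempty)
    (𝓑τ : Set (Finset (Fin N)))
    (h𝓑τ : ∀ B, B ∈ 𝓑τ ↔ B ∈ 𝓑 ∧ τ ⊆ dB B)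
    (b : Fin N → ℝ) (hb : b ∈ closure τ) :
    -- 𝟙_{P(b)} − Σ_{B ∈ 𝓑_τ} 𝟙_{s_B(b) + c_B} lies in the span of indicators of
    -- shifted polyhedral cones containing a line
    (Set.indicator (P b) (fun _ => (1 : ℝ)) -
        fun x => ∑ᶠ B ∈ 𝓑τ,
          Set.indicator ((fun y => sB B b + y) '' cB B) (fun _ => (1 : ℝ)) x)
      ∈ Submodule.span ℝ {f : (Fin d → ℝ) → ℝ |
          ∃ (s : Fin d → ℝ) (C : Set (Fin d → ℝ)),
            (∃ (n : ℕ) (ν : Fin n → ((Fin d → ℝ) →ₗ[ℝ] ℝ)), C = {x | ∀ i, ν i x ≤ 0}) ∧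
            (∃ w : Fin d → ℝ, w ≠ 0 ∧ w ∈ C ∧ -w ∈ C) ∧
            f = Set.indicator ((fun y => s + y) '' C) (fun _ => (1 : ℝ))} := by
  classical
  have hbasis : ∀ B, B ∈ 𝓑 ↔ IsFormBasis μ B := fun B => (h𝓑 B).trans (isFormBasis_iff μ B).symm
  have hs : IsVertexMap μ sB := fun B hB => hsB B ((hbasis B).2 hB)
  have hpos : ∀ w : Fin d → ℝ, w ≠ 0 → ∃ k, 0 < μ k w := by
    intro w hw
    obtain ⟨φ, hφ⟩ : ∃ φ : Module.Dual ℝ (Fin d → ℝ), φ w ≠ 0 := by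
      by_contra! h
      exact hw ((Module.forall_dual_apply_eq_zero_iff ℝ w).1 h)
    obtain ⟨c, hc, hsum⟩ := hgen (φ w • φ)
    by_contra! h
    have h₁ : 0 < (φ w • φ) w := by simpa using mul_self_pos.2 hφ
    rw [hsum, LinearMap.sum_apply] at h₁
    exact h₁.not_ge (Finset.sum_nonpos fun j _ => mul_nonpos_of_nonneg_of_nonpos (hc j) (h j))
  have hclosed : ∀ B, IsClosed (dB B) := by
    intro B
    have hs_cont : Continuous (sB B) := (sB B).continuous_of_finiteDimensional
    simp only [hdB, Set.ofPred_forall]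
    exact isClosed_iInter fun k => isClosed_iInter fun _ => isClosed_le
      ((μ k).continuous_of_finiteDimensional.comp hs_cont) (continuous_apply k)
  obtain ⟨b₀, hb₀, rfl⟩ := hτ
  set τ := connectedComponentIn {b : Fin N → ℝ | ∀ B ∈ 𝓑, b ∉ frontier (dB B)} b₀
  have hb₀τ : b₀ ∈ τ := mem_connectedComponentIn hb₀
  have hsub : ∀ B ∈ 𝓑, b₀ ∈ dB B → τ ⊆ dB B := fun B hB h =>
    isPreconnected_connectedComponentIn.subset_of_disjoint_frontier (hclosed B)
      (Set.disjoint_left.2 fun y hy => connectedComponentIn_subset _ _ hy B hB) ⟨b₀, hb₀τ, h⟩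
  have hmem_dB : ∀ B ∈ 𝓑, ∀ y, y ∈ dB B ↔ ∀ k, μ k (sB B y) ≤ y k := by
    intro B hB y
    rw [hdB]
    refine ⟨fun h k => ?_, fun h k _ => h k⟩
    by_cases hk : k ∈ B
    · exact (hsB B hB y k hk).le
    · exact h k hk
  let F : Finset (Finset (Fin N)) := Finset.univ.filter (· ∈ 𝓑τ)
  have hmemF : ∀ B, B ∈ F ↔ B ∈ 𝓑 ∧ τ ⊆ dB B := fun B => by simp [F, h𝓑τ]
  have hF : IsSimpleVertexSet μ sB b₀ F := by
    refine ⟨fun B => ?_, fun B hB k hk => ?_⟩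
    · rw [hmemF, ← hbasis]
      refine and_congr_right fun hB => ?_
      rw [← hmem_dB B hB]
      exact ⟨fun h => h hb₀τ, hsub B hB⟩
    · obtain ⟨hB𝓑, hBτ⟩ := (hmemF B).1 hB
      have hint : b₀ ∈ interior (dB B) := by
        by_contra h
        exact hb₀ B hB𝓑 ((hclosed B).frontier_eq ▸ ⟨hBτ hb₀τ, h⟩)
      have hcont : Continuous fun ε : ℝ => b₀ - ε • (Pi.single k 1 : Fin N → ℝ) := by fun_prop
      have hev : ∀ᶠ ε : ℝ in 𝓝[>] 0, b₀ - ε • (Pi.single k 1 : Fin N → ℝ) ∈ dB B :=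
        ((hcont.tendsto 0).mono_left nhdsWithin_le_nhds).eventually
          (by simpa using mem_interior_iff_mem_nhds.1 hint)
      obtain ⟨ε, hε, hε0⟩ := (hev.and self_mem_nhdsWithin).exists
      have hzero : sB B (Pi.single k 1) = 0 := ((hbasis B).1 hB𝓑).2 _ fun j hj => by
        rw [hsB B hB𝓑 _ j hj, Pi.single_eq_of_ne (ne_of_mem_of_not_mem hj hk)]
      have := (hmem_dB B hB𝓑 _).1 hε k
      simp only [map_sub, map_smul, hzero, smul_zero, sub_zero, Pi.sub_apply, Pi.smul_apply,
        Pi.single_eq_same, smul_eq_mul, mul_one] at this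
      linarith [show 0 < ε from hε0]
  have hFne : F.Nonempty := by
    obtain ⟨x, hx⟩ := hadm b₀ hb₀τ
    rw [hP] at hx
    obtain ⟨B, hB⟩ := exists_isFormBasis_of_feasible hs hpos ⟨x, hx⟩
    exact ⟨B, (hF.mem_iff B).2 hB⟩
  have hFb : ∀ B ∈ F, ∀ k, μ k (sB B b) ≤ b k := fun B hB => by
    obtain ⟨hB𝓑, hBτ⟩ := (hmemF B).1 hB
    exact (hmem_dB B hB𝓑 b).1 (closure_minimal hBτ (hclosed B) hb)
  let T : Finset (Fin N) → Set (Fin d → ℝ) := fun K => {x | ∀ j ∈ K, μ j x ≤ b j}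
  have hcone : ∀ B ∈ F, ∀ K ⊆ B,
      T K = (fun y => sB B b + y) '' {y | ∀ j ∈ K, μ j y ≤ 0} := by
    intro B hB K hK
    have hval : ∀ j ∈ K, μ j (sB B b) = b j := fun j hj => hsB B ((hmemF B).1 hB).1 b j (hK hj)
    ext x
    simp only [T, Set.mem_ofPred_eq, Set.mem_image]
    constructor
    · refine fun hx => ⟨x - sB B b, fun j hj => ?_, by simp⟩
      rw [map_sub, hval j hj]
      exact sub_nonpos.2 (hx j hj)
    · rintro ⟨y, hy, rfl⟩ j hj
      rw [map_add, hval j hj]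
      linarith [hy j hj]
  have hgram : Set.indicator (P b) (fun _ => (1 : ℝ)) =
      ∑ K ∈ F.biUnion Finset.powerset, (-1 : ℝ) ^ (d + K.card) •
        Set.indicator (T K) (fun _ => (1 : ℝ)) := by
    ext x
    have hz : ∀ B ∈ F, ∀ k, μ k (sB B fun j => b j - μ j x) ≤ b k - μ k x := by
      intro B hB k
      have hB' := ((hF.mem_iff B).1 hB).1
      have : sB B (fun j => b j - μ j x) = sB B b - x := hB'.ext fun j hj => by
        rw [hs B hB' _ j hj, map_sub, hs B hB' _ j hj]
      rw [this, map_sub]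
      linarith [hFb B hB k]
    have := hF.sum_neg_one_pow hs hpos hFne hz
      (J := Finset.univ.filter fun j => 0 ≤ b j - μ j x) (by simp)
    simp only [Module.finrank_fin_fun, Finset.subset_iff, Finset.mem_filter, Finset.mem_univ,
      true_and, sub_nonneg] at this
    simp only [Finset.sum_apply, Pi.smul_apply, Set.indicator_apply, T, Set.mem_ofPred_eq, hP,
      smul_eq_mul, mul_ite, mul_one, mul_zero]
    exact this.symm
  have hvertices : (fun x => ∑ᶠ B ∈ 𝓑τ,
      Set.indicator ((fun y => sB B b + y) '' cB B) (fun _ => (1 : ℝ)) x) =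
      ∑ K ∈ F, (-1 : ℝ) ^ (d + K.card) • Set.indicator (T K) (fun _ => (1 : ℝ)) := by
    ext x
    rw [finsum_mem_eq_sum_of_inter_support_eq (t := F) _ (by simp [F]), Finset.sum_apply]
    refine Finset.sum_congr rfl fun B hB => ?_
    rw [hcone B hB B subset_rfl, hcB, ((hF.mem_iff B).1 hB).1.1, Module.finrank_fin_fun,
      ← two_mul]
    simp
  have hFsub : F ⊆ F.biUnion Finset.powerset := fun B hB =>
    Finset.mem_biUnion.2 ⟨B, hB, Finset.mem_powerset_self B⟩
  rw [hgram, hvertices, ← Finset.sum_sdiff hFsub, add_sub_cancel_right]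
  refine Submodule.sum_mem _ fun K hK => Submodule.smul_mem _ _ (Submodule.subset_span ?_)
  obtain ⟨hK, hKF⟩ := Finset.mem_sdiff.1 hK
  obtain ⟨B, hB, hKB⟩ := Finset.mem_biUnion.1 hK
  rw [Finset.mem_powerset] at hKB
  obtain ⟨j, hjB, hjK⟩ := Finset.exists_of_ssubset (hKB.ssubset_of_ne fun h => hKF (h ▸ hB))
  have hB' := ((hF.mem_iff B).1 hB).1
  have hline : ∀ i ∈ K, μ i (sB B (Pi.single j 1)) = 0 := fun i hi => by
    rw [hs B hB' _ i (hKB hi), Pi.single_eq_of_ne (ne_of_mem_of_not_mem hi hjK)]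
  refine ⟨sB B b, {y | ∀ j ∈ K, μ j y ≤ 0}, ⟨K.card, fun i => μ (K.equivFin.symm i), ?_⟩,
    ⟨sB B (Pi.single j 1), hs.single_ne_zero hB' hjB, fun i hi => (hline i hi).le,
      fun i hi => by simp [hline i hi]⟩, by rw [hcone B hB K hKB]⟩
  ext y
  simp only [Set.mem_ofPred_eq]
  exact ⟨fun h i => h _ (K.equivFin.symm i).2, fun h j hj => by
    simpa using h (K.equivFin ⟨j, hj⟩)⟩
end
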